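/- Let f be a rational map of degree at least 2 with Julia set J. Assume f is non-exceptional, or f is exceptional but Σ ∩ J = ∅, and assume α⁻ < α⁺. Then for α⁻ ≤ α < β ≤ α⁺ we have dim_H Ĺ(α,β) ≥ max_{α ≤ q ≤ β} F(q). -/

import Mathlib

open Filter Set Metric MeasureTheory Topology
open scoped ENNReal NNReal

noncomputable section

/-! ### The Riemann sphere with the chordal (spherical) metric -/

/-- The Riemann sphere `ℂ ∪ {∞}`. -/
structure RSphere : Type where
  val : Option ℂ

namespace RSphere

/-- The inclusion of `ℂ` into the Riemann sphere. -/
def ofC (z : ℂ) : RSphere := ⟨some z⟩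

/-- The point at infinity. -/
def infty : RSphere := ⟨none⟩

/-- Case elimination on a point of the Riemann sphere. -/
def elim {α : Sort*} (x : RSphere) (i : α) (h : ℂ → α) : α := Option.elim x.val i h

/-- Stereographic embedding of the Riemann sphere onto the round unit sphere in
`ℝ³ = ℂ ×₂ ℝ`.  It induces the chordal (spherical) metric on `RSphere`. -/
def embed (x : RSphere) : WithLp 2 (ℂ × ℝ) :=
  elim x ((WithLp.equiv 2 (ℂ × ℝ)).symm (0, 1))
    fun z => (WithLp.equiv 2 (ℂ × ℝ)).symm
      (((2 / (‖z‖ ^ 2 + 1)) : ℝ) • z, (‖z‖ ^ 2 - 1) / (‖z‖ ^ 2 + 1))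

/-- Inverse of the stereographic embedding. -/
def unembed (v : WithLp 2 (ℂ × ℝ)) : RSphere :=
  if (WithLp.equiv 2 (ℂ × ℝ) v).2 = 1 then infty
  else ofC ((1 - (WithLp.equiv 2 (ℂ × ℝ) v).2)⁻¹ • (WithLp.equiv 2 (ℂ × ℝ) v).1)

lemma leftInverse_unembed : Function.LeftInverse unembed embed := by
  rintro ⟨x⟩
  cases x with
  | none =>
      simp [embed, unembed, elim, infty]
  | some z =>
      have h1 : (0 : ℝ) < ‖z‖ ^ 2 + 1 := by positivity
      have ht : (‖z‖ ^ 2 - 1) / (‖z‖ ^ 2 + 1) ≠ 1 := by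
        intro h
        rw [div_eq_one_iff_eq h1.ne'] at h
        linarith
      simp only [embed, unembed, elim, Option.elim, Equiv.apply_symm_apply, ht, if_false, ofC]
      congr 2
      rw [smul_smul]
      have h2 : 1 - (‖z‖ ^ 2 - 1) / (‖z‖ ^ 2 + 1) = 2 / (‖z‖ ^ 2 + 1) := by
        field_simp
        ring
      rw [h2]
      rw [inv_mul_cancel₀ (by positivity), one_smul]

lemma embed_injective : Function.Injective embed := leftInverse_unembed.injective

/-- The chordal metric on the Riemann sphere, induced by the stereographic embedding
onto the round unit sphere in Euclidean 3-space. -/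
instance : MetricSpace RSphere := MetricSpace.induced embed embed_injective inferInstance

instance : MeasurableSpace RSphere := borel RSphere

instance : BorelSpace RSphere := ⟨rfl⟩

/-- Reading off a finite point (junk value `0` at `∞`). -/
def toC (x : RSphere) : ℂ := elim x 0 id

/-- The involution `z ↦ 1/z` of the Riemann sphere. -/
def inv (x : RSphere) : RSphere :=
  elim x (ofC 0) fun z => if z = 0 then infty else ofC z⁻¹

end RSphere

/-! ### Basic dynamical notions -/

/-- The norm of the derivative of `g` at `x`, measured in the spherical metric
(for a rational map this is the usual norm of the spherical derivative). -/
def sphDeriv (g : RSphere → RSphere) (x : RSphere) : ℝ :=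
  limsup (fun y => dist (g y) (g x) / dist y x) (𝓝[≠] x)

/-- The set of critical points. -/
def critSet (g : RSphere → RSphere) : Set RSphere := {x | sphDeriv g x = 0}

/-- The Fatou set: points having a neighbourhood on which the family of iterates is
equicontinuous (i.e. normal). -/
def fatouSet (f : RSphere → RSphere) : Set RSphere :=
  {x | ∃ U : Set RSphere, IsOpen U ∧ x ∈ U ∧ EquicontinuousOn (fun n : ℕ => f^[n]) U}

/-- The Julia set. -/
def juliaSet (f : RSphere → RSphere) : Set RSphere := (fatouSet f)ᶜ

/-- `f` is the rational map on the Riemann sphere given by the coprime pair of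
polynomials `p`, `q`. -/
structure IsRationalMap (f : RSphere → RSphere) (p q : Polynomial ℂ) : Prop where
  coprime : IsCoprime p q
  continuous : Continuous f
  eval : ∀ z : ℂ, q.eval z ≠ 0 → f (RSphere.ofC z) = RSphere.ofC (p.eval z / q.eval z)

/-- The degree of the rational map `p/q`. -/
def ratDeg (p q : Polynomial ℂ) : ℕ := max p.natDegree q.natDegree

/-- The lower Lyapunov exponent `χ̲(x) = liminf (1/n) log |(fⁿ)'(x)|`, as an extended real. -/
def lyapLower (f : RSphere → RSphere) (x : RSphere) : EReal :=
  liminf (fun n : ℕ => ((Real.log (sphDeriv (f^[n]) x) / n : ℝ) : EReal)) atTop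

/-- The upper Lyapunov exponent `χ̄(x) = limsup (1/n) log |(fⁿ)'(x)|`, as an extended real. -/
def lyapUpper (f : RSphere → RSphere) (x : RSphere) : EReal :=
  limsup (fun n : ℕ => ((Real.log (sphDeriv (f^[n]) x) / n : ℝ) : EReal)) atTop

/-- The level set `𝓛(a,b)` of points of the Julia set with lower exponent `a` and
upper exponent `b`. -/
def levelSet (f : RSphere → RSphere) (a b : EReal) : Set RSphere :=
  {x | x ∈ juliaSet f ∧ lyapLower f x = a ∧ lyapUpper f x = b}

/-- The set `𝓛̂(α,β)` of points of the Julia set with `χ̲ ≤ β`, `χ̄ ≥ α` and `χ̄ > 0`. -/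
def levelHat (f : RSphere → RSphere) (α β : ℝ) : Set RSphere :=
  {x | x ∈ juliaSet f ∧ lyapLower f x ≤ (β : EReal) ∧ (α : EReal) ≤ lyapUpper f x ∧
    0 < lyapUpper f x}

/-- Birkhoff sum `S_m φ = φ + φ∘g + ⋯ + φ∘g^{m-1}`. -/
def birkhoff (g : RSphere → RSphere) (φ : RSphere → ℝ) (m : ℕ) (x : RSphere) : ℝ :=
  ∑ k ∈ Finset.range m, φ (g^[k] x)

/-- An `(m,ε)`-separated finite subset of `Λ` for the map `g`. -/
def IsSepSet (g : RSphere → RSphere) (Λ : Set RSphere) (m : ℕ) (ε : ℝ)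
    (E : Finset RSphere) : Prop :=
  ↑E ⊆ Λ ∧ ∀ x ∈ E, ∀ y ∈ E, x ≠ y → ∃ k < m, ε ≤ dist (g^[k] x) (g^[k] y)

/-- Topological pressure of the potential `φ` for `g` restricted to `Λ`,
defined à la Bowen via `(m,ε)`-separated sets. -/
def pressureOn (g : RSphere → RSphere) (Λ : Set RSphere) (φ : RSphere → ℝ) : ℝ :=
  ⨆ ε : {ε : ℝ // 0 < ε}, limsup (fun m : ℕ =>
    Real.log (⨆ E : {E : Finset RSphere // IsSepSet g Λ m ε.1 E},
      ∑ x ∈ E.1, Real.exp (birkhoff g φ m x)) / m) atTop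

/-- `g` is uniformly expanding on `Λ`: `|(gᵐ)'(x)| ≥ c λᵐ` for some `c > 0`, `λ > 1`. -/
def ExpandingOn (g : RSphere → RSphere) (Λ : Set RSphere) : Prop :=
  ∃ c > (0 : ℝ), ∃ l : ℝ, 1 < l ∧ ∀ x ∈ Λ, ∀ m : ℕ, 1 ≤ m → c * l ^ m ≤ sphDeriv (g^[m]) x

/-- `Λ` is a repeller for `g`: a compact invariant isolated set. -/
def IsRepeller (g : RSphere → RSphere) (Λ : Set RSphere) : Prop :=
  IsCompact Λ ∧ g '' Λ = Λ ∧
    ∃ U : Set RSphere, IsOpen U ∧ Λ ⊆ U ∧ ∀ x, (∀ m : ℕ, g^[m] x ∈ U) → x ∈ Λ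

/-- Topological transitivity of `g` on `Λ`. -/
def TopTransOn (g : RSphere → RSphere) (Λ : Set RSphere) : Prop :=
  ∀ U V : Set RSphere, IsOpen U → IsOpen V → (U ∩ Λ).Nonempty → (V ∩ Λ).Nonempty →
    ∃ m : ℕ, (g^[m] '' (U ∩ Λ) ∩ V).Nonempty

/-- The topological pressure of `φ` with respect to `f` on its Julia set, given by
the supremum of the pressures on compact invariant uniformly expanding subsets of `J`. -/
def pressureTop (f : RSphere → RSphere) (φ : RSphere → ℝ) : ℝ :=
  ⨆ L : {L : Set RSphere //
      L.Nonempty ∧ L ⊆ juliaSet f ∧ IsCompact L ∧ f '' L = L ∧ ExpandingOn f L},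
    pressureOn f L.1 φ

/-- The pressure function `d ↦ P(φ_d)` where `φ_d = -d log|f'|`. -/
def pressFamily (f : RSphere → RSphere) (d : ℝ) : ℝ :=
  pressureTop f fun x => -d * Real.log (sphDeriv f x)

/-- `F(α) = α⁻¹ inf_d (Q(d) + dα)` associated with a pressure function `Q` (for `α ≠ 0`). -/
def specF (Q : ℝ → ℝ) (α : ℝ) : EReal :=
  ((α⁻¹ : ℝ) : EReal) * ⨅ d : ℝ, ((Q d + d * α : ℝ) : EReal)

/-- `F(0) = lim_{α → 0⁺} F(α)`. -/
def specF0 (Q : ℝ → ℝ) : EReal := limsup (fun α : ℝ => specF Q α) (𝓝[>] (0 : ℝ))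

/-- The full spectrum function `F` associated with a pressure function `Q`. -/
def specFext (Q : ℝ → ℝ) (α : ℝ) : EReal := if α = 0 then specF0 Q else specF Q α

/-- The Lyapunov spectrum function `F` of `f`. -/
def Ffun (f : RSphere → RSphere) (α : ℝ) : EReal := specFext (pressFamily f) α

/-- `α⁻ = lim_{d → +∞} -Q(d)/d` for a pressure function `Q`. -/
def alphaMinusOf (Q : ℝ → ℝ) : ℝ := limsup (fun d : ℝ => -Q d / d) atTop

/-- `α⁺ = lim_{d → -∞} -Q(d)/d` for a pressure function `Q`. -/
def alphaPlusOf (Q : ℝ → ℝ) : ℝ := limsup (fun d : ℝ => -Q d / d) atBot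

/-- `α⁻` for the map `f`. -/
def alphaMinus (f : RSphere → RSphere) : ℝ := alphaMinusOf (pressFamily f)

/-- `α⁺` for the map `f`. -/
def alphaPlus (f : RSphere → RSphere) : ℝ := alphaPlusOf (pressFamily f)

/-- The Lyapunov exponent `χ(μ) = ∫ log|g'| dμ` of a measure. -/
def lyapMeas (g : RSphere → RSphere) (μ : Measure RSphere) : ℝ :=
  ∫ x, Real.log (sphDeriv g x) ∂μ

/-- `α⁻` as the infimum of Lyapunov exponents of invariant probability measures on `J`. -/
def alphaMinusMeas (f : RSphere → RSphere) : ℝ :=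
  sInf {r : ℝ | ∃ μ : Measure RSphere, IsProbabilityMeasure μ ∧ MeasurePreserving f μ μ ∧
    μ (juliaSet f)ᶜ = 0 ∧ r = lyapMeas f μ}

/-- `α⁺` as the supremum of Lyapunov exponents of invariant probability measures on `J`. -/
def alphaPlusMeas (f : RSphere → RSphere) : ℝ :=
  sSup {r : ℝ | ∃ μ : Measure RSphere, IsProbabilityMeasure μ ∧ MeasurePreserving f μ μ ∧
    μ (juliaSet f)ᶜ = 0 ∧ r = lyapMeas f μ}

/-- The maximal distortion `sup_{x,y ∈ Z} |g'(x)|/|g'(y)|` of `g` on `Z`. -/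
def distortionOn (g : RSphere → RSphere) (Z : Set RSphere) : ℝ :=
  sSup {r : ℝ | ∃ x ∈ Z, ∃ y ∈ Z, r = sphDeriv g x / sphDeriv g y}

/-- Conical points. -/
def IsConical (f : RSphere → RSphere) (x : RSphere) : Prop :=
  ∃ r : ℝ, 0 < r ∧ ∃ K : ℝ, ∃ n : ℕ → ℕ, StrictMono n ∧ ∃ U : ℕ → Set RSphere,
    ∀ i, U i ∈ 𝓝 x ∧ ball (f^[n i] x) r ⊆ f^[n i] '' U i ∧ distortionOn (f^[n i]) (U i) ≤ K

/-- A non-immediately postcritical point: there is a backward orbit through it that is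
dense in the Julia set and avoids the critical points. -/
def NonImmPostCrit (f : RSphere → RSphere) (x : RSphere) : Prop :=
  ∃ b : ℕ → RSphere, b 0 = x ∧ (∀ n, f (b (n + 1)) = b n) ∧
    juliaSet f ⊆ closure (Set.range b) ∧ ∀ n, b n ∉ critSet f

/-- `f` is exceptional: there is a finite nonempty set `Σ_f` with `f⁻¹(Σ_f) \ Crit = Σ_f`. -/
def IsExceptional (f : RSphere → RSphere) : Prop :=
  ∃ S : Set RSphere, S.Finite ∧ S.Nonempty ∧ f ⁻¹' S \ critSet f = S

/-- The largest exceptional set `Σ` of `f`. -/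
def maxExceptional (f : RSphere → RSphere) : Set RSphere :=
  ⋃₀ {S : Set RSphere | S.Finite ∧ S.Nonempty ∧ f ⁻¹' S \ critSet f = S}

/-- `0` not being exceptional, or having exceptional set away from the Julia set. -/
def GoodExc (f : RSphere → RSphere) : Prop :=
  ¬ IsExceptional f ∨ maxExceptional f ∩ juliaSet f = ∅

/-- A parabolic periodic point at a finite point `z`: a periodic point whose multiplier
is a root of unity. -/
def IsParabolicFix (g : RSphere → RSphere) (z : ℂ) : Prop :=
  ∃ m : ℕ, 0 < m ∧ g^[m] (RSphere.ofC z) = RSphere.ofC z ∧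
    ∃ lam : ℂ, (∃ k : ℕ, 0 < k ∧ lam ^ k = 1) ∧
      HasDerivAt (fun w => RSphere.toC (g^[m] (RSphere.ofC w))) lam z

/-- A parabolic periodic point of `f` (at a finite point, or at `∞` read in the chart `1/z`). -/
def IsParabolic (f : RSphere → RSphere) (x : RSphere) : Prop :=
  (∃ z : ℂ, x = RSphere.ofC z ∧ IsParabolicFix f z) ∨
  (x = RSphere.infty ∧ IsParabolicFix (fun y => RSphere.inv (f (RSphere.inv y))) 0)

/-- A recurrent point. -/
def IsRecurrentPt (f : RSphere → RSphere) (x : RSphere) : Prop :=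
  ∃ n : ℕ → ℕ, StrictMono n ∧ Tendsto (fun i => f^[n i] x) atTop (𝓝 x)

/-! ### Graph directed systems and expanding Cantor repellers -/

/-- A graph directed system (GDS) satisfying the strong separation condition with
respect to the map `g`. -/
structure GDS (g : RSphere → RSphere) where
  /-- number of vertices -/
  n : ℕ
  npos : 0 < n
  /-- the open domains -/
  U : Fin n → Set RSphere
  /-- the admissible edges -/
  edge : Fin n → Fin n → Prop
  /-- the inverse branches -/
  br : Fin n → Fin n → RSphere → RSphere
  isOpen : ∀ k, IsOpen (U k)
  isConnected : ∀ k, IsConnected (U k)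
  disjClosure : ∀ k l, k ≠ l → closure (U k) ∩ closure (U l) = ∅
  mapsTo : ∀ k l, edge k l → Set.MapsTo (br k l) (closure (U l)) (U k)
  isBranch : ∀ k l, edge k l → ∀ x ∈ closure (U l), g (br k l x) = x
  bddDistortion : ∃ C : ℝ, ∀ k l, edge k l → distortionOn (br k l) (closure (U l)) ≤ C

/-- The cylinder sets of depth `m` of a GDS. -/
def gdsCyl {g : RSphere → RSphere} (G : GDS g) : ℕ → Set RSphere
  | 0 => ⋃ k, G.U k
  | m + 1 => ⋃ (k : Fin G.n) (l : Fin G.n) (_ : G.edge k l),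
      G.br k l '' (gdsCyl G m ∩ G.U l)

/-- The limit set of a GDS. -/
def gdsLimit {g : RSphere → RSphere} (G : GDS g) : Set RSphere := ⋂ m, gdsCyl G m

/-- An expanding Cantor repeller (ECR) for `g`: a uniformly expanding repeller which is
the limit set of a GDS satisfying the strong separation condition, with `g(Λ) = Λ`. -/
def IsECR (g : RSphere → RSphere) (Λ : Set RSphere) : Prop :=
  ExpandingOn g Λ ∧ IsRepeller g Λ ∧ ∃ G : GDS g, gdsLimit G = Λ

/-- A Cantor set: compact, perfect and totally disconnected. -/
def IsCantorSet (s : Set RSphere) : Prop :=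
  IsCompact s ∧ Perfect s ∧ IsTotallyDisconnected s

/-! ### Entropy, equilibrium states and dimensions -/

/-- The entropy of a countable partition (given by the fibers of `p`). -/
def partEntropy {ι : Type} [Countable ι] (μ : Measure RSphere) (p : RSphere → ι) : ℝ :=
  ∑' i : ι, Real.negMulLog (μ (p ⁻¹' {i})).toReal

/-- Measure-theoretic (Kolmogorov–Sinai) entropy of `T` with respect to `μ`:
supremum over finite measurable partitions of the exponential growth rate of the
entropies of the dynamical refinements. -/
def entropyOf (T : RSphere → RSphere) (μ : Measure RSphere) : ℝ :=
  ⨆ p : {p : RSphere → ℕ // Measurable p ∧ (Set.range p).Finite},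
    ⨅ n : {n : ℕ // 0 < n},
      partEntropy μ (fun x => fun k : Fin n.1 => p.1 (T^[(k : ℕ)] x)) / (n.1 : ℝ)

/-- An equilibrium state for the potential `φ` with respect to `g` restricted to `Λ`. -/
def IsEquilibrium (g : RSphere → RSphere) (Λ : Set RSphere) (φ : RSphere → ℝ)
    (μ : Measure RSphere) : Prop :=
  IsProbabilityMeasure μ ∧ μ Λᶜ = 0 ∧ MeasurePreserving g μ μ ∧
    entropyOf g μ + ∫ x, φ x ∂μ = pressureOn g Λ φ

/-- The Hausdorff dimension of a measure: the infimum of the Hausdorff dimensions of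
sets of full measure. -/
def dimHMeasure (μ : Measure RSphere) : ℝ≥0∞ :=
  ⨅ (s : Set RSphere) (_ : μ sᶜ = 0), dimH s

/-- The minimal number of `ε`-balls needed to cover `s`. -/
def coverNum (s : Set RSphere) (ε : ℝ) : ℕ :=
  sInf {n : ℕ | ∃ t : Finset RSphere, t.card = n ∧ s ⊆ ⋃ x ∈ t, ball x ε}

/-- The upper box-counting dimension. -/
def upperBoxDim (s : Set RSphere) : ℝ :=
  limsup (fun n : ℕ => Real.log (coverNum s (1 / n)) / Real.log n) atTop

/-- The packing dimension, via countable covers and upper box dimensions. -/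
def dimP (s : Set RSphere) : ℝ≥0∞ :=
  ⨅ c : {c : ℕ → Set RSphere // s ⊆ ⋃ n, c n},
    ⨆ n : ℕ, ENNReal.ofReal (upperBoxDim (c.1 n))

/-- The connected component of `y` in `g⁻¹(B)`: the pull-back of `B` along the inverse
branch of `g` sending (the image of) `y` to `y`. -/
def invBranchSet (g : RSphere → RSphere) (B : Set RSphere) (y : RSphere) : Set RSphere :=
  connectedComponentIn (g ⁻¹' B) y

end

namespace LyapunovSpectrum

/-- Bloch's theorem: a holomorphic function on the unit disc whose image contains no disc of
radius `ρ` has a derivative at the centre of norm less than `128 ρ`. -/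
lemma norm_deriv_lt_of_forall_not_ball_subset {g : ℂ → ℂ} {ρ : ℝ} (hρ : 0 < ρ)
    (hg : DifferentiableOn ℂ g (ball 0 1)) (h : ∀ w, ¬ ball w ρ ⊆ g '' ball 0 1) :
    ‖deriv g 0‖ < 128 * ρ := by
  by_contra! hlt
  have hg' : DifferentiableOn ℂ (deriv g) (ball 0 1) := hg.deriv isOpen_ball
  have hsub : closedBall (0 : ℂ) (1 / 2) ⊆ ball 0 1 := closedBall_subset_ball (by norm_num)
  have hcont : ContinuousOn (fun z : ℂ => (1 / 2 - ‖z‖) * ‖deriv g z‖) (closedBall 0 (1 / 2)) :=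
    (continuousOn_const.sub continuous_norm.continuousOn).mul
      ((hg'.continuousOn.mono hsub).norm)
  obtain ⟨z₀, hz₀, hmax⟩ := (isCompact_closedBall (0 : ℂ) (1 / 2)).exists_isMaxOn
    ⟨0, by simp⟩ hcont
  have hz₀' : ‖z₀‖ ≤ 1 / 2 := by simpa using hz₀
  have h0 : 1 / 2 * ‖deriv g 0‖ ≤ (1 / 2 - ‖z₀‖) * ‖deriv g z₀‖ := by
    have := hmax (show (0 : ℂ) ∈ closedBall 0 (1 / 2) by simp)
    simpa using this
  set A := ‖deriv g z₀‖ with hA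
  set t := (1 / 2 - ‖z₀‖) / 2 with ht
  have htA : 32 * ρ ≤ t * A := by
    have : t * A = ((1 / 2 - ‖z₀‖) * A) / 2 := by rw [ht]; ring
    rw [this]; linarith
  have ht0 : 0 ≤ t := by rw [ht]; linarith
  have hA0 : 0 ≤ A := norm_nonneg _
  have htpos : 0 < t := by
    rcases ht0.eq_or_lt with h | h
    · rw [← h] at htA; linarith
    · exact h
  have hApos : 0 < A := by
    rcases hA0.eq_or_lt with h | h
    · rw [← h] at htA; linarith
    · exact h
  have hball : closedBall z₀ t ⊆ ball 0 1 := by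
    intro z hz
    have h1 : ‖z - z₀‖ ≤ t := by simpa [dist_eq_norm] using hz
    have h2 : ‖z‖ ≤ ‖z - z₀‖ + ‖z₀‖ := by simpa using norm_add_le (z - z₀) z₀
    simp only [mem_ball, dist_zero_right]
    linarith
  have hd1 : ∀ z ∈ closedBall z₀ t, ‖deriv g z‖ ≤ 2 * A := by
    intro z hz
    have h1 : ‖z - z₀‖ ≤ t := by simpa [dist_eq_norm] using hz
    have h2 : ‖z‖ ≤ ‖z - z₀‖ + ‖z₀‖ := by simpa using norm_add_le (z - z₀) z₀
    have h3 : t ≤ 1 / 2 - ‖z‖ := by linarith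
    have h4 : (1 / 2 - ‖z‖) * ‖deriv g z‖ ≤ (1 / 2 - ‖z₀‖) * A :=
      hmax (show z ∈ closedBall 0 (1 / 2) by simp only [mem_closedBall, dist_zero_right]; linarith)
    have h5 : t * ‖deriv g z‖ ≤ t * (2 * A) := by
      calc t * ‖deriv g z‖ ≤ (1 / 2 - ‖z‖) * ‖deriv g z‖ := by gcongr
        _ ≤ _ := h4
        _ = t * (2 * A) := by rw [ht]; ring
    exact le_of_mul_le_mul_left h5 htpos
  have hd2 : ∀ z ∈ closedBall z₀ (t / 2), ‖deriv (deriv g) z‖ ≤ 4 * A / t := by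
    intro z hz
    have hz1 : dist z z₀ ≤ t / 2 := hz
    have hs : closedBall z (t / 2) ⊆ closedBall z₀ t :=
      closedBall_subset_closedBall' (by linarith)
    have hdc : DiffContOnCl ℂ (deriv g) (ball z (t / 2)) :=
      (hg'.mono (hs.trans hball)).diffContOnCl_ball subset_rfl
    have := Complex.norm_deriv_le_of_forall_mem_sphere_norm_le (half_pos htpos) hdc
      (C := 2 * A) (fun w hw => hd1 w (hs (sphere_subset_closedBall hw)))
    calc _ ≤ _ := this
      _ = 4 * A / t := by field_simp; norm_num
  have hopen : ∀ z ∈ closedBall z₀ t, ball (0 : ℂ) 1 ∈ 𝓝 z := fun z hz =>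
    isOpen_ball.mem_nhds (hball hz)
  have hd3 : ∀ z ∈ closedBall z₀ (t / 8), ‖deriv g z - deriv g z₀‖ ≤ A / 2 := by
    intro z hz
    have hz1 : ‖z - z₀‖ ≤ t / 8 := by simpa [dist_eq_norm] using hz
    have hsub2 : closedBall z₀ (t / 2) ⊆ closedBall z₀ t :=
      closedBall_subset_closedBall (by linarith)
    have := Convex.norm_image_sub_le_of_norm_deriv_le (𝕜 := ℂ) (f := deriv g) (C := 4 * A / t)
      (s := closedBall z₀ (t / 2)) (x := z₀) (y := z)
      (fun x hx => (hg' x (hball (hsub2 hx))).differentiableAt (hopen x (hsub2 hx)))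
      hd2 (convex_closedBall _ _) (mem_closedBall_self (by linarith))
      (closedBall_subset_closedBall (by linarith) hz)
    calc _ ≤ _ := this
      _ ≤ 4 * A / t * (t / 8) := by gcongr
      _ = A / 2 := by field_simp; norm_num
  have hs8 : closedBall z₀ (t / 8) ⊆ closedBall z₀ t := closedBall_subset_closedBall (by linarith)
  have hsphere : ∀ z ∈ sphere z₀ (t / 8), 2 * ρ ≤ ‖g z - g z₀‖ := by
    intro z hz
    have hz1 : ‖z - z₀‖ = t / 8 := by simpa [dist_eq_norm] using hz
    have hda : ∀ x ∈ closedBall z₀ (t / 8), DifferentiableAt ℂ g x := fun x hx =>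
      (hg x (hball (hs8 hx))).differentiableAt (hopen x (hs8 hx))
    have := Convex.norm_image_sub_le_of_norm_hasDerivWithin_le (𝕜 := ℂ)
      (f := fun x => g x - deriv g z₀ * x) (f' := fun x => deriv g x - deriv g z₀) (C := A / 2)
      (s := closedBall z₀ (t / 8)) (x := z₀) (y := z)
      (fun x hx => by
        have := ((hda x hx).hasDerivAt.sub
          ((hasDerivAt_id x).const_mul (deriv g z₀))).hasDerivWithinAt (s := closedBall z₀ (t / 8))
        rw [mul_one] at this
        exact this)
      hd3 (convex_closedBall _ _) (mem_closedBall_self (by linarith))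
      (sphere_subset_closedBall hz)
    have e1 : g z - deriv g z₀ * z - (g z₀ - deriv g z₀ * z₀)
        = (g z - g z₀) - deriv g z₀ * (z - z₀) := by ring
    rw [e1] at this
    have h2 : ‖deriv g z₀ * (z - z₀)‖ ≤ ‖g z - g z₀‖ +
        ‖(g z - g z₀) - deriv g z₀ * (z - z₀)‖ := by
      have := norm_sub_le (g z - g z₀) ((g z - g z₀) - deriv g z₀ * (z - z₀))
      simpa using this
    rw [norm_mul, hz1] at h2
    rw [hz1] at this
    nlinarith
  have hdc : DiffContOnCl ℂ g (ball z₀ (t / 8)) :=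
    (hg.mono (hs8.trans hball)).diffContOnCl_ball subset_rfl
  have hfreq : ∃ᶠ z in 𝓝 z₀, g z ≠ g z₀ := by
    intro hev
    have hev' : g =ᶠ[𝓝 z₀] fun _ => g z₀ := hev.mono fun z hz => by simpa using hz
    have : deriv g z₀ = 0 := by rw [hev'.deriv_eq]; simp
    rw [hA, this] at hApos
    simp at hApos
  have := hdc.ball_subset_image_closedBall (by linarith) hsphere hfreq
  refine h (g z₀) ?_
  have e : 2 * ρ / 2 = ρ := by ring
  rw [e] at this
  exact this.trans (image_mono (hs8.trans hball))

lemma exists_log_of_ne_zero {h : ℂ → ℂ} (hh : DifferentiableOn ℂ h (ball 0 1))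
    (h0 : ∀ z ∈ ball (0 : ℂ) 1, h z ≠ 0) (w : ℂ) (hw : Complex.exp w = h 0) :
    ∃ L : ℂ → ℂ, DifferentiableOn ℂ L (ball 0 1) ∧ L 0 = w ∧
      ∀ z ∈ ball (0 : ℂ) 1, Complex.exp (L z) = h z := by
  have hd : DifferentiableOn ℂ (fun z => deriv h z / h z) (ball 0 1) :=
    (hh.deriv isOpen_ball).div hh h0
  obtain ⟨L, hL⟩ := hd.isExactOn_ball
  have hmem : (0 : ℂ) ∈ ball (0 : ℂ) 1 := by simp
  have hL2 : ∀ z ∈ ball (0 : ℂ) 1, HasDerivAt (fun z => h z * Complex.exp (-L z)) 0 z := by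
    intro z hz
    have h1 : HasDerivAt h (deriv h z) z :=
      ((hh z hz).differentiableAt (isOpen_ball.mem_nhds hz)).hasDerivAt
    have h2 := h1.mul ((hL z hz).neg.cexp)
    have e : deriv h z * Complex.exp (-L z) +
        h z * (Complex.exp (-L z) * -(deriv h z / h z)) = 0 := by
      have := h0 z hz
      field_simp
      ring
    exact h2.congr_deriv e
  have hconst : ∀ z ∈ ball (0 : ℂ) 1,
      h z * Complex.exp (-L z) = h 0 * Complex.exp (-L 0) := by
    intro z hz
    exact isOpen_ball.is_const_of_deriv_eq_zero (convex_ball _ _).isPreconnected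
      (fun x hx => (hL2 x hx).differentiableAt.differentiableWithinAt)
      (fun x hx => (hL2 x hx).deriv) hz hmem
  refine ⟨fun z => L z - L 0 + w, fun z hz =>
    (((hL z hz).differentiableAt.sub_const _).add_const _).differentiableWithinAt, by simp, ?_⟩
  intro z hz
  have := hconst z hz
  rw [Complex.exp_add, hw, Complex.exp_sub]
  rw [Complex.exp_neg, Complex.exp_neg] at this
  have e1 := Complex.exp_ne_zero (L z)
  have e2 := Complex.exp_ne_zero (L 0)
  field_simp at this ⊢
  rw [← this]

lemma exists_abs_sub_log_sqrt_add_sqrt_le {x : ℝ} (hx : 0 ≤ x) :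
    ∃ n : ℕ, 1 ≤ n ∧ |x - Real.log (√n + √(n - 1))| ≤ 2 := by
  have hc1 : 1 ≤ Real.cosh x := Real.one_le_cosh x
  have hs0 : 0 ≤ Real.sinh x := Real.sinh_nonneg_iff.2 hx
  have hcs : Real.cosh x ^ 2 - Real.sinh x ^ 2 = 1 := Real.cosh_sq_sub_sinh_sq x
  have hexp : Real.exp x = Real.cosh x + Real.sinh x := (Real.cosh_add_sinh x).symm
  refine ⟨⌊Real.cosh x ^ 2⌋₊, Nat.le_floor (by push_cast; nlinarith), ?_⟩
  set n := ⌊Real.cosh x ^ 2⌋₊ with hn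
  have hn1 : (1 : ℝ) ≤ n := by exact_mod_cast Nat.le_floor (by push_cast; nlinarith)
  have hn2 : (n : ℝ) ≤ Real.cosh x ^ 2 := Nat.floor_le (by positivity)
  have hn3 : Real.cosh x ^ 2 < n + 1 := Nat.lt_floor_add_one _
  have a1 : √(n : ℝ) ≤ Real.cosh x := Real.sqrt_le_iff.2 ⟨by linarith, hn2⟩
  have a2 : √((n : ℝ) - 1) ≤ Real.sinh x := Real.sqrt_le_iff.2 ⟨hs0, by linarith⟩
  have a3 : 1 ≤ √(n : ℝ) := Real.one_le_sqrt.2 hn1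
  have a4 : 0 ≤ √((n : ℝ) - 1) := Real.sqrt_nonneg _
  have a5 : Real.sinh x ≤ √(n : ℝ) := Real.le_sqrt_of_sq_le (by linarith)
  have a6 : Real.cosh x ≤ 2 * √(n : ℝ) := by
    have : √(n : ℝ) ^ 2 = n := Real.sq_sqrt (by linarith)
    nlinarith
  have b1 : Real.log (√n + √(n - 1)) ≤ x := by
    rw [Real.log_le_iff_le_exp (by linarith), hexp]; linarith
  have b2 : x ≤ Real.log (√n + √(n - 1)) + 2 := by
    have : x ≤ Real.log ((√n + √(n - 1)) * Real.exp 2) := by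
      rw [Real.le_log_iff_exp_le (by positivity), hexp]
      have : (3 : ℝ) ≤ Real.exp 2 := by linarith [Real.add_one_le_exp (2 : ℝ)]
      nlinarith
    rwa [Real.log_mul (by linarith) (Real.exp_ne_zero _), Real.log_exp] at this
  rw [abs_le]; constructor <;> linarith

lemma exp_two_log_sqrt_add_sqrt {n : ℕ} (hn : 1 ≤ n) :
    Real.exp (2 * Real.log (√n + √(n - 1))) + Real.exp (-(2 * Real.log (√n + √(n - 1))))
      = 4 * n - 2 := by
  have hn1 : (1 : ℝ) ≤ n := by exact_mod_cast hn
  have a3 : 1 ≤ √(n : ℝ) := Real.one_le_sqrt.2 hn1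
  have a4 : 0 ≤ √((n : ℝ) - 1) := Real.sqrt_nonneg _
  have s1 : √(n : ℝ) ^ 2 = n := Real.sq_sqrt (by linarith)
  have s2 : √((n : ℝ) - 1) ^ 2 = n - 1 := Real.sq_sqrt (by linarith)
  have e1 : Real.exp (2 * Real.log (√n + √(n - 1))) = (√n + √(n - 1)) ^ 2 := by
    rw [show (2 : ℝ) * Real.log (√n + √(n - 1)) = (2 : ℕ) * Real.log (√n + √(n - 1)) by norm_num,
      Real.exp_nat_mul, Real.exp_log (by linarith)]
  have e2 : ((√n + √((n : ℝ) - 1)) ^ 2)⁻¹ = (√n - √(n - 1)) ^ 2 := by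
    apply inv_eq_of_mul_eq_one_left
    have : (√(n : ℝ) - √(n - 1)) * (√n + √(n - 1)) = 1 := by nlinarith
    rw [← mul_pow, this, one_pow]
  rw [Real.exp_neg, e1, e2]
  linear_combination 2 * s1 + 2 * s2

/-- Landau's theorem. -/
lemma norm_deriv_le_of_omits_zero_one {h : ℂ → ℂ} (hh : DifferentiableOn ℂ h (ball 0 1))
    (h0 : ∀ z ∈ ball (0 : ℂ) 1, h z ≠ 0) (h1 : ∀ z ∈ ball (0 : ℂ) 1, h z ≠ 1) :
    ‖deriv h 0‖ ≤ 2 * Real.pi * ‖h 0‖ * (2 * (2 * ‖Complex.log (h 0)‖ + 1) * 640) := by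
  have hmem : (0 : ℂ) ∈ ball (0 : ℂ) 1 := by simp
  have hpi : (2 * Real.pi * Complex.I : ℂ) ≠ 0 := by simp [Real.pi_ne_zero]
  obtain ⟨L, hL, hL0, hLe⟩ := exists_log_of_ne_zero hh h0 (Complex.log (h 0))
    (Complex.exp_log (h0 0 hmem))
  set F : ℂ → ℂ := fun z => L z / (2 * Real.pi * Complex.I) with hF
  have hFd : DifferentiableOn ℂ F (ball 0 1) := hL.div_const _
  have hFL : ∀ z, L z = F z * (2 * Real.pi * Complex.I) := fun z => by
    rw [hF]; field_simp
  have hFint : ∀ z ∈ ball (0 : ℂ) 1, ∀ k : ℤ, F z ≠ k := by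
    intro z hz k hk
    refine h1 z hz ?_
    rw [← hLe z hz, hFL z, hk]
    exact Complex.exp_int_mul_two_pi_mul_I k
  have hF0 : ∀ z ∈ ball (0 : ℂ) 1, F z ≠ 0 := fun z hz => by simpa using hFint z hz 0
  have hF1 : ∀ z ∈ ball (0 : ℂ) 1, F z - 1 ≠ 0 := fun z hz => by
    simpa [sub_eq_zero] using hFint z hz 1
  obtain ⟨a, ha, -, hae⟩ := exists_log_of_ne_zero hFd hF0 _ (Complex.exp_log (hF0 0 hmem))
  obtain ⟨b, hb, -, hbe⟩ := exists_log_of_ne_zero (hFd.sub_const 1) hF1 _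
    (Complex.exp_log (hF1 0 hmem))
  set A : ℂ → ℂ := fun z => Complex.exp (a z / 2) with hA
  set B : ℂ → ℂ := fun z => Complex.exp (b z / 2) with hB
  have hAd : DifferentiableOn ℂ A (ball 0 1) := (ha.div_const 2).cexp
  have hBd : DifferentiableOn ℂ B (ball 0 1) := (hb.div_const 2).cexp
  have hA2 : ∀ z ∈ ball (0 : ℂ) 1, A z ^ 2 = F z := fun z hz => by
    rw [← hae z hz, hA, ← Complex.exp_nat_mul]; congr 1; push_cast; ring
  have hB2 : ∀ z ∈ ball (0 : ℂ) 1, B z ^ 2 = F z - 1 := fun z hz => by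
    rw [← hbe z hz, hB, ← Complex.exp_nat_mul]; congr 1; push_cast; ring
  have hAB : ∀ z ∈ ball (0 : ℂ) 1, (A z - B z) * (A z + B z) = 1 := fun z hz => by
    linear_combination hA2 z hz - hB2 z hz
  have hG : ∀ z ∈ ball (0 : ℂ) 1, A z - B z ≠ 0 := fun z hz hzero => by
    have := hAB z hz; rw [hzero] at this; simp at this
  obtain ⟨g, hg, -, hge⟩ := exists_log_of_ne_zero (hAd.sub hBd) hG _
    (Complex.exp_log (hG 0 hmem))
  have hge1 : ∀ z ∈ ball (0 : ℂ) 1, Complex.exp (2 * g z) = (A z - B z) ^ 2 := fun z hz => by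
    have := hge z hz
    rw [show (2 : ℂ) * g z = (2 : ℕ) * g z by norm_num, Complex.exp_nat_mul, this]
    rfl
  have hge2 : ∀ z ∈ ball (0 : ℂ) 1, Complex.exp (-(2 * g z)) = (A z + B z) ^ 2 := fun z hz => by
    rw [Complex.exp_neg, hge1 z hz]
    apply inv_eq_of_mul_eq_one_right
    rw [← mul_pow, hAB z hz, one_pow]
  have hFg : ∀ z ∈ ball (0 : ℂ) 1,
      Complex.exp (2 * g z) + Complex.exp (-(2 * g z)) = 4 * F z - 2 := fun z hz => by
    rw [hge1 z hz, hge2 z hz]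
    linear_combination 2 * hA2 z hz + 2 * hB2 z hz
  have homit : ∀ z ∈ ball (0 : ℂ) 1, ∀ n : ℕ, 1 ≤ n → ∀ m : ℤ, ∀ s : ℝ, (s = 1 ∨ s = -1) →
      g z ≠ (s * Real.log (√n + √(n - 1)) : ℝ) + m * (Real.pi / 2) * Complex.I := by
    intro z hz n hn m s hs heq
    have key := hFg z hz
    have hlog := exp_two_log_sqrt_add_sqrt hn
    set l := Real.log (√n + √(n - 1)) with hl
    have e1 : 2 * g z = ((2 * (s * l) : ℝ) : ℂ) + m * (Real.pi * Complex.I) := by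
      rw [heq]; push_cast; ring
    have hm : Complex.exp (m * (Real.pi * Complex.I)) = (-1) ^ m := by
      rw [Complex.exp_int_mul, Complex.exp_pi_mul_I]
    have hsum : Complex.exp ((2 * (s * l) : ℝ) : ℂ) + Complex.exp (-((2 * (s * l) : ℝ) : ℂ))
        = 4 * n - 2 := by
      rcases hs with rfl | rfl
      · have := congrArg (fun x : ℝ => (x : ℂ)) hlog
        push_cast at this ⊢
        simpa using this
      · have := congrArg (fun x : ℝ => (x : ℂ)) hlog
        push_cast at this ⊢
        rw [add_comm]
        simpa using this
    rcases Int.even_or_odd m with hev | hodd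
    · rw [hev.neg_one_zpow] at hm
      rw [neg_eq_neg_one_mul, e1] at key
      rw [Complex.exp_add, hm, ← neg_eq_neg_one_mul, neg_add, Complex.exp_add,
        Complex.exp_neg (m * _), hm, inv_one, mul_one, mul_one, hsum] at key
      exact hFint z hz n (by push_cast; linear_combination -key / 4)
    · rw [hodd.neg_one_zpow] at hm
      rw [neg_eq_neg_one_mul, e1] at key
      rw [Complex.exp_add, hm, ← neg_eq_neg_one_mul, neg_add, Complex.exp_add,
        Complex.exp_neg (m * _), hm] at key
      exact hFint z hz (1 - n) (by push_cast; linear_combination -key / 4 - hsum / 4)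
  have hbl : ‖deriv g 0‖ < 128 * 5 := by
    refine norm_deriv_lt_of_forall_not_ball_subset (by norm_num) hg fun w hw => ?_
    obtain ⟨n, hn, hx⟩ := exists_abs_sub_log_sqrt_add_sqrt_le (abs_nonneg w.re)
    have hp : 0 < Real.pi / 2 := by positivity
    set l := Real.log (√n + √(n - 1)) with hl
    set m : ℤ := ⌊w.im / (Real.pi / 2)⌋ with hm
    have hm1 : (m : ℝ) * (Real.pi / 2) ≤ w.im := by
      rw [← le_div_iff₀ hp]; exact Int.floor_le _
    have hm2 : w.im < (m + 1 : ℝ) * (Real.pi / 2) := by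
      rw [← div_lt_iff₀ hp]; exact Int.lt_floor_add_one _
    obtain ⟨s, hs, hsx⟩ : ∃ s : ℝ, (s = 1 ∨ s = -1) ∧ |w.re - s * l| ≤ 2 := by
      rcases le_total 0 w.re with h | h
      · exact ⟨1, Or.inl rfl, by rw [abs_of_nonneg h] at hx; simpa using hx⟩
      · refine ⟨-1, Or.inr rfl, ?_⟩
        rw [abs_of_nonpos h] at hx
        rw [← abs_neg]
        convert hx using 2; ring
    have hmemb : ((s * l : ℝ) : ℂ) + m * (Real.pi / 2) * Complex.I ∈ ball w 5 := by
      rw [mem_ball', dist_eq_norm]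
      refine (Complex.norm_le_abs_re_add_abs_im _).trans_lt ?_
      have r1 : (w - (((s * l : ℝ) : ℂ) + m * (Real.pi / 2) * Complex.I)).re = w.re - s * l := by
        simp
      have r2 : (w - (((s * l : ℝ) : ℂ) + m * (Real.pi / 2) * Complex.I)).im
          = w.im - m * (Real.pi / 2) := by
        simp
      rw [r1, r2]
      have h4 : |w.im - m * (Real.pi / 2)| ≤ 2 := by
        rw [abs_le]
        have := Real.pi_le_four
        constructor <;> nlinarith
      linarith
    obtain ⟨z, hz, hzeq⟩ := hw hmemb
    exact homit z hz n hn m s hs hzeq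
  have hgat : HasDerivAt g (deriv g 0) 0 :=
    ((hg 0 hmem).differentiableAt (isOpen_ball.mem_nhds hmem)).hasDerivAt
  have hFat : HasDerivAt F ((Complex.exp (2 * g 0) * (2 * deriv g 0) +
      Complex.exp (-(2 * g 0)) * (-(2 * deriv g 0))) / 4) 0 := by
    have h2 := ((((hgat.const_mul 2).cexp.add (hgat.const_mul 2).neg.cexp).add_const 2).div_const 4)
    refine h2.congr_of_eventuallyEq ?_
    filter_upwards [isOpen_ball.mem_nhds hmem] with z hz
    have := hFg z hz
    simp only [Pi.add_apply, Pi.neg_apply]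
    rw [this]; ring
  have hhat : deriv h 0 = h 0 * (deriv F 0 * (2 * Real.pi * Complex.I)) := by
    have h3 : HasDerivAt (fun z => Complex.exp (F z * (2 * Real.pi * Complex.I)))
        (Complex.exp (F 0 * (2 * Real.pi * Complex.I)) * (deriv F 0 * (2 * Real.pi * Complex.I)))
        0 := (hFat.differentiableAt.hasDerivAt.mul_const _).cexp
    have h4 := h3.congr_of_eventuallyEq (f₁ := h) (by
      filter_upwards [isOpen_ball.mem_nhds hmem] with z hz
      rw [← hFL, hLe z hz])
    rw [h4.deriv, ← hFL, hLe 0 hmem]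
  have hFn : ‖F 0‖ ≤ ‖Complex.log (h 0)‖ := by
    rw [hF]
    simp only [hL0, norm_div, norm_mul, Complex.norm_I, mul_one, Complex.norm_ofNat,
      Complex.norm_real, Real.norm_eq_abs, abs_of_pos Real.pi_pos]
    exact div_le_self (norm_nonneg _) (by linarith [Real.pi_gt_three])
  have nA : ‖A 0‖ ^ 2 = ‖F 0‖ := by rw [← norm_pow, hA2 0 hmem]
  have nB : ‖B 0‖ ^ 2 ≤ ‖F 0‖ + 1 := by
    rw [← norm_pow, hB2 0 hmem]; simpa using norm_sub_le (F 0) 1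
  have n1 : ‖Complex.exp (2 * g 0)‖ ≤ 2 * (2 * ‖F 0‖ + 1) := by
    rw [hge1 0 hmem, norm_pow]
    have := norm_sub_le (A 0) (B 0)
    nlinarith [sq_nonneg (‖A 0‖ - ‖B 0‖), norm_nonneg (A 0 - B 0)]
  have n2 : ‖Complex.exp (-(2 * g 0))‖ ≤ 2 * (2 * ‖F 0‖ + 1) := by
    rw [hge2 0 hmem, norm_pow]
    have := norm_add_le (A 0) (B 0)
    nlinarith [sq_nonneg (‖A 0‖ - ‖B 0‖), norm_nonneg (A 0 + B 0)]
  have nF : ‖deriv F 0‖ ≤ 2 * (2 * ‖F 0‖ + 1) * 640 := by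
    have e : (Complex.exp (2 * g 0) * (2 * deriv g 0) +
      Complex.exp (-(2 * g 0)) * (-(2 * deriv g 0))) / 4 =
      (Complex.exp (2 * g 0) - Complex.exp (-(2 * g 0))) * deriv g 0 / 2 := by ring
    rw [hFat.deriv, e, norm_div, norm_mul, Complex.norm_ofNat]
    have n3 := norm_sub_le (Complex.exp (2 * g 0)) (Complex.exp (-(2 * g 0)))
    have n4 : ‖Complex.exp (2 * g 0) - Complex.exp (-(2 * g 0))‖ * ‖deriv g 0‖ ≤
        (4 * (2 * ‖F 0‖ + 1)) * 640 := by
      gcongr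
      · linarith
      · linarith
    linarith
  rw [hhat, norm_mul, norm_mul]
  have e5 : ‖(2 * Real.pi * Complex.I : ℂ)‖ = 2 * Real.pi := by
    simp [abs_of_pos Real.pi_pos]
  rw [e5]
  have : ‖deriv F 0‖ ≤ 2 * (2 * ‖Complex.log (h 0)‖ + 1) * 640 := nF.trans (by gcongr)
  calc ‖h 0‖ * (‖deriv F 0‖ * (2 * Real.pi))
      ≤ ‖h 0‖ * ((2 * (2 * ‖Complex.log (h 0)‖ + 1) * 640) * (2 * Real.pi)) := by gcongr
    _ = _ := by ring

open RSphere

section Sphere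

lemma ofC_injective : Function.Injective ofC := by
  intro z w h
  simpa [ofC] using congrArg RSphere.val h

lemma ofC_ne_infty (z : ℂ) : ofC z ≠ infty := by simp [ofC, infty]

lemma eq_infty_or_exists_ofC (x : RSphere) : x = infty ∨ ∃ z, x = ofC z := by
  rcases x with ⟨_ | z⟩
  · exact Or.inl rfl
  · exact Or.inr ⟨z, rfl⟩

lemma dist_eq_sqrt (x y : RSphere) : dist x y =
    √(‖(embed x).fst - (embed y).fst‖ ^ 2 + ((embed x).snd - (embed y).snd) ^ 2) := by
  change dist (embed x) (embed y) = _
  rw [WithLp.prod_dist_eq_of_L2, dist_eq_norm, dist_eq_norm, Real.norm_eq_abs, sq_abs]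

lemma embed_ofC_fst (z : ℂ) : (embed (ofC z)).fst = ((2 / (‖z‖ ^ 2 + 1)) : ℝ) • z := rfl

lemma embed_ofC_snd (z : ℂ) : (embed (ofC z)).snd = (‖z‖ ^ 2 - 1) / (‖z‖ ^ 2 + 1) := rfl

lemma embed_infty_fst : (embed infty).fst = 0 := rfl

lemma embed_infty_snd : (embed infty).snd = 1 := rfl

lemma dist_ofC (z w : ℂ) :
    dist (ofC z) (ofC w) = 2 * ‖z - w‖ / (√(1 + ‖z‖ ^ 2) * √(1 + ‖w‖ ^ 2)) := by
  have hz : 0 < 1 + ‖z‖ ^ 2 := by positivity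
  have hw : 0 < 1 + ‖w‖ ^ 2 := by positivity
  rw [dist_eq_sqrt, Real.sqrt_eq_iff_mul_self_eq (by positivity) (by positivity),
    ← sq, div_pow, mul_pow, mul_pow, Real.sq_sqrt hz.le, Real.sq_sqrt hw.le]
  simp only [embed_ofC_fst, embed_ofC_snd]
  have e : ∀ v : ℂ, ‖v‖ ^ 2 = v.re ^ 2 + v.im ^ 2 := fun v => by
    rw [← Complex.normSq_eq_norm_sq, Complex.normSq_apply]; ring
  rw [e (z - w), e (_ • z - _ • w)]
  simp only [e z, e w, Complex.sub_re, Complex.sub_im, Complex.smul_re, Complex.smul_im,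
    smul_eq_mul] at hz hw ⊢
  field_simp
  ring

lemma inv_infty : inv infty = ofC 0 := rfl

lemma inv_ofC_zero : inv (ofC 0) = infty := by simp [inv, elim, ofC]

lemma inv_ofC {z : ℂ} (hz : z ≠ 0) : inv (ofC z) = ofC z⁻¹ := by
  simp [inv, elim, ofC, hz]

lemma inv_inv (x : RSphere) : inv (inv x) = x := by
  rcases eq_infty_or_exists_ofC x with rfl | ⟨z, rfl⟩
  · rw [inv_infty, inv_ofC_zero]
  · by_cases hz : z = 0
    · rw [hz, inv_ofC_zero, inv_infty]
    · rw [inv_ofC hz, inv_ofC (inv_ne_zero hz), _root_.inv_inv]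

lemma embed_inv (x : RSphere) : (embed (inv x)).fst = (starRingEnd ℂ) (embed x).fst ∧
    (embed (inv x)).snd = -(embed x).snd := by
  rcases eq_infty_or_exists_ofC x with rfl | ⟨z, rfl⟩
  · rw [inv_infty, embed_ofC_fst, embed_ofC_snd, embed_infty_fst, embed_infty_snd]; simp
  · by_cases hz : z = 0
    · rw [hz, inv_ofC_zero, embed_ofC_fst, embed_ofC_snd, embed_infty_fst, embed_infty_snd]; simp
    · have hn : ‖z‖ ≠ 0 := norm_ne_zero_iff.2 hz
      rw [inv_ofC hz, embed_ofC_fst, embed_ofC_snd, embed_ofC_fst, embed_ofC_snd]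
      constructor
      · rw [Complex.inv_def, norm_mul, RCLike.norm_conj, Complex.normSq_eq_norm_sq]
        simp only [Complex.real_smul, map_mul, Complex.conj_ofReal]
        rw [← mul_assoc, mul_right_comm, ← Complex.ofReal_mul]
        congr 2
        rw [Complex.norm_real, Real.norm_of_nonneg (by positivity)]
        field_simp
        ring
      · rw [norm_inv]; field_simp; ring

lemma dist_inv (x y : RSphere) : dist (inv x) (inv y) = dist x y := by
  rw [dist_eq_sqrt, dist_eq_sqrt, (embed_inv x).1, (embed_inv x).2, (embed_inv y).1,
    (embed_inv y).2, ← map_sub, RCLike.norm_conj]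
  congr 2; ring

/-- The two standard charts of the sphere, read as maps from the plane. -/
noncomputable def chart (b : Bool) (z : ℂ) : RSphere := if b then inv (ofC z) else ofC z

lemma dist_chart (b : Bool) (z w : ℂ) :
    dist (chart b z) (chart b w) = 2 * ‖z - w‖ / (√(1 + ‖z‖ ^ 2) * √(1 + ‖w‖ ^ 2)) := by
  cases b <;> simp [chart, dist_inv, dist_ofC]

lemma chart_injective (b : Bool) : Function.Injective (chart b) := by
  have hi : Function.Injective inv := Function.LeftInverse.injective inv_inv
  cases b
  · exact ofC_injective
  · exact hi.comp ofC_injective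

lemma continuous_chart (b : Bool) : Continuous (chart b) := by
  refine LipschitzWith.continuous (K := 2) (LipschitzWith.of_dist_le_mul fun z w => ?_)
  rw [dist_chart, dist_eq_norm]
  have h1 : 1 ≤ √(1 + ‖z‖ ^ 2) := Real.one_le_sqrt.2 (by nlinarith [norm_nonneg z])
  have h2 : 1 ≤ √(1 + ‖w‖ ^ 2) := Real.one_le_sqrt.2 (by nlinarith [norm_nonneg w])
  exact div_le_self (by positivity) (by nlinarith)

lemma continuous_inv : Continuous inv :=
  (Isometry.of_dist_eq dist_inv).continuous

lemma exists_chart (x : RSphere) : ∃ b z, ‖z‖ ≤ 1 ∧ chart b z = x := by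
  rcases eq_infty_or_exists_ofC x with rfl | ⟨z, rfl⟩
  · exact ⟨true, 0, by simp, by simp [chart, inv_ofC_zero]⟩
  · by_cases hz : ‖z‖ ≤ 1
    · exact ⟨false, z, hz, rfl⟩
    · have h0 : z ≠ 0 := by rintro rfl; simp at hz
      refine ⟨true, z⁻¹, ?_, by simp [chart, inv_ofC (inv_ne_zero h0)]⟩
      rw [norm_inv]; exact inv_le_one_of_one_le₀ (by linarith)

instance : CompactSpace RSphere := by
  constructor
  have : (univ : Set RSphere) =
      chart false '' closedBall 0 1 ∪ chart true '' closedBall 0 1 := by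
    refine (eq_univ_of_forall fun x => ?_).symm
    obtain ⟨b, z, hz, rfl⟩ := exists_chart x
    have hz' : z ∈ closedBall (0 : ℂ) 1 := by simpa using hz
    cases b
    · exact Or.inl ⟨z, hz', rfl⟩
    · exact Or.inr ⟨z, hz', rfl⟩
  rw [this]
  exact ((isCompact_closedBall 0 1).image (continuous_chart _)).union
    ((isCompact_closedBall 0 1).image (continuous_chart _))

lemma isOpenEmbedding_ofC : IsOpenEmbedding ofC := by
  have hcont : Continuous ofC := continuous_chart false
  have hrange : range ofC = {infty}ᶜ := by
    ext x
    rcases eq_infty_or_exists_ofC x with rfl | ⟨z, rfl⟩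
    · simp [ofC_ne_infty]
    · simp [ofC_ne_infty]
  have hopen : IsOpen ({infty}ᶜ : Set RSphere) := isOpen_compl_singleton
  refine ⟨⟨⟨?_⟩, ofC_injective⟩, hrange ▸ hopen⟩
  have hemb : Continuous embed := (Isometry.of_dist_eq fun _ _ => rfl : Isometry embed).continuous
  have hto : ∀ x : RSphere, toC x = (1 - (embed x).snd)⁻¹ • (embed x).fst := by
    intro x
    rcases eq_infty_or_exists_ofC x with rfl | ⟨z, rfl⟩
    · simp [toC, elim, infty, embed]
    · rw [embed_ofC_fst, embed_ofC_snd, smul_smul]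
      have : (1 - (‖z‖ ^ 2 - 1) / (‖z‖ ^ 2 + 1))⁻¹ * (2 / (‖z‖ ^ 2 + 1)) = 1 := by
        have : 1 - (‖z‖ ^ 2 - 1) / (‖z‖ ^ 2 + 1) = 2 / (‖z‖ ^ 2 + 1) := by field_simp; ring
        rw [this, inv_mul_cancel₀ (by positivity)]
      rw [this, one_smul]; rfl
  have htoc : ∀ z, ContinuousAt toC (ofC z) := by
    intro z
    have : toC = fun x => (1 - (embed x).snd)⁻¹ • (embed x).fst := funext hto
    rw [this]
    have c1 : Continuous fun x => (embed x).fst := by fun_prop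
    have c2 : Continuous fun x => (embed x).snd := by fun_prop
    refine ContinuousAt.smul ((continuous_const.sub c2).continuousAt.inv₀ ?_) c1.continuousAt
    change 1 - (embed (ofC z)).snd ≠ 0
    rw [embed_ofC_snd]
    have : 1 - (‖z‖ ^ 2 - 1) / (‖z‖ ^ 2 + 1) = 2 / (‖z‖ ^ 2 + 1) := by field_simp; ring
    rw [this]; positivity
  refine TopologicalSpace.ext_nhds fun z => ?_
  rw [nhds_induced]
  refine le_antisymm hcont.continuousAt.le_comap ?_
  have : toC (ofC z) = z := rfl
  have h2 : Tendsto toC (𝓝 (ofC z)) (𝓝 z) := htoc z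
  calc comap ofC (𝓝 (ofC z)) ≤ comap ofC (comap toC (𝓝 z)) := comap_mono h2.le_comap
    _ = 𝓝 z := by rw [comap_comap]; exact comap_id

lemma isOpenEmbedding_chart (b : Bool) : IsOpenEmbedding (chart b) := by
  cases b
  · exact isOpenEmbedding_ofC
  · have : IsOpenEmbedding inv :=
      (Homeomorph.mk ⟨inv, inv, inv_inv, inv_inv⟩ continuous_inv continuous_inv).isOpenEmbedding
    exact this.comp isOpenEmbedding_ofC

instance (x : RSphere) : (𝓝[≠] x).NeBot := by
  obtain ⟨b, z, -, rfl⟩ := exists_chart x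
  have : map (chart b) (𝓝[≠] z) ≤ 𝓝[≠] (chart b z) :=
    tendsto_nhdsWithin_iff.2 ⟨(continuous_chart b).continuousAt.tendsto.mono_left
      nhdsWithin_le_nhds, eventually_nhdsWithin_of_forall fun w hw h => hw (chart_injective b h)⟩
  exact NeBot.mono inferInstance this

end Sphere

open RSphere Asymptotics

section MetricDerivative

variable {X Y Z : Type*} [MetricSpace X] [MetricSpace Y] [MetricSpace Z]

/-- `g` scales distances near `x` asymptotically by the factor `D`. -/
def HasScaling (g : X → Y) (x : X) (D : ℝ) : Prop :=
  (fun p : X × X => dist (g p.1) (g p.2) - D * dist p.1 p.2) =o[𝓝 (x, x)]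
    fun p => dist p.1 p.2

lemma HasScaling.congr {g h : X → Y} {x : X} {D : ℝ} (hg : HasScaling g x D)
    (e : g =ᶠ[𝓝 x] h) : HasScaling h x D := by
  refine IsLittleO.congr' hg ?_ EventuallyEq.rfl
  have : ∀ᶠ p : X × X in 𝓝 (x, x), g p.1 = h p.1 ∧ g p.2 = h p.2 := e.prodMk_nhds e
  filter_upwards [this] with p hp
  rw [hp.1, hp.2]

lemma HasScaling.isBigO {g : X → Y} {x : X} {D : ℝ} (hg : HasScaling g x D) :
    (fun p : X × X => dist (g p.1) (g p.2)) =O[𝓝 (x, x)] fun p => dist p.1 p.2 := by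
  have h := (IsLittleO.isBigO hg).add ((isBigO_refl (fun p : X × X => dist p.1 p.2) (𝓝 (x, x))).const_mul_left D)
  simpa only [sub_add_cancel] using h

lemma HasScaling.comp {g : X → Y} {h : Y → Z} {x : X} {D E : ℝ}
    (hh : HasScaling h (g x) E) (hg : HasScaling g x D) (hc : ContinuousAt g x) :
    HasScaling (h ∘ g) x (E * D) := by
  have ht : Tendsto (fun p : X × X => (g p.1, g p.2)) (𝓝 (x, x)) (𝓝 (g x, g x)) := by
    rw [nhds_prod_eq, nhds_prod_eq]; exact Tendsto.prodMap hc hc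
  have h1 := (hh.comp_tendsto ht).trans_isBigO hg.isBigO
  refine (h1.add (hg.const_mul_left E)).congr_left fun p => ?_
  simp only [Function.comp]; ring

lemma HasScaling.of_comp {g : X → Y} {h : Y → Z} {x : X} {D E : ℝ} (hD : 0 < D)
    (hhg : HasScaling (h ∘ g) x E) (hg : HasScaling g x D) (ho : map g (𝓝 x) = 𝓝 (g x)) :
    HasScaling h (g x) (E / D) := by
  have hm : 𝓝 (g x, g x) = map (Prod.map g g) (𝓝 (x, x)) := by
    rw [nhds_prod_eq, nhds_prod_eq, ← prod_map_map_eq', ho]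
  unfold HasScaling
  rw [hm, isLittleO_map]
  have h1 : (fun p : X × X => dist p.1 p.2) =O[𝓝 (x, x)] fun p => dist (g p.1) (g p.2) := by
    have h2 : (fun p : X × X => dist (g p.1) (g p.2) - D * dist p.1 p.2) =o[𝓝 (x, x)]
        fun p => D * dist p.1 p.2 :=
      hg.trans_isBigO (isBigO_self_const_mul hD.ne' _ _)
    have h3 := h2.right_isBigO_add
    refine (isBigO_self_const_mul hD.ne' _ _).trans (h3.congr_right fun p => ?_)
    ring
  have h2 := hhg.sub (hg.const_mul_left (E / D))
  refine (h2.trans_isBigO h1).congr_left fun p => ?_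
  simp only [Function.comp, Prod.map]
  field_simp
  ring

lemma HasScaling.eventually {g : X → Y} {x : X} {D ε : ℝ} (hg : HasScaling g x D)
    (hε : 0 < ε) : ∀ᶠ p : X × X in 𝓝 (x, x),
      |dist (g p.1) (g p.2) - D * dist p.1 p.2| ≤ ε * dist p.1 p.2 := by
  filter_upwards [hg.def hε] with p hp
  simpa [Real.norm_eq_abs] using hp

lemma HasScaling.exists_ball {g : X → Y} {x : X} {D ε : ℝ} (hg : HasScaling g x D)
    (hε : 0 < ε) : ∃ δ > 0, ∀ y ∈ ball x δ, ∀ y' ∈ ball x δ,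
      |dist (g y) (g y') - D * dist y y'| ≤ ε * dist y y' := by
  obtain ⟨δ, hδ, h⟩ := Metric.eventually_nhds_iff_ball.1 (hg.eventually hε)
  exact ⟨δ, hδ, fun y hy y' hy' => h (y, y') (by rw [← ball_prod_same]; exact ⟨hy, hy'⟩)⟩

lemma HasScaling.tendsto {g : X → Y} {x : X} {D : ℝ} (hg : HasScaling g x D) :
    Tendsto (fun y => dist (g y) (g x) / dist y x) (𝓝[≠] x) (𝓝 D) := by
  rw [Metric.tendsto_nhds]
  intro ε hε
  have ht : Tendsto (fun y : X => (y, x)) (𝓝[≠] x) (𝓝 (x, x)) :=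
    ((Continuous.prodMk continuous_id continuous_const).tendsto' x (x, x) rfl).mono_left
      nhdsWithin_le_nhds
  filter_upwards [ht.eventually (hg.eventually (half_pos hε)), self_mem_nhdsWithin] with y hy hne
  have hd : 0 < dist y x := dist_pos.2 hne
  have : dist (g y) (g x) / dist y x - D = (dist (g y) (g x) - D * dist y x) / dist y x := by
    field_simp
  rw [Real.dist_eq, this, abs_div, abs_of_pos hd, div_lt_iff₀ hd]
  nlinarith

lemma HasScaling.abs_sub_le {g : X → Y} {x : X} [(𝓝[≠] x).NeBot] {D D' c : ℝ}
    (hg : HasScaling g x D)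
    (h : ∀ᶠ p : X × X in 𝓝 (x, x), |dist (g p.1) (g p.2) - D' * dist p.1 p.2| ≤ c * dist p.1 p.2) :
    |D - D'| ≤ c := by
  have ht : Tendsto (fun y : X => (y, x)) (𝓝[≠] x) (𝓝 (x, x)) :=
    ((Continuous.prodMk continuous_id continuous_const).tendsto' x (x, x) rfl).mono_left
      nhdsWithin_le_nhds
  refine le_of_tendsto (hg.tendsto.sub_const D').abs ?_
  filter_upwards [ht.eventually h, self_mem_nhdsWithin] with y hy hne
  have hd : 0 < dist y x := dist_pos.2 hne
  have : dist (g y) (g x) / dist y x - D' = (dist (g y) (g x) - D' * dist y x) / dist y x := by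
    field_simp
  rw [this, abs_div, abs_of_pos hd, div_le_iff₀ hd]
  exact hy

lemma continuous_of_hasScaling {g : X → Y} {D : X → ℝ} [∀ x : X, (𝓝[≠] x).NeBot]
    (hg : ∀ x, HasScaling g x (D x)) : Continuous D := by
  refine continuous_iff_continuousAt.2 fun x => ?_
  rw [ContinuousAt, Metric.tendsto_nhds]
  intro ε hε
  have h := (hg x).eventually (half_pos hε)
  have h2 := eventually_eventually_nhds.2 h
  have ht : Tendsto (fun y : X => (y, y)) (𝓝 x) (𝓝 (x, x)) :=
    (Continuous.prodMk continuous_id continuous_id).tendsto' x (x, x) rfl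
  filter_upwards [ht.eventually h2] with y hy
  rw [Real.dist_eq]
  exact ((hg y).abs_sub_le hy).trans_lt (half_lt_self hε)

end MetricDerivative

lemma HasScaling.sphDeriv_eq {g : RSphere → RSphere} {x : RSphere} {D : ℝ}
    (hg : HasScaling g x D) : sphDeriv g x = D :=
  hg.tendsto.limsup_eq

lemma hasScaling_chart (b : Bool) (z : ℂ) : HasScaling (chart b) z (2 / (1 + ‖z‖ ^ 2)) := by
  have hk : Tendsto (fun p : ℂ × ℂ => 2 / (√(1 + ‖p.1‖ ^ 2) * √(1 + ‖p.2‖ ^ 2)) -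
      2 / (1 + ‖z‖ ^ 2)) (𝓝 (z, z)) (𝓝 0) := by
    have hc : Continuous (fun p : ℂ × ℂ => 2 / (√(1 + ‖p.1‖ ^ 2) * √(1 + ‖p.2‖ ^ 2)) -
      2 / (1 + ‖z‖ ^ 2)) := by
      refine Continuous.sub (Continuous.div continuous_const (by fun_prop) fun p => ?_)
        continuous_const
      positivity
    refine hc.tendsto' _ _ ?_
    rw [Real.mul_self_sqrt (by positivity), sub_self]
  have h1 := ((isLittleO_one_iff ℝ).2 hk).mul_isBigO
    (isBigO_refl (fun p : ℂ × ℂ => dist p.1 p.2) (𝓝 (z, z)))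
  refine (h1.congr_left fun p => ?_).congr_right fun p => one_mul _
  rw [dist_chart, dist_eq_norm]; ring

lemma hasScaling_of_hasStrictDerivAt {r : ℂ → ℂ} {z r' : ℂ} (h : HasStrictDerivAt r r' z) :
    HasScaling r z ‖r'‖ := by
  have h1 := h.hasStrictFDerivAt.isLittleO
  refine IsLittleO.of_norm_right ?_
  refine (IsBigO.trans_isLittleO ?_ h1).trans_isBigO ?_
  · refine IsBigO.of_bound 1 (Eventually.of_forall fun p => ?_)
    rw [one_mul, Real.norm_eq_abs, dist_eq_norm, dist_eq_norm, ← norm_mul]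
    have := abs_norm_sub_norm_le (r p.1 - r p.2) (r' * (p.1 - p.2))
    refine this.trans (le_of_eq ?_)
    congr 1
    simp [mul_comm]
  · refine IsBigO.of_bound 1 (Eventually.of_forall fun p => ?_)
    simp [dist_eq_norm]

/-- A map from the plane to the sphere is holomorphic at `z` when it is a chart composed with an
analytic function. -/
def HolAt (g : ℂ → RSphere) (z : ℂ) : Prop :=
  ∃ b r, AnalyticAt ℂ r z ∧ g =ᶠ[𝓝 z] fun w => chart b (r w)

lemma holAt_chart (b : Bool) {r : ℂ → ℂ} {z : ℂ} (h : AnalyticAt ℂ r z) :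
    HolAt (fun w => chart b (r w)) z := ⟨b, r, h, EventuallyEq.rfl⟩

lemma holAt_of_polynomial {g : ℂ → RSphere} {z : ℂ} {P Q : Polynomial ℂ}
    (h0 : P.eval z ≠ 0 ∨ Q.eval z ≠ 0) (hQ : Q ≠ 0) (hg : ContinuousAt g z)
    (he : ∀ᶠ w in 𝓝[≠] z, Q.eval w ≠ 0 → g w = ofC (P.eval w / Q.eval w)) : HolAt g z := by
  have hQ' : ∀ᶠ w in 𝓝[≠] z, Q.eval w ≠ 0 := by
    have hfin : ((Q.roots.toFinset : Set ℂ) \ {z}).Finite := (Finset.finite_toSet _).sdiff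
    filter_upwards [self_mem_nhdsWithin, nhdsWithin_le_nhds
      (hfin.isClosed.isOpen_compl.mem_nhds (x := z) (by simp))] with w hne hw h
    exact hw ⟨by simp [hQ, h], hne⟩
  have key : ∀ b r, AnalyticAt ℂ r z → (∀ᶠ w in 𝓝[≠] z, g w = chart b (r w)) → HolAt g z := by
    intro b r hr h
    refine ⟨b, r, hr, ?_⟩
    exact (hg.eventuallyEq_nhds_iff_eventuallyEq_nhdsNE
      ((continuous_chart b).continuousAt.comp hr.continuousAt)).1 h
  have hPa : AnalyticAt ℂ (fun w => P.eval w) z := by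
    exact (Polynomial.differentiable P).analyticAt z
  have hQa : AnalyticAt ℂ (fun w => Q.eval w) z := (Polynomial.differentiable Q).analyticAt z
  by_cases hz : Q.eval z = 0
  · have hPz : P.eval z ≠ 0 := h0.resolve_right (fun h => h hz)
    refine key true (fun w => Q.eval w / P.eval w) (hQa.div hPa hPz) ?_
    filter_upwards [he, hQ', nhdsWithin_le_nhds (hPa.continuousAt.eventually_ne hPz)]
      with w h1 h2 h3
    rw [h1 h2]
    simp [chart, inv_ofC (div_ne_zero h2 h3)]
  · refine key false (fun w => P.eval w / Q.eval w) (hPa.div hQa hz) ?_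
    filter_upwards [he, hQ'] with w h1 h2
    rw [h1 h2]; rfl

lemma eval_inv_eq_reflect (P : Polynomial ℂ) {N : ℕ} (hN : P.natDegree ≤ N) {w : ℂ} (hw : w ≠ 0) :
    P.eval w⁻¹ = (P.reflect N).eval w * (w⁻¹) ^ N := by
  let _ : Invertible w⁻¹ := ⟨w, mul_inv_cancel₀ hw, inv_mul_cancel₀ hw⟩
  exact (Polynomial.eval₂_reflect_mul_pow (RingHom.id ℂ) w⁻¹ N P hN).symm

lemma _root_.IsRationalMap.right_ne_zero {f : RSphere → RSphere} {p q : Polynomial ℂ}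
    (hf : IsRationalMap f p q) (hdeg : 2 ≤ ratDeg p q) : q ≠ 0 := by
  rintro rfl
  have h := hf.coprime
  rw [isCoprime_zero_right] at h
  have := Polynomial.natDegree_eq_zero_of_isUnit h
  simp [ratDeg, this] at hdeg

lemma _root_.IsRationalMap.holAt_comp_chart {f : RSphere → RSphere} {p q : Polynomial ℂ}
    (hf : IsRationalMap f p q) (hdeg : 2 ≤ ratDeg p q) (b : Bool) (z : ℂ) :
    HolAt (fun w => f (chart b w)) z := by
  have hq := hf.right_ne_zero hdeg
  have hc : ContinuousAt (fun w => f (chart b w)) z :=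
    (hf.continuous.comp (continuous_chart b)).continuousAt
  have hcop : ∀ w : ℂ, p.eval w ≠ 0 ∨ q.eval w ≠ 0 := by
    intro w
    obtain ⟨u, v, h⟩ := hf.coprime
    by_contra! hcon
    have := congrArg (Polynomial.eval w) h
    simp [hcon.1, hcon.2] at this
  cases b
  · exact holAt_of_polynomial (hcop z) hq hc (Eventually.of_forall fun w hw => hf.eval w hw)
  · set N := ratDeg p q
    have hp : p.natDegree ≤ N := le_max_left _ _
    have hqN : q.natDegree ≤ N := le_max_right _ _
    refine holAt_of_polynomial (P := p.reflect N) (Q := q.reflect N) ?_ ?_ hc ?_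
    · by_cases hz : z = 0
      · subst hz
        rw [← Polynomial.coeff_zero_eq_eval_zero, ← Polynomial.coeff_zero_eq_eval_zero,
          Polynomial.coeff_reflect, Polynomial.coeff_reflect, Polynomial.revAt_zero]
        rcases max_choice p.natDegree q.natDegree with h | h
        · left
          have : N = p.natDegree := h
          rw [this, Polynomial.coeff_natDegree, Polynomial.leadingCoeff_ne_zero]
          rintro rfl
          simp at this; omega
        · right
          have : N = q.natDegree := h
          rw [this, Polynomial.coeff_natDegree, Polynomial.leadingCoeff_ne_zero]
          exact hq
      · have h := hcop z⁻¹
        rw [eval_inv_eq_reflect p hp hz, eval_inv_eq_reflect q hqN hz] at h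
        exact h.imp left_ne_zero_of_mul left_ne_zero_of_mul
    · rwa [Ne, Polynomial.reflect_eq_zero_iff]
    · have hne : ∀ᶠ w in 𝓝[≠] z, w ≠ 0 := by
        by_cases hz : z = 0
        · subst hz; exact self_mem_nhdsWithin
        · exact nhdsWithin_le_nhds (isOpen_ne.mem_nhds hz)
      filter_upwards [hne] with w hw hQ
      have h1 : q.eval w⁻¹ ≠ 0 := by
        rw [eval_inv_eq_reflect q hqN hw]
        exact mul_ne_zero hQ (pow_ne_zero _ (inv_ne_zero hw))
      have h2 : chart true w = ofC w⁻¹ := by simp [chart, inv_ofC hw]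
      rw [h2, hf.eval _ h1, eval_inv_eq_reflect p hp hw, eval_inv_eq_reflect q hqN hw,
        mul_div_mul_right _ _ (pow_ne_zero _ (inv_ne_zero hw))]

/-- The local properties of a rational map which the argument relies on. -/
structure IsHolMap (f : RSphere → RSphere) : Prop where
  continuous : Continuous f
  holAt : ∀ b z, HolAt (fun w => f (chart b w)) z
  finite_crit : (critSet f).Finite

lemma scaling_const_pos (z : ℂ) : 0 < 2 / (1 + ‖z‖ ^ 2) := by positivity

lemma HolAt.hasScaling {g : RSphere → RSphere} {b b' : Bool} {z : ℂ} {r : ℂ → ℂ}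
    (hr : AnalyticAt ℂ r z) (h : (fun w => g (chart b w)) =ᶠ[𝓝 z] fun w => chart b' (r w)) :
    HasScaling g (chart b z)
      (2 / (1 + ‖r z‖ ^ 2) * ‖deriv r z‖ / (2 / (1 + ‖z‖ ^ 2))) := by
  refine HasScaling.of_comp (scaling_const_pos z) ?_ (hasScaling_chart b z)
    ((isOpenEmbedding_chart b).map_nhds_eq z)
  refine HasScaling.congr ?_ h.symm
  exact (hasScaling_chart b' (r z)).comp
    (hasScaling_of_hasStrictDerivAt hr.hasStrictDerivAt) hr.continuousAt

namespace IsHolMap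

variable {f : RSphere → RSphere}

lemma exists_hasScaling (hf : IsHolMap f) (x : RSphere) : ∃ D, HasScaling f x D := by
  obtain ⟨b, z, -, rfl⟩ := exists_chart x
  obtain ⟨b', r, hr, h⟩ := hf.holAt b z
  exact ⟨_, HolAt.hasScaling hr h⟩

lemma hasScaling (hf : IsHolMap f) (x : RSphere) : HasScaling f x (sphDeriv f x) := by
  obtain ⟨D, hD⟩ := hf.exists_hasScaling x
  rwa [hD.sphDeriv_eq]

lemma map_nhds (hf : IsHolMap f) {x : RSphere} (hx : sphDeriv f x ≠ 0) :
    map f (𝓝 x) = 𝓝 (f x) := by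
  obtain ⟨b, z, -, rfl⟩ := exists_chart x
  obtain ⟨b', r, hr, h⟩ := hf.holAt b z
  have hd : deriv r z ≠ 0 := by
    intro h0
    apply hx
    rw [(HolAt.hasScaling hr h).sphDeriv_eq, h0]; simp
  have h1 := hr.hasStrictDerivAt.map_nhds_eq hd
  rw [← (isOpenEmbedding_chart b).map_nhds_eq z, map_map]
  have h2 : f (chart b z) = chart b' (r z) := h.eq_of_nhds
  rw [h2, ← (isOpenEmbedding_chart b').map_nhds_eq, ← h1, map_map]
  exact map_congr h

lemma sphDeriv_nonneg (hf : IsHolMap f) (x : RSphere) : 0 ≤ sphDeriv f x :=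
  ge_of_tendsto (hf.hasScaling x).tendsto (Eventually.of_forall fun _ => by positivity)

lemma continuous_sphDeriv (hf : IsHolMap f) : Continuous (sphDeriv f) :=
  continuous_of_hasScaling hf.hasScaling

lemma continuous_iterate (hf : IsHolMap f) (n : ℕ) : Continuous f^[n] :=
  hf.continuous.iterate n

lemma hasScaling_iterate (hf : IsHolMap f) (n : ℕ) (x : RSphere) :
    HasScaling f^[n] x (∏ k ∈ Finset.range n, sphDeriv f (f^[k] x)) := by
  induction n with
  | zero =>
    have : (fun p : RSphere × RSphere => dist (id p.1) (id p.2) - 1 * dist p.1 p.2) =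
        fun _ => 0 := by funext p; simp
    simp only [HasScaling, Function.iterate_zero, Finset.range_zero, Finset.prod_empty]
    rw [this]
    exact isLittleO_zero _ _
  | succ n ih =>
    rw [Finset.prod_range_succ, Function.iterate_succ', mul_comm]
    exact (hf.hasScaling _).comp ih (hf.continuous_iterate n).continuousAt

lemma sphDeriv_iterate (hf : IsHolMap f) (n : ℕ) (x : RSphere) :
    sphDeriv f^[n] x = ∏ k ∈ Finset.range n, sphDeriv f (f^[k] x) :=
  (hf.hasScaling_iterate n x).sphDeriv_eq

lemma hasScaling_iterate' (hf : IsHolMap f) (n : ℕ) (x : RSphere) :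
    HasScaling f^[n] x (sphDeriv f^[n] x) := by
  rw [hf.sphDeriv_iterate]; exact hf.hasScaling_iterate n x

lemma sphDeriv_iterate_add (hf : IsHolMap f) (m n : ℕ) (x : RSphere) :
    sphDeriv f^[m + n] x = sphDeriv f^[m] (f^[n] x) * sphDeriv f^[n] x := by
  rw [hf.sphDeriv_iterate, hf.sphDeriv_iterate, hf.sphDeriv_iterate, add_comm m n,
    Finset.prod_range_add, mul_comm]
  simp only [← Function.iterate_add_apply, add_comm]

lemma sphDeriv_iterate_nonneg (hf : IsHolMap f) (n : ℕ) (x : RSphere) :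
    0 ≤ sphDeriv f^[n] x := by
  rw [hf.sphDeriv_iterate]
  exact Finset.prod_nonneg fun _ _ => hf.sphDeriv_nonneg _

lemma sphDeriv_iterate_ne_zero_iff (hf : IsHolMap f) (n : ℕ) (x : RSphere) :
    sphDeriv f^[n] x ≠ 0 ↔ ∀ k < n, sphDeriv f (f^[k] x) ≠ 0 := by
  rw [hf.sphDeriv_iterate, Finset.prod_ne_zero_iff]
  simp

lemma map_nhds_iterate (hf : IsHolMap f) {n : ℕ} {x : RSphere} (hx : sphDeriv f^[n] x ≠ 0) :
    map f^[n] (𝓝 x) = 𝓝 (f^[n] x) := by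
  induction n with
  | zero => simp
  | succ n ih =>
    rw [hf.sphDeriv_iterate_ne_zero_iff] at hx ih
    rw [Function.iterate_succ', ← map_map, ih fun k hk => hx k (by omega),
      hf.map_nhds (hx n (by omega))]
    rfl

lemma exists_lipschitz (hf : IsHolMap f) :
    ∃ K : ℝ, 1 ≤ K ∧ ∀ x y, dist (f x) (f y) ≤ K * dist x y := by
  choose δ hδ hK using fun x => (hf.hasScaling x).exists_ball one_pos
  obtain ⟨η, hη, hl⟩ := lebesgue_number_lemma_of_metric (isCompact_univ (X := RSphere))
    (c := fun x : RSphere => ball x (δ x)) (fun _ => isOpen_ball)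
    fun x _ => mem_iUnion.2 ⟨x, mem_ball_self (hδ x)⟩
  obtain ⟨M, hM⟩ : ∃ M : ℝ, ∀ x, sphDeriv f x + 1 ≤ M := by
    obtain ⟨M, hM⟩ := (isCompact_range (hf.continuous_sphDeriv.add_const 1)).bddAbove
    exact ⟨M, fun x => hM ⟨x, rfl⟩⟩
  obtain ⟨C, hC⟩ := Metric.isBounded_iff.1 (isCompact_univ (X := RSphere)).isBounded
  have hC0 : 0 ≤ C := dist_nonneg.trans (hC (mem_univ infty) (mem_univ infty))
  refine ⟨max 1 (max M (C / η)), le_max_left _ _, fun x y => ?_⟩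
  by_cases hxy : dist y x < η
  · obtain ⟨i, hi⟩ := hl x (mem_univ _)
    have h1 := (abs_le.1 (hK i x (hi (mem_ball_self hη)) y (hi hxy))).2
    calc dist (f x) (f y) ≤ (sphDeriv f i + 1) * dist x y := by linarith
      _ ≤ _ := mul_le_mul_of_nonneg_right
        ((hM i).trans ((le_max_left _ _).trans (le_max_right _ _))) dist_nonneg
  · rw [not_lt, dist_comm] at hxy
    calc dist (f x) (f y) ≤ C := hC (mem_univ _) (mem_univ _)
      _ = C / η * η := by field_simp
      _ ≤ max 1 (max M (C / η)) * dist x y :=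
        mul_le_mul ((le_max_right _ _).trans (le_max_right _ _)) hxy hη.le
          (zero_le_one.trans (le_max_left _ _))

end IsHolMap

lemma _root_.IsRationalMap.isHolMap {f : RSphere → RSphere} {p q : Polynomial ℂ}
    (hf : IsRationalMap f p q) (hdeg : 2 ≤ ratDeg p q) : IsHolMap f := by
  refine ⟨hf.continuous, hf.holAt_comp_chart hdeg, ?_⟩
  have hq := hf.right_ne_zero hdeg
  have hw : Polynomial.wronskian p q ≠ 0 := by
    rw [Ne, hf.coprime.wronskian_eq_zero_iff]
    rintro ⟨h1, h2⟩
    have h1 := Polynomial.derivative_eq_zero.1 h1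
    have h2 := Polynomial.derivative_eq_zero.1 h2
    simp [ratDeg, h1, h2] at hdeg
  have hfin : ({infty} ∪ ofC '' ((q.roots.toFinset : Set ℂ) ∪
      ((Polynomial.wronskian p q).roots.toFinset : Set ℂ))).Finite :=
    (finite_singleton _).union (((Finset.finite_toSet _).union (Finset.finite_toSet _)).image _)
  refine hfin.subset fun x hx => ?_
  rcases eq_infty_or_exists_ofC x with rfl | ⟨z, rfl⟩
  · exact Or.inl rfl
  · refine Or.inr ⟨z, ?_, rfl⟩
    by_contra hcon
    rw [mem_union, not_or] at hcon
    have hqz : q.eval z ≠ 0 := by simpa [hq] using hcon.1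
    have hwz : (Polynomial.wronskian p q).eval z ≠ 0 := by simpa [hw] using hcon.2
    have hPa : AnalyticAt ℂ (fun w => p.eval w) z := (Polynomial.differentiable p).analyticAt z
    have hQa : AnalyticAt ℂ (fun w => q.eval w) z := (Polynomial.differentiable q).analyticAt z
    have h := HolAt.hasScaling (g := f) (b := false) (b' := false) (hPa.div hQa hqz) (by
      filter_upwards [hQa.continuousAt.eventually_ne hqz] with w hw
      exact hf.eval w hw)
    have h0 : sphDeriv f (ofC z) = 0 := hx
    have h1 : sphDeriv f (ofC z) = _ := h.sphDeriv_eq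
    rw [h0] at h1
    have hd : deriv ((fun w => p.eval w) / fun w => q.eval w) z =
        -(Polynomial.wronskian p q).eval z / q.eval z ^ 2 := by
      rw [deriv_div hPa.differentiableAt hQa.differentiableAt hqz]
      simp [Polynomial.wronskian]
    have hd0 : deriv ((fun w => p.eval w) / fun w => q.eval w) z ≠ 0 := by
      rw [hd]; exact div_ne_zero (neg_ne_zero.2 hwz) (pow_ne_zero _ hqz)
    have := norm_pos_iff.2 hd0
    have h3 := scaling_const_pos (((fun w => p.eval w) / fun w => q.eval w) z)
    have h4 := scaling_const_pos z
    exact absurd h1 (by positivity)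

/-- `G` is an inverse branch of `f^[n]` mapping `A` into `B` and contracting distances by factors
between `exp (-t)` and `exp (-s)`. -/
structure IsBranch (f : RSphere → RSphere) (n : ℕ) (A B : Set RSphere) (s t : ℝ)
    (G : RSphere → RSphere) : Prop where
  mapsTo : MapsTo G A B
  right_inv : ∀ u ∈ A, f^[n] (G u) = u
  le_dist : ∀ u ∈ A, ∀ v ∈ A, Real.exp (-t) * dist u v ≤ dist (G u) (G v)
  dist_le : ∀ u ∈ A, ∀ v ∈ A, dist (G u) (G v) ≤ Real.exp (-s) * dist u v

namespace IsBranch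

variable {f G G' : RSphere → RSphere} {m n : ℕ} {A B C A' B' : Set RSphere} {s t s' t' : ℝ}

lemma comp (h' : IsBranch f n B C s' t' G') (h : IsBranch f m A B s t G) :
    IsBranch f (m + n) A C (s + s') (t + t') (G' ∘ G) where
  mapsTo := h'.mapsTo.comp h.mapsTo
  right_inv u hu := by
    rw [Function.iterate_add_apply, Function.comp, h'.right_inv _ (h.mapsTo hu), h.right_inv u hu]
  le_dist u hu v hv := by
    refine le_trans ?_ (h'.le_dist _ (h.mapsTo hu) _ (h.mapsTo hv))
    rw [neg_add, add_comm, Real.exp_add, mul_assoc]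
    exact mul_le_mul_of_nonneg_left (h.le_dist u hu v hv) (Real.exp_pos _).le
  dist_le u hu v hv := by
    refine (h'.dist_le _ (h.mapsTo hu) _ (h.mapsTo hv)).trans ?_
    rw [neg_add, add_comm, Real.exp_add, mul_assoc]
    exact mul_le_mul_of_nonneg_left (h.dist_le u hu v hv) (Real.exp_pos _).le

lemma mono (h : IsBranch f n A B s t G) (hA : A' ⊆ A) (hB : B ⊆ B') (hs : s' ≤ s) (ht : t ≤ t') :
    IsBranch f n A' B' s' t' G where
  mapsTo := fun _ hu => hB (h.mapsTo (hA hu))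
  right_inv u hu := h.right_inv u (hA hu)
  le_dist u hu v hv := (mul_le_mul_of_nonneg_right (Real.exp_le_exp.2 (by linarith))
    dist_nonneg).trans (h.le_dist u (hA hu) v (hA hv))
  dist_le u hu v hv := (h.dist_le u (hA hu) v (hA hv)).trans
    (mul_le_mul_of_nonneg_right (Real.exp_le_exp.2 (by linarith)) dist_nonneg)

lemma injOn (h : IsBranch f n A B s t G) : InjOn G A := fun u hu v hv e => by
  rw [← h.right_inv u hu, e, h.right_inv v hv]

end IsBranch

/-- Nonempty compact invariant uniformly expanding subsets of the Julia set. -/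
def Hyperbolic (f : RSphere → RSphere) (L : Set RSphere) : Prop :=
  L.Nonempty ∧ L ⊆ juliaSet f ∧ IsCompact L ∧ f '' L = L ∧ ExpandingOn f L

namespace Hyperbolic

variable {f : RSphere → RSphere} {L : Set RSphere}

lemma mapsTo (h : Hyperbolic f L) : MapsTo f L L := fun x hx => by
  rw [← h.2.2.2.1]; exact mem_image_of_mem f hx

lemma iterate_mem (h : Hyperbolic f L) {x : RSphere} (hx : x ∈ L) (n : ℕ) : f^[n] x ∈ L :=
  h.mapsTo.iterate n hx

lemma sphDeriv_iterate_pos (h : Hyperbolic f L) {x : RSphere} (hx : x ∈ L) {n : ℕ} (hn : 1 ≤ n) :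
    0 < sphDeriv f^[n] x := by
  obtain ⟨c, hc, l, hl, H⟩ := h.2.2.2.2
  exact lt_of_lt_of_le (by positivity) (H x hx n hn)

lemma sphDeriv_pos (h : Hyperbolic f L) {x : RSphere} (hx : x ∈ L) : 0 < sphDeriv f x := by
  simpa only [Function.iterate_one] using h.sphDeriv_iterate_pos hx (n := 1) le_rfl

lemma exists_iterate_eq (h : Hyperbolic f L) (n : ℕ) {x : RSphere} (hx : x ∈ L) :
    ∃ y ∈ L, f^[n] y = x := by
  induction n generalizing x with
  | zero => exact ⟨x, hx, rfl⟩
  | succ n ih =>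
    obtain ⟨y, hy, rfl⟩ := ih hx
    rw [← h.2.2.2.1] at hy
    obtain ⟨z, hz, rfl⟩ := hy
    exact ⟨z, hz, rfl⟩

end Hyperbolic

namespace IsHolMap

variable {f : RSphere → RSphere} {L : Set RSphere}

lemma exists_uniform_scaling (hf : IsHolMap f) (hL : IsCompact L)
    (hpos : ∀ x ∈ L, 0 < sphDeriv f x) {ε : ℝ} (hε : 0 < ε) :
    ∃ δ > 0, ∀ x ∈ L, ∀ y ∈ ball x δ, ∀ y' ∈ ball x δ,
      Real.exp (-ε) * sphDeriv f x * dist y y' ≤ dist (f y) (f y') ∧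
      dist (f y) (f y') ≤ Real.exp ε * sphDeriv f x * dist y y' := by
  have hloc : ∀ x : L, ∃ δ > 0, (∀ y ∈ ball (x : RSphere) δ,
      Real.exp (-(ε / 2)) * sphDeriv f y ≤ sphDeriv f x ∧
        sphDeriv f x ≤ Real.exp (ε / 2) * sphDeriv f y) ∧
      ∀ y ∈ ball (x : RSphere) δ, ∀ y' ∈ ball (x : RSphere) δ,
      Real.exp (-(ε / 2)) * sphDeriv f x * dist y y' ≤ dist (f y) (f y') ∧
      dist (f y) (f y') ≤ Real.exp (ε / 2) * sphDeriv f x * dist y y' := by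
    rintro ⟨x, hx⟩
    have hD := hpos x hx
    have h1 : Real.exp (-(ε / 2)) < 1 := by
      rw [← Real.exp_zero]; exact Real.exp_lt_exp.2 (by linarith)
    have h2 : 1 - Real.exp (-(ε / 2)) ≤ Real.exp (ε / 2) - 1 := by
      have h3 : Real.exp (ε / 2) * Real.exp (-(ε / 2)) = 1 := by rw [← Real.exp_add]; simp
      nlinarith [sq_nonneg (Real.exp (ε / 2) - Real.exp (-(ε / 2))), Real.exp_pos (ε / 2),
        Real.exp_pos (-(ε / 2)), sq_nonneg (Real.exp (ε / 2) - 1)]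
    obtain ⟨δ, hδ, h⟩ := (hf.hasScaling x).exists_ball
      (mul_pos hD (sub_pos.2 h1))
    have c := hf.continuous_sphDeriv
    have e1 : ∀ᶠ y in 𝓝 x, Real.exp (-(ε / 2)) * sphDeriv f y < sphDeriv f x :=
      ContinuousAt.eventually_lt (by fun_prop) (by fun_prop) (by nlinarith)
    have e2 : ∀ᶠ y in 𝓝 x, sphDeriv f x < Real.exp (ε / 2) * sphDeriv f y :=
      ContinuousAt.eventually_lt (by fun_prop) (by fun_prop) (by nlinarith)
    obtain ⟨δ', hδ', h'⟩ := Metric.eventually_nhds_iff_ball.1 (e1.and e2)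
    refine ⟨min δ δ', lt_min hδ hδ', fun y hy => ?_, fun y hy y' hy' => ?_⟩
    · have := h' y (ball_subset_ball (min_le_right _ _) hy)
      exact ⟨this.1.le, this.2.le⟩
    · have h3 := abs_le.1 (h y (ball_subset_ball (min_le_left _ _) hy) y'
        (ball_subset_ball (min_le_left _ _) hy'))
      have h4 : 0 ≤ sphDeriv f x * dist y y' := by positivity
      constructor <;> simp only <;> nlinarith
  choose δ hδ h1 h2 using hloc
  obtain ⟨η, hη, hl⟩ := lebesgue_number_lemma_of_metric hL
    (c := fun x : L => ball (x : RSphere) (δ x)) (fun _ => isOpen_ball)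
    fun x hx => mem_iUnion.2 ⟨⟨x, hx⟩, mem_ball_self (hδ _)⟩
  refine ⟨η, hη, fun x hx y hy y' hy' => ?_⟩
  obtain ⟨i, hi⟩ := hl x hx
  have h3 := h1 i x (hi (mem_ball_self hη))
  have h4 := h2 i y (hi hy) y' (hi hy')
  have e1 : Real.exp (-ε) = Real.exp (-(ε / 2)) * Real.exp (-(ε / 2)) := by
    rw [← Real.exp_add]; ring_nf
  have e2 : Real.exp ε = Real.exp (ε / 2) * Real.exp (ε / 2) := by
    rw [← Real.exp_add]; ring_nf
  rw [e1, e2]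
  constructor
  · refine le_trans ?_ h4.1
    refine mul_le_mul_of_nonneg_right ?_ dist_nonneg
    rw [mul_assoc]
    exact mul_le_mul_of_nonneg_left h3.1 (Real.exp_pos _).le
  · refine h4.2.trans ?_
    refine mul_le_mul_of_nonneg_right ?_ dist_nonneg
    rw [mul_assoc]
    exact mul_le_mul_of_nonneg_left h3.2 (Real.exp_pos _).le

lemma exists_uniform_openness (hf : IsHolMap f) (hL : IsCompact L)
    (hpos : ∀ x ∈ L, 0 < sphDeriv f x) {δ : ℝ} (hδ : 0 < δ) :
    ∃ ρ > 0, ∀ x ∈ L, ball (f x) ρ ⊆ f '' ball x δ := by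
  have hloc : ∀ x : L, ∃ ρ > 0, ∃ η > 0, η ≤ δ / 2 ∧ ball (f x) (2 * ρ) ⊆ f '' ball x (δ / 2) ∧
      ∀ y ∈ ball (x : RSphere) η, f y ∈ ball (f x) ρ := by
    rintro ⟨x, hx⟩
    have h1 : f '' ball x (δ / 2) ∈ 𝓝 (f x) := by
      rw [← hf.map_nhds (hpos x hx).ne']
      exact image_mem_map (ball_mem_nhds x (half_pos hδ))
    obtain ⟨ρ, hρ, h2⟩ := Metric.mem_nhds_iff.1 h1
    have h3 : ∀ᶠ y in 𝓝 x, f y ∈ ball (f x) (ρ / 2) :=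
      hf.continuous.continuousAt.eventually (ball_mem_nhds _ (half_pos hρ))
    obtain ⟨η, hη, h4⟩ := Metric.eventually_nhds_iff_ball.1 h3
    refine ⟨ρ / 2, half_pos hρ, min η (δ / 2), lt_min hη (half_pos hδ), min_le_right _ _, ?_,
      fun y hy => h4 y (ball_subset_ball (min_le_left _ _) hy)⟩
    rwa [mul_div_cancel₀ _ two_ne_zero]
  choose ρ hρ η hη hηδ h1 h2 using hloc
  obtain ⟨t, ht⟩ := hL.elim_finite_subcover (fun x : L => ball (x : RSphere) (η x))
    (fun _ => isOpen_ball) fun x hx => mem_iUnion.2 ⟨⟨x, hx⟩, mem_ball_self (hη _)⟩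
  obtain ⟨r, hr, hrt⟩ : ∃ r > 0, ∀ i ∈ t, r ≤ ρ i := by
    rcases t.eq_empty_or_nonempty with rfl | hne
    · exact ⟨1, one_pos, by simp⟩
    · exact ⟨t.inf' hne ρ, (Finset.lt_inf'_iff hne).2 fun i _ => hρ i,
        fun i hi => Finset.inf'_le _ hi⟩
  refine ⟨r, hr, fun x hx => ?_⟩
  obtain ⟨i, hi, hxi⟩ := mem_iUnion₂.1 (ht hx)
  have h3 : ball (f x) r ⊆ ball (f i) (2 * ρ i) := by
    refine ball_subset_ball' ?_
    have := mem_ball.1 (h2 i x hxi)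
    have := hrt i hi
    linarith
  have h4 : ball (i : RSphere) (δ / 2) ⊆ ball x δ := by
    refine ball_subset_ball' ?_
    have := mem_ball'.1 hxi
    have := hηδ i
    linarith
  exact h3.trans ((h1 i).trans (image_mono h4))

lemma shadow_scaling (hf : IsHolMap f) (hL : Hyperbolic f L) {ε δ : ℝ}
    (hδ : ∀ x ∈ L, ∀ y ∈ ball x δ, ∀ y' ∈ ball x δ,
      Real.exp (-ε) * sphDeriv f x * dist y y' ≤ dist (f y) (f y') ∧
      dist (f y) (f y') ≤ Real.exp ε * sphDeriv f x * dist y y')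
    {x : RSphere} (hx : x ∈ L) (m : ℕ) {y y' : RSphere}
    (hy : ∀ i < m, f^[i] y ∈ ball (f^[i] x) δ) (hy' : ∀ i < m, f^[i] y' ∈ ball (f^[i] x) δ) :
    Real.exp (-(ε * m)) * sphDeriv f^[m] x * dist y y' ≤ dist (f^[m] y) (f^[m] y') ∧
      dist (f^[m] y) (f^[m] y') ≤ Real.exp (ε * m) * sphDeriv f^[m] x * dist y y' := by
  induction m with
  | zero =>
    have h : sphDeriv f^[0] x = 1 := by rw [hf.sphDeriv_iterate]; simp
    rw [h]; simp
  | succ m ih =>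
    obtain ⟨h1, h2⟩ := ih (fun i hi => hy i (by omega)) (fun i hi => hy' i (by omega))
    obtain ⟨h3, h4⟩ := hδ _ (hL.iterate_mem hx m) _ (hy m (by omega)) _ (hy' m (by omega))
    have hD := hL.sphDeriv_pos (hL.iterate_mem hx m)
    have e : sphDeriv f^[m + 1] x = sphDeriv f (f^[m] x) * sphDeriv f^[m] x := by
      rw [add_comm m 1, hf.sphDeriv_iterate_add]; rfl
    simp only [Function.iterate_succ', Function.comp_apply] at e ⊢
    rw [e]
    have e1 : Real.exp (-(ε * (m + 1 : ℕ))) = Real.exp (-ε) * Real.exp (-(ε * m)) := by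
      rw [← Real.exp_add]; push_cast; ring_nf
    have e2 : Real.exp (ε * (m + 1 : ℕ)) = Real.exp ε * Real.exp (ε * m) := by
      rw [← Real.exp_add]; push_cast; ring_nf
    rw [e1, e2]
    have p1 : 0 ≤ Real.exp (-ε) * sphDeriv f (f^[m] x) := by positivity
    have p2 : 0 ≤ Real.exp ε * sphDeriv f (f^[m] x) := by positivity
    constructor
    · refine le_trans (le_of_eq ?_) ((mul_le_mul_of_nonneg_left h1 p1).trans h3)
      ring
    · refine (h4.trans (mul_le_mul_of_nonneg_left h2 p2)).trans (le_of_eq ?_)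
      ring

lemma exists_shadow (hf : IsHolMap f) (hL : Hyperbolic f L) {δ : ℝ} (hδ0 : 0 < δ) :
    ∃ r > 0, ∀ m : ℕ, ∀ x ∈ L, ∀ u ∈ ball (f^[m] x) r, ∃ y, f^[m] y = u ∧
      ∀ i < m, f^[i] y ∈ ball (f^[i] x) δ := by
  have hcomp := hL.2.2.1
  have hpos : ∀ x ∈ L, 0 < sphDeriv f x := fun x hx => hL.sphDeriv_pos hx
  obtain ⟨c, hc, l, hl, hexp⟩ := hL.2.2.2.2
  have hlog : 0 < Real.log l := Real.log_pos hl
  obtain ⟨δ', hδ', hsc⟩ := hf.exists_uniform_scaling hcomp hpos hlog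
  obtain ⟨ρ, hρ, hopen⟩ := hf.exists_uniform_openness hcomp hpos (lt_min hδ0 hδ')
  refine ⟨min ρ (c * ρ), lt_min hρ (mul_pos hc hρ), fun m => ?_⟩
  suffices H : ∀ x ∈ L, ∀ u ∈ ball (f^[m] x) (min ρ (c * ρ)), ∃ y, f^[m] y = u ∧
      ∀ i < m, f^[i] y ∈ ball (f^[i] x) (min δ δ') by
    intro x hx u hu
    obtain ⟨y, h1, h2⟩ := H x hx u hu
    exact ⟨y, h1, fun i hi => ball_subset_ball (min_le_left _ _) (h2 i hi)⟩
  induction m with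
  | zero => intro x _ u _; exact ⟨u, rfl, by simp⟩
  | succ m ih =>
    intro x hx u hu
    obtain ⟨y₁, h1, h2⟩ := ih (f x) (hL.mapsTo hx) u hu
    have hd : dist y₁ (f x) < ρ := by
      rcases Nat.eq_zero_or_pos m with rfl | hm
      · have : y₁ = u := h1
        rw [this]
        exact lt_of_lt_of_le hu (min_le_left _ _)
      · have h3 := (hf.shadow_scaling hL hsc (hL.mapsTo hx) m
          (fun i hi => ball_subset_ball (min_le_right _ _) (h2 i hi))
          (y' := f x) (fun i _ => mem_ball_self hδ')).1
        have h4 := hexp (f x) (hL.mapsTo hx) m hm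
        have h5 : dist u (f^[m] (f x)) < c * ρ := lt_of_lt_of_le hu (min_le_right _ _)
        rw [h1] at h3
        have h6 : Real.exp (-(Real.log l * m)) * l ^ m = 1 := by
          have : l ^ m = Real.exp (Real.log l * m) := by
            rw [mul_comm, Real.exp_nat_mul, Real.exp_log (by linarith)]
          rw [this, ← Real.exp_add]; simp
        have h7 : c ≤ Real.exp (-(Real.log l * m)) * sphDeriv f^[m] (f x) := by
          calc c = Real.exp (-(Real.log l * m)) * (c * l ^ m) := by linear_combination -c * h6
            _ ≤ _ := mul_le_mul_of_nonneg_left h4 (Real.exp_pos _).le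
        have h8 := mul_le_mul_of_nonneg_right h7 (dist_nonneg (x := y₁) (y := f x))
        have h9 : c * dist y₁ (f x) < c * ρ := lt_of_le_of_lt (h8.trans h3) h5
        exact lt_of_mul_lt_mul_left h9 hc.le
    obtain ⟨y, hy, rfl⟩ := hopen x hx hd
    refine ⟨y, h1, fun i hi => ?_⟩
    cases i with
    | zero => exact hy
    | succ i => exact h2 i (by omega)

/-- Inverse branches along orbits of a hyperbolic set. -/
lemma exists_shadow_branch (hf : IsHolMap f) (hL : Hyperbolic f L) {ε δ : ℝ} (hε : 0 < ε)
    (hδ0 : 0 < δ) : ∃ r > 0, ∀ m : ℕ, 1 ≤ m → ∀ x ∈ L, ∃ G,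
      IsBranch f m (ball (f^[m] x) r) (ball x δ) (Real.log (sphDeriv f^[m] x) - ε * m)
        (Real.log (sphDeriv f^[m] x) + ε * m) G ∧
      (∀ u ∈ ball (f^[m] x) r, ∀ i < m, f^[i] (G u) ∈ ball (f^[i] x) δ) ∧ G (f^[m] x) = x := by
  obtain ⟨δ', hδ', hsc⟩ := hf.exists_uniform_scaling hL.2.2.1 (fun x hx => hL.sphDeriv_pos hx) hε
  obtain ⟨r, hr, H⟩ := hf.exists_shadow hL (lt_min hδ0 hδ')
  refine ⟨r, hr, fun m hm x hx => ?_⟩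
  choose! G hG using H m x hx
  have hD := hL.sphDeriv_iterate_pos hx hm
  have hs : ∀ u ∈ ball (f^[m] x) r, ∀ i < m, f^[i] (G u) ∈ ball (f^[i] x) δ := fun u hu i hi =>
    ball_subset_ball (min_le_left _ _) ((hG u hu).2 i hi)
  have hx0 : G (f^[m] x) = x := by
    have hu := mem_ball_self (x := f^[m] x) hr
    have h := (hf.shadow_scaling hL hsc hx m (y' := x)
      (fun i hi => ball_subset_ball (min_le_right _ _) ((hG _ hu).2 i hi))
      fun i _ => mem_ball_self hδ').1
    rw [(hG _ hu).1, dist_self] at h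
    refine dist_le_zero.1 (le_of_mul_le_mul_left (h.trans_eq (mul_zero _).symm) ?_)
    exact mul_pos (Real.exp_pos _) hD
  refine ⟨G, ⟨fun u hu => hs u hu 0 hm, fun u hu => (hG u hu).1, fun u hu v hv => ?_,
    fun u hu v hv => ?_⟩, hs, hx0⟩
  all_goals
    have h := hf.shadow_scaling hL hsc hx m
      (fun i hi => ball_subset_ball (min_le_right _ _) ((hG u hu).2 i hi))
      (fun i hi => ball_subset_ball (min_le_right _ _) ((hG v hv).2 i hi))
    rw [(hG u hu).1, (hG v hv).1] at h
  · have e : Real.exp (ε * m) * sphDeriv f^[m] x =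
        Real.exp (Real.log (sphDeriv f^[m] x) + ε * m) := by
      rw [Real.exp_add, Real.exp_log hD, mul_comm]
    rw [e] at h
    rw [Real.exp_neg, inv_mul_le_iff₀ (Real.exp_pos _)]
    exact h.2
  · have e : Real.exp (-(ε * m)) * sphDeriv f^[m] x =
        Real.exp (Real.log (sphDeriv f^[m] x) - ε * m) := by
      rw [sub_eq_add_neg, Real.exp_add, Real.exp_log hD, mul_comm]
    rw [e] at h
    rw [Real.exp_neg, ← div_eq_inv_mul, le_div_iff₀ (Real.exp_pos _), mul_comm]
    exact h.1

end IsHolMap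

section Moebius

/-- The Möbius transformation sending `a, b, c` to `0, 1, ∞`. -/
noncomputable def moebius (a b c : ℂ) (x : RSphere) : ℂ :=
  elim x ((b - c) / (b - a)) fun s => (s - a) * (b - c) / ((s - c) * (b - a))

lemma moebius_ofC (a b c s : ℂ) :
    moebius a b c (ofC s) = (s - a) * (b - c) / ((s - c) * (b - a)) := rfl

lemma moebius_infty (a b c : ℂ) : moebius a b c infty = (b - c) / (b - a) := rfl

variable {a b c : ℂ} (hab : a ≠ b) (hbc : b ≠ c) (hac : a ≠ c)

include hab hbc in
lemma moebius_ne_zero {x : RSphere} (hx : x ≠ ofC a) (hx' : x ≠ ofC c) : moebius a b c x ≠ 0 := by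
  have h1 := sub_ne_zero.2 hab.symm
  have h2 := sub_ne_zero.2 hbc
  rcases eq_infty_or_exists_ofC x with rfl | ⟨s, rfl⟩
  · exact div_ne_zero h2 h1
  · have h3 : s - a ≠ 0 := sub_ne_zero.2 fun h => hx (h ▸ rfl)
    have h4 : s - c ≠ 0 := sub_ne_zero.2 fun h => hx' (h ▸ rfl)
    exact div_ne_zero (mul_ne_zero h3 h2) (mul_ne_zero h4 h1)

include hab hac in
lemma moebius_ne_one {x : RSphere} (hx : x ≠ ofC b) (hx' : x ≠ ofC c) : moebius a b c x ≠ 1 := by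
  have h1 := sub_ne_zero.2 hab.symm
  have h2 := sub_ne_zero.2 hac
  rcases eq_infty_or_exists_ofC x with rfl | ⟨s, rfl⟩
  · rw [moebius_infty, Ne, div_eq_one_iff_eq h1]
    intro h
    exact h2 (by linear_combination h)
  · have h3 : s - b ≠ 0 := sub_ne_zero.2 fun h => hx (h ▸ rfl)
    have h4 : s - c ≠ 0 := sub_ne_zero.2 fun h => hx' (h ▸ rfl)
    rw [moebius_ofC, Ne, div_eq_one_iff_eq (mul_ne_zero h4 h1)]
    intro h
    exact mul_ne_zero h3 h2 (by linear_combination h)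

lemma dist_ofC_infty (s : ℂ) : dist (ofC s) infty = 2 / √(1 + ‖s‖ ^ 2) := by
  have hz : 0 < 1 + ‖s‖ ^ 2 := by positivity
  rw [dist_eq_sqrt, Real.sqrt_eq_iff_mul_self_eq (by positivity) (by positivity),
    ← sq, div_pow, Real.sq_sqrt hz.le]
  simp only [embed_ofC_fst, embed_ofC_snd, embed_infty_fst, embed_infty_snd, sub_zero, norm_smul]
  rw [Real.norm_of_nonneg (by positivity)]
  field_simp
  ring

lemma norm_sub_le_sqrt (s c : ℂ) : ‖s - c‖ ≤ √(1 + ‖s‖ ^ 2) * √(1 + ‖c‖ ^ 2) := by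
  rw [← Real.sqrt_mul (by positivity)]
  refine Real.le_sqrt_of_sq_le ?_
  have h := norm_sub_le s c
  nlinarith [norm_nonneg s, norm_nonneg c, norm_nonneg (s - c), sq_nonneg (‖s‖ * ‖c‖ - 1)]

include hab hbc hac in
lemma exists_dist_le_moebius : ∃ C : ℝ, 0 < C ∧ ∀ x y : RSphere, x ≠ ofC c → y ≠ ofC c →
    dist x y ≤ C * dist (moebius a b c x) (moebius a b c y) := by
  have h1 := sub_ne_zero.2 hab.symm
  have h2 := sub_ne_zero.2 hbc
  have h3 := sub_ne_zero.2 hac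
  set K : ℂ := (b - c) / (b - a) * (a - c) with hK
  have hK0 : 0 < ‖K‖ := norm_pos_iff.2 (mul_ne_zero (div_ne_zero h2 h1) h3)
  have hC : 0 < 1 + ‖c‖ ^ 2 := by positivity
  have hinf : ∀ s : ℂ, s ≠ c → dist (ofC s) infty ≤
      2 * (1 + ‖c‖ ^ 2) / ‖K‖ * dist (moebius a b c (ofC s)) (moebius a b c infty) := by
    intro s hs
    have hs' := sub_ne_zero.2 hs
    have hs0 : 0 < ‖s - c‖ := norm_pos_iff.2 hs'
    have e : moebius a b c (ofC s) - moebius a b c infty = - (K / (s - c)) := by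
      rw [moebius_ofC, moebius_infty, hK]; field_simp; ring
    rw [dist_eq_norm, e, norm_neg, norm_div, dist_ofC_infty]
    have h5 : 2 * (1 + ‖c‖ ^ 2) / ‖K‖ * (‖K‖ / ‖s - c‖) = 2 * (1 + ‖c‖ ^ 2) / ‖s - c‖ := by
      field_simp
    rw [h5, div_le_div_iff₀ (by positivity) hs0]
    have h6 := norm_sub_le_sqrt s c
    have h7 : √(1 + ‖c‖ ^ 2) ≤ 1 + ‖c‖ ^ 2 := by
      rw [Real.sqrt_le_left hC.le]; nlinarith [norm_nonneg c]
    nlinarith [Real.sqrt_nonneg (1 + ‖s‖ ^ 2), mul_le_mul_of_nonneg_left h7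
      (Real.sqrt_nonneg (1 + ‖s‖ ^ 2))]
  refine ⟨2 * (1 + ‖c‖ ^ 2) / ‖K‖, by positivity, fun x y hx hy => ?_⟩
  rcases eq_infty_or_exists_ofC x with rfl | ⟨s, rfl⟩ <;>
    rcases eq_infty_or_exists_ofC y with rfl | ⟨t, rfl⟩
  · simp
  · rw [dist_comm, dist_comm (moebius a b c infty)]
    exact hinf t fun h => hy (h ▸ rfl)
  · exact hinf s fun h => hx (h ▸ rfl)
  · have hs : s - c ≠ 0 := sub_ne_zero.2 fun h => hx (h ▸ rfl)
    have ht : t - c ≠ 0 := sub_ne_zero.2 fun h => hy (h ▸ rfl)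
    have hs0 := norm_pos_iff.2 hs
    have ht0 := norm_pos_iff.2 ht
    have e : moebius a b c (ofC s) - moebius a b c (ofC t) =
        K * (s - t) / ((s - c) * (t - c)) := by
      rw [moebius_ofC, moebius_ofC, hK]; field_simp; ring
    rw [dist_eq_norm (moebius a b c (ofC s)), e, dist_ofC, norm_div, norm_mul K, norm_mul (s - c)]
    have h5 : 2 * (1 + ‖c‖ ^ 2) / ‖K‖ * (‖K‖ * ‖s - t‖ / (‖s - c‖ * ‖t - c‖)) =
        2 * ‖s - t‖ * ((1 + ‖c‖ ^ 2) / (‖s - c‖ * ‖t - c‖)) := by field_simp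
    rw [h5, div_eq_mul_inv]
    refine mul_le_mul_of_nonneg_left ?_ (by positivity)
    rw [inv_eq_one_div, div_le_div_iff₀ (by positivity) (by positivity), one_mul]
    calc ‖s - c‖ * ‖t - c‖ ≤ (√(1 + ‖s‖ ^ 2) * √(1 + ‖c‖ ^ 2)) *
        (√(1 + ‖t‖ ^ 2) * √(1 + ‖c‖ ^ 2)) := by
          gcongr <;> exact norm_sub_le_sqrt _ _
      _ = (1 + ‖c‖ ^ 2) * (√(1 + ‖s‖ ^ 2) * √(1 + ‖t‖ ^ 2)) := by
          have := Real.mul_self_sqrt hC.le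
          linear_combination (√(1 + ‖s‖ ^ 2) * √(1 + ‖t‖ ^ 2)) * this

include hab in
lemma HolAt.differentiableAt_moebius {g : ℂ → RSphere} {z : ℂ} (hg : HolAt g z)
    (hz : g z ≠ ofC c) : DifferentiableAt ℂ (fun w => moebius a b c (g w)) z := by
  have h1 := sub_ne_zero.2 hab.symm
  obtain ⟨i, r, hr, h⟩ := hg
  have hd := hr.differentiableAt
  have hz' : chart i (r z) ≠ ofC c := by rw [← h.eq_of_nhds]; exact hz
  have e : (fun w => moebius a b c (g w)) =ᶠ[𝓝 z] fun w => moebius a b c (chart i (r w)) := by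
    filter_upwards [h] with w hw
    rw [hw]
  refine DifferentiableAt.congr_of_eventuallyEq ?_ e
  cases i
  · have hc : r z - c ≠ 0 := sub_ne_zero.2 fun h => hz' (h ▸ rfl)
    have e2 : (fun w => moebius a b c (chart false (r w))) =
        fun w => (r w - a) * (b - c) / ((r w - c) * (b - a)) := rfl
    rw [e2]
    exact DifferentiableAt.div (by fun_prop) (by fun_prop) (mul_ne_zero hc h1)
  · have hc : 1 - c * r z ≠ 0 := by
      intro h0
      have hrz : r z ≠ 0 := by intro h; simp [h] at h0
      apply hz'
      simp only [chart, if_true]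
      rw [inv_ofC hrz]
      congr 1
      field_simp
      linear_combination h0
    have e2 : (fun w => moebius a b c (chart true (r w))) =
        fun w => (1 - a * r w) * (b - c) / ((1 - c * r w) * (b - a)) := by
      funext w
      by_cases hw : r w = 0
      · simp [hw, chart, inv_ofC_zero, moebius_infty]
      · simp only [chart, if_true]
        rw [inv_ofC hw, moebius_ofC]
        have e3 : (r w)⁻¹ - a = (1 - a * r w) * (r w)⁻¹ := by field_simp
        have e4 : (r w)⁻¹ - c = (1 - c * r w) * (r w)⁻¹ := by field_simp
        rw [e3, e4, mul_right_comm, mul_right_comm (1 - c * r w),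
          mul_div_mul_right _ _ (inv_ne_zero hw)]
    rw [e2]
    exact DifferentiableAt.div (by fun_prop) (by fun_prop) (mul_ne_zero hc h1)

include hab in
lemma continuousAt_moebius {x : RSphere} (hx : x ≠ ofC c) : ContinuousAt (moebius a b c) x := by
  obtain ⟨i, z, -, rfl⟩ := exists_chart x
  have h := HolAt.differentiableAt_moebius (a := a) (b := b) (c := c) hab
    (holAt_chart i (r := id) (z := z) analyticAt_id) hx
  exact (isOpenEmbedding_chart i).continuousAt_iff.1 h.continuousAt

end Moebius

namespace IsHolMap

variable {f : RSphere → RSphere}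

lemma holAt_comp (hf : IsHolMap f) {g : ℂ → RSphere} {z : ℂ} (hg : HolAt g z) :
    HolAt (fun w => f (g w)) z := by
  obtain ⟨i, r, hr, h⟩ := hg
  obtain ⟨j, R, hR, h'⟩ := hf.holAt i (r z)
  refine ⟨j, fun w => R (r w), hR.comp hr, ?_⟩
  filter_upwards [h, hr.continuousAt.eventually h'] with w h1 h2
  rw [h1]; exact h2

lemma holAt_iterate (hf : IsHolMap f) {g : ℂ → RSphere} {z : ℂ} (hg : HolAt g z) (n : ℕ) :
    HolAt (fun w => f^[n] (g w)) z := by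
  induction n with
  | zero => exact hg
  | succ n ih =>
    simp only [Function.iterate_succ', Function.comp]
    exact hf.holAt_comp ih

/-- Landau's theorem bounds the spherical derivatives of those iterates which omit three given
values on a fixed disc, at points whose images stay away from two of them. -/
lemma exists_sphDeriv_iterate_le (hf : IsHolMap f) {a b c : ℂ} (hab : a ≠ b) (hbc : b ≠ c)
    (hac : a ≠ c) {δ : ℝ} (hδ : 0 < δ) (i : Bool) (z : ℂ) {s : ℝ} (hs : 0 < s) :
    ∃ B : ℝ, ∀ n : ℕ, (∀ w ∈ ball z s, f^[n] (chart i w) ≠ ofC a ∧ f^[n] (chart i w) ≠ ofC b ∧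
      f^[n] (chart i w) ≠ ofC c) → δ ≤ dist (f^[n] (chart i z)) (ofC a) →
      δ ≤ dist (f^[n] (chart i z)) (ofC c) → sphDeriv f^[n] (chart i z) ≤ B := by
  set S : Set RSphere := {x | δ ≤ dist x (ofC a) ∧ δ ≤ dist x (ofC c)} with hS
  have hSc : IsCompact S := by
    refine IsClosed.isCompact (IsClosed.inter ?_ ?_)
    · exact isClosed_le continuous_const (continuous_id.dist continuous_const)
    · exact isClosed_le continuous_const (continuous_id.dist continuous_const)
  have hne : ∀ x ∈ S, x ≠ ofC a ∧ x ≠ ofC c := by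
    rintro x ⟨h1, h2⟩
    exact ⟨dist_pos.1 (hδ.trans_le h1), dist_pos.1 (hδ.trans_le h2)⟩
  have hcont : ContinuousOn (fun x => 2 * Real.pi * ‖moebius a b c x‖ *
      (2 * (2 * (|Real.log ‖moebius a b c x‖| + Real.pi) + 1) * 640)) S := by
    intro x hx
    have h1 : ContinuousAt (fun y => ‖moebius a b c y‖) x :=
      (continuousAt_moebius hab (hne x hx).2).norm
    have h2 : ContinuousAt (fun y => |Real.log ‖moebius a b c y‖|) x :=
      (h1.log (norm_ne_zero_iff.2 (moebius_ne_zero hab hbc (hne x hx).1 (hne x hx).2))).abs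
    refine ContinuousAt.continuousWithinAt ?_
    fun_prop
  obtain ⟨M, hM⟩ := (hSc.image_of_continuousOn hcont).bddAbove
  obtain ⟨C, hC, hdist⟩ := exists_dist_le_moebius hab hbc hac
  have hc0 := scaling_const_pos z
  refine ⟨C * M / (s * (2 / (1 + ‖z‖ ^ 2))), fun n hom ha hc => ?_⟩
  set φ : ℂ → RSphere := fun w => chart i (z + s * w) with hφ
  have hφ0 : φ 0 = chart i z := by simp [hφ]
  have hmem : ∀ w ∈ ball (0 : ℂ) 1, z + s * w ∈ ball z s := by
    intro w hw
    rw [mem_ball_zero_iff] at hw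
    rw [mem_ball, dist_eq_norm, add_sub_cancel_left, norm_mul, Complex.norm_real,
      Real.norm_of_nonneg hs.le]
    nlinarith
  have hhol : ∀ w, HolAt (fun w => f^[n] (φ w)) w := fun w =>
    hf.holAt_iterate (holAt_chart i (by fun_prop)) n
  set h : ℂ → ℂ := fun w => moebius a b c (f^[n] (φ w)) with hh
  have hd : DifferentiableOn ℂ h (ball 0 1) := fun w hw =>
    ((hhol w).differentiableAt_moebius hab (hom _ (hmem w hw)).2.2).differentiableWithinAt
  have hL := norm_deriv_le_of_omits_zero_one hd
    (fun w hw => moebius_ne_zero hab hbc (hom _ (hmem w hw)).1 (hom _ (hmem w hw)).2.2)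
    (fun w hw => moebius_ne_one hab hac (hom _ (hmem w hw)).2.1 (hom _ (hmem w hw)).2.2)
  have hxS : f^[n] (φ 0) ∈ S := by rw [hφ0]; exact ⟨ha, hc⟩
  have hM' := hM (mem_image_of_mem _ hxS)
  have hlog : ‖Complex.log (h 0)‖ ≤ |Real.log ‖h 0‖| + Real.pi := by
    have h1 := Complex.norm_le_abs_re_add_abs_im (Complex.log (h 0))
    rw [Complex.log_re, Complex.log_im] at h1
    have h2 := Complex.abs_arg_le_pi (h 0)
    linarith
  have hder : ‖deriv h 0‖ ≤ M := by
    refine hL.trans (le_trans ?_ hM')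
    refine mul_le_mul_of_nonneg_left ?_ (by positivity)
    linarith
  have hsc1 : HasScaling φ 0 ((2 / (1 + ‖z‖ ^ 2)) * s) := by
    have h1 : HasStrictDerivAt (fun w : ℂ => z + s * w) (s : ℂ) 0 := by
      simpa using ((hasStrictDerivAt_id (0 : ℂ)).const_mul (s : ℂ)).const_add z
    have h2 := hasScaling_of_hasStrictDerivAt h1
    rw [Complex.norm_real, Real.norm_of_nonneg hs.le] at h2
    have h3 : HasScaling (chart i) (z + s * (0 : ℂ)) (2 / (1 + ‖z‖ ^ 2)) := by
      simpa using hasScaling_chart i z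
    exact HasScaling.comp (g := fun w : ℂ => z + s * w) h3 h2 (by fun_prop)
  have hφc : Continuous φ := (continuous_chart i).comp (by fun_prop)
  have hsc2 : HasScaling (f^[n] ∘ φ) 0 (sphDeriv f^[n] (chart i z) * ((2 / (1 + ‖z‖ ^ 2)) * s)) := by
    refine HasScaling.comp ?_ hsc1 hφc.continuousAt
    rw [hφ0]; exact hf.hasScaling_iterate' n _
  have hsc3 : HasScaling h 0 ‖deriv h 0‖ := by
    have h1 : AnalyticAt ℂ h 0 := hd.analyticAt (ball_mem_nhds 0 one_pos)
    exact hasScaling_of_hasStrictDerivAt h1.hasStrictDerivAt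
  have hle : sphDeriv f^[n] (chart i z) * ((2 / (1 + ‖z‖ ^ 2)) * s) ≤ C * ‖deriv h 0‖ := by
    refine le_of_tendsto_of_tendsto hsc2.tendsto (hsc3.tendsto.const_mul C) ?_
    filter_upwards [nhdsWithin_le_nhds (ball_mem_nhds (0 : ℂ) one_pos)] with w hw
    have h1 := hdist (f^[n] (φ w)) (f^[n] (φ 0)) (hom _ (hmem w hw)).2.2
      (hom _ (hmem 0 (mem_ball_self one_pos))).2.2
    rw [← mul_div_assoc]
    exact div_le_div_of_nonneg_right h1 dist_nonneg
  rw [le_div_iff₀ (by positivity)]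
  calc _ = sphDeriv f^[n] (chart i z) * ((2 / (1 + ‖z‖ ^ 2)) * s) := by ring
    _ ≤ C * ‖deriv h 0‖ := hle
    _ ≤ C * M := mul_le_mul_of_nonneg_left hder hC.le

end IsHolMap

/-- Points of the backward orbit of `x` reached without meeting a critical point. -/
def regularPreimages (f : RSphere → RSphere) (x : RSphere) : Set RSphere :=
  {w | ∃ n, f^[n] w = x ∧ sphDeriv f^[n] w ≠ 0}

/-- Points whose backward orbit does not meet any critical point. -/
def postcriticallyFree (f : RSphere → RSphere) : Set RSphere :=
  {w | ∀ k z, f^[k] z = w → sphDeriv f^[k] z ≠ 0}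

namespace IsHolMap

variable {f : RSphere → RSphere} {L L' : Set RSphere}

lemma infinite_regularPreimages (hf : IsHolMap f)
    (hexc : ¬ IsExceptional f ∨ maxExceptional f ∩ juliaSet f = ∅) (hL : Hyperbolic f L)
    {x : RSphere} (hx : x ∈ L) : (regularPreimages f x).Infinite := by
  intro hfin
  have hxT : x ∈ regularPreimages f x := ⟨0, rfl, by rw [hf.sphDeriv_iterate]; simp⟩
  have hper : ∃ n, 1 ≤ n ∧ f^[n] x = x := by
    choose g hgL hg using fun n : ℕ => hL.exists_iterate_eq n hx
    have hgT : ∀ n, g n ∈ regularPreimages f x := by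
      intro n
      refine ⟨n, hg n, ?_⟩
      rw [hf.sphDeriv_iterate_ne_zero_iff]
      exact fun k _ => (hL.sphDeriv_pos (hL.iterate_mem (hgL n) k)).ne'
    obtain ⟨i, -, j, -, hij, he⟩ := infinite_univ.exists_ne_map_eq_of_mapsTo
      (fun n _ => hgT n) hfin
    wlog hlt : i < j generalizing i j
    · exact this j i hij.symm he.symm (lt_of_le_of_ne (not_lt.1 hlt) hij.symm)
    refine ⟨j - i, by omega, ?_⟩
    calc f^[j - i] x = f^[j - i] (f^[i] (g i)) := by rw [hg i]
      _ = f^[j] (g i) := by rw [← Function.iterate_add_apply]; congr 2; omega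
      _ = x := by rw [he, hg j]
  have hS : f ⁻¹' regularPreimages f x \ critSet f = regularPreimages f x := by
    have hsucc : ∀ n w, sphDeriv f^[n + 1] w = sphDeriv f^[n] (f w) * sphDeriv f w := fun n w => by
      rw [hf.sphDeriv_iterate_add n 1]; rfl
    ext w
    constructor
    · rintro ⟨⟨n, h1, h2⟩, h3⟩
      exact ⟨n + 1, h1, by rw [hsucc]; exact mul_ne_zero h2 h3⟩
    · have key : ∀ n w, f^[n + 1] w = x → sphDeriv f^[n + 1] w ≠ 0 →
          w ∈ f ⁻¹' regularPreimages f x \ critSet f := by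
        intro n w h1 h2
        rw [hsucc] at h2
        exact ⟨⟨n, h1, left_ne_zero_of_mul h2⟩, right_ne_zero_of_mul h2⟩
      rintro ⟨n, h1, h2⟩
      rcases n with _ | n
      · obtain ⟨n, hn, hnx⟩ := hper
        obtain ⟨m, rfl⟩ := Nat.exists_eq_add_of_le' hn
        have h3 : w = x := h1
        rw [h3]
        exact key m x hnx (hL.sphDeriv_iterate_pos hx hn).ne'
      · exact key n w h1 h2
  have hmem : x ∈ maxExceptional f := mem_sUnion.2 ⟨_, ⟨hfin, ⟨x, hxT⟩, hS⟩, hxT⟩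
  rcases hexc with h | h
  · exact h ⟨_, hfin, ⟨x, hxT⟩, hS⟩
  · exact (h.subset ⟨hmem, hL.2.1 hx⟩ : x ∈ (∅ : Set RSphere))

lemma finite_forward_orbit_inter (x c : RSphere) :
    {w | (∃ n, f^[n] w = x) ∧ ∃ j, f^[j] c = w}.Finite := by
  by_cases h : ∃ N M, N < M ∧ f^[N] c = x ∧ f^[M] c = x
  · obtain ⟨N, M, hNM, hN, hM⟩ := h
    refine ((finite_Iio M).image fun j => f^[j] c).subset ?_
    rintro w ⟨-, j, rfl⟩
    induction j using Nat.strong_induction_on with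
    | _ j ih =>
      by_cases hj : j < M
      · exact ⟨j, hj, rfl⟩
      · have : f^[j] c = f^[j - M + N] c := by
          rw [Function.iterate_add_apply, hN, ← hM, ← Function.iterate_add_apply]
          congr 2; omega
        show f^[j] c ∈ _
        rw [this]
        exact ih _ (by omega)
  · by_cases h' : ∃ N, f^[N] c = x
    · obtain ⟨N, hN⟩ := h'
      refine ((finite_Iic N).image fun j => f^[j] c).subset ?_
      rintro w ⟨⟨n, hn⟩, j, rfl⟩
      refine ⟨j, ?_, rfl⟩
      rw [← Function.iterate_add_apply] at hn
      have : n + j = N := by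
        by_contra hne
        rcases lt_or_gt_of_ne hne with hlt | hlt
        · exact h ⟨_, _, hlt, hn, hN⟩
        · exact h ⟨_, _, hlt, hN, hn⟩
      simp only [mem_Iic]; omega
    · refine finite_empty.subset ?_
      rintro w ⟨⟨n, hn⟩, j, rfl⟩
      rw [← Function.iterate_add_apply] at hn
      exact (h' ⟨_, hn⟩).elim

lemma infinite_regularPreimages_inter (hf : IsHolMap f)
    (hexc : ¬ IsExceptional f ∨ maxExceptional f ∩ juliaSet f = ∅) (hL : Hyperbolic f L)
    {x : RSphere} (hx : x ∈ L) : (regularPreimages f x ∩ postcriticallyFree f).Infinite := by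
  have hbad : (⋃ c ∈ critSet f, {w | (∃ n, f^[n] w = x) ∧ ∃ j, f^[j] c = w}).Finite :=
    hf.finite_crit.biUnion fun c _ => finite_forward_orbit_inter x c
  refine ((hf.infinite_regularPreimages hexc hL hx).sdiff hbad).mono ?_
  rintro w ⟨hw, hnb⟩
  refine ⟨hw, fun k z hz => ?_⟩
  rw [hf.sphDeriv_iterate_ne_zero_iff]
  intro i hi h0
  obtain ⟨n, hn, -⟩ := hw
  refine hnb (mem_iUnion₂.2 ⟨f^[i] z, h0, ⟨n, hn⟩, k - i, ?_⟩)
  rw [← Function.iterate_add_apply, Nat.sub_add_cancel hi.le, hz]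

lemma exists_iterate_mem_of_infinite (hf : IsHolMap f) (hL : Hyperbolic f L) {a : RSphere}
    (ha : a ∈ L) {r : ℝ} (hr : 0 < r) {W : Set RSphere} (hW : W.Infinite) :
    ∃ n, ∃ y ∈ ball a r, f^[n] y ∈ W := by
  by_contra! hcon
  obtain ⟨i, z, -, rfl⟩ := exists_chart a
  obtain ⟨s, hs, hball⟩ : ∃ s > 0, ∀ w ∈ ball z s, chart i w ∈ ball (chart i z) r :=
    Metric.eventually_nhds_iff_ball.1
      ((continuous_chart i).continuousAt.eventually (ball_mem_nhds _ hr))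
  have hWinf : (ofC ⁻¹' W).Infinite := by
    intro hfin
    refine hW (((hfin.image ofC).insert infty).subset fun x hx => ?_)
    rcases eq_infty_or_exists_ofC x with rfl | ⟨u, rfl⟩
    · exact Or.inl rfl
    · exact Or.inr ⟨u, hx, rfl⟩
  set e := hWinf.natEmbedding
  have hne : ∀ j k : ℕ, j ≠ k → (e j : ℂ) ≠ e k := fun j k hjk h =>
    hjk (e.injective (Subtype.ext h))
  obtain ⟨δ, hδ, hδd⟩ : ∃ δ > 0, ∀ j < 4, ∀ k < 4, j ≠ k →
      2 * δ ≤ dist (ofC (e j)) (ofC (e k)) := by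
    have hsne : ((Finset.range 4 ×ˢ Finset.range 4).filter fun p : ℕ × ℕ => p.1 ≠ p.2).Nonempty :=
      ⟨(0, 1), by simp⟩
    refine ⟨(Finset.inf' _ hsne fun p => dist (ofC (e p.1)) (ofC (e p.2))) / 2, ?_, ?_⟩
    · refine half_pos ((Finset.lt_inf'_iff hsne).2 fun p hp => dist_pos.2 fun h => ?_)
      exact hne _ _ (Finset.mem_filter.1 hp).2 (ofC_injective h)
    · intro j hj k hk hjk
      rw [mul_div_cancel₀ _ two_ne_zero]
      exact Finset.inf'_le (fun p : ℕ × ℕ => dist (ofC (e p.1)) (ofC (e p.2)))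
        (b := (j, k)) (by simp [hj, hk, hjk])
  have hom : ∀ n, ∀ w ∈ ball z s, ∀ j, f^[n] (chart i w) ≠ ofC (e j) := by
    intro n w hw j h
    refine hcon n _ (hball w hw) ?_
    rw [h]; exact (e j).2
  obtain ⟨B₁, hB₁⟩ := hf.exists_sphDeriv_iterate_le (hne 0 1 (by simp)) (hne 1 2 (by simp))
    (hne 0 2 (by simp)) hδ i z hs
  obtain ⟨B₂, hB₂⟩ := hf.exists_sphDeriv_iterate_le (hne 1 0 (by simp)) (hne 0 3 (by simp))
    (hne 1 3 (by simp)) hδ i z hs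
  have hbd : ∀ n, sphDeriv f^[n] (chart i z) ≤ max B₁ B₂ := by
    intro n
    set x := f^[n] (chart i z)
    have tri : ∀ j k, j < 4 → k < 4 → j ≠ k → dist x (ofC (e j)) < δ → δ ≤ dist x (ofC (e k)) := by
      intro j k hj hk hjk hd
      have h1 := hδd j hj k hk hjk
      have h2 := dist_triangle_left (ofC (e j)) (ofC (e k)) x
      linarith
    by_cases h0 : dist x (ofC (e 0)) < δ
    · exact (hB₂ n (fun w hw => ⟨hom n w hw _, hom n w hw _, hom n w hw _⟩)
        (tri 0 1 (by simp) (by simp) (by simp) h0)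
        (tri 0 3 (by simp) (by simp) (by simp) h0)).trans (le_max_right _ _)
    · by_cases h2 : dist x (ofC (e 2)) < δ
      · exact (hB₂ n (fun w hw => ⟨hom n w hw _, hom n w hw _, hom n w hw _⟩)
          (tri 2 1 (by simp) (by simp) (by simp) h2)
          (tri 2 3 (by simp) (by simp) (by simp) h2)).trans (le_max_right _ _)
      · exact (hB₁ n (fun w hw => ⟨hom n w hw _, hom n w hw _, hom n w hw _⟩)
          (not_lt.1 h0) (not_lt.1 h2)).trans (le_max_left _ _)
  obtain ⟨c, hc, l, hl, hexp⟩ := hL.2.2.2.2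
  obtain ⟨m, hm⟩ := ((tendsto_pow_atTop_atTop_of_one_lt hl).const_mul_atTop hc).eventually_gt_atTop
    (max B₁ B₂) |>.and (eventually_ge_atTop 1) |>.exists
  exact absurd ((hexp _ ha m hm.2).trans (hbd m)) (not_le.2 hm.1)

lemma exists_branch_of_ne_zero (hf : IsHolMap f) {n : ℕ} {y : RSphere}
    (hy : sphDeriv f^[n] y ≠ 0) {r : ℝ} (hr : 0 < r) :
    ∃ κ > 0, ∃ C, ∃ G, IsBranch f n (ball (f^[n] y) κ) (ball y r) (-C) C G := by
  have hD : 0 < sphDeriv f^[n] y := lt_of_le_of_ne (hf.sphDeriv_iterate_nonneg n y) hy.symm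
  obtain ⟨η, hη, hsc⟩ := (hf.hasScaling_iterate' n y).exists_ball (half_pos hD)
  have h1 : f^[n] '' ball y (min η r) ∈ 𝓝 (f^[n] y) := by
    rw [← hf.map_nhds_iterate hy]
    exact image_mem_map (ball_mem_nhds y (lt_min hη hr))
  obtain ⟨κ, hκ, hb⟩ := Metric.mem_nhds_iff.1 h1
  have hb' : ∀ u ∈ ball (f^[n] y) κ, ∃ w ∈ ball y (min η r), f^[n] w = u := fun u hu => hb hu
  choose! G hG using hb'
  set D := sphDeriv f^[n] y
  refine ⟨κ, hκ, |Real.log (D / 2)| + |Real.log (3 * D / 2)|, G,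
    ⟨fun u hu => ball_subset_ball (min_le_right _ _) (hG _ hu).1, fun u hu => (hG _ hu).2,
      fun u hu v hv => ?_, fun u hu v hv => ?_⟩⟩
  all_goals
    have h := abs_le.1 (hsc _ (ball_subset_ball (min_le_left _ _) (hG _ hu).1) _
      (ball_subset_ball (min_le_left _ _) (hG _ hv).1))
    rw [(hG _ hu).2, (hG _ hv).2] at h
  · rw [Real.exp_neg, inv_mul_le_iff₀ (Real.exp_pos _)]
    have h2 : 3 * D / 2 ≤ Real.exp (|Real.log (D / 2)| + |Real.log (3 * D / 2)|) := by
      rw [← Real.log_le_iff_le_exp (by positivity)]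
      have := le_abs_self (Real.log (3 * D / 2))
      have := abs_nonneg (Real.log (D / 2))
      linarith
    have h3 := mul_le_mul_of_nonneg_right h2 (dist_nonneg (x := G u) (y := G v))
    linarith
  · rw [neg_neg]
    have h2 : (D / 2)⁻¹ ≤ Real.exp (|Real.log (D / 2)| + |Real.log (3 * D / 2)|) := by
      rw [← Real.log_le_iff_le_exp (by positivity), Real.log_inv]
      have := neg_le_abs (Real.log (D / 2))
      have := abs_nonneg (Real.log (3 * D / 2))
      linarith
    refine le_trans ?_ (mul_le_mul_of_nonneg_right h2 dist_nonneg)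
    rw [← div_eq_inv_mul, le_div_iff₀ (half_pos hD)]
    linarith

/-- Any two hyperbolic sets are connected by uniformly controlled inverse branches. -/
lemma exists_bridge (hf : IsHolMap f)
    (hexc : ¬ IsExceptional f ∨ maxExceptional f ∩ juliaSet f = ∅)
    (hL : Hyperbolic f L) (hL' : Hyperbolic f L') {r : ℝ} (hr : 0 < r) :
    ∃ κ > 0, ∃ N : ℕ, ∃ C : ℝ, ∀ x ∈ L, ∀ a ∈ L', ∃ n ≤ N, ∃ G,
      IsBranch f n (ball x κ) (ball a r) (-C) C G := by
  have hloc : ∀ p : L ×ˢ L', ∃ κ > 0, ∃ n C G,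
      IsBranch f n (ball p.1.1 (2 * κ)) (ball p.1.2 (r / 2)) (-C) C G := by
    rintro ⟨⟨x, a⟩, hx, ha⟩
    obtain ⟨k, y, hy, ⟨n, hn, hn0⟩, hfree⟩ := hf.exists_iterate_mem_of_infinite hL' ha
      (half_pos (half_pos hr)) (hf.infinite_regularPreimages_inter hexc hL hx)
    have h0 : sphDeriv f^[n + k] y ≠ 0 := by
      rw [hf.sphDeriv_iterate_add]
      exact mul_ne_zero hn0 (hfree k y rfl)
    obtain ⟨κ, hκ, C, G, hG⟩ := hf.exists_branch_of_ne_zero h0 (half_pos (half_pos hr))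
    rw [Function.iterate_add_apply, hn] at hG
    refine ⟨κ / 2, half_pos hκ, n + k, C, G, hG.mono ?_ ?_ le_rfl le_rfl⟩
    · rw [mul_div_cancel₀ _ two_ne_zero]
    · refine ball_subset_ball' ?_
      have := mem_ball.1 hy
      linarith
  choose κ hκ n C G hG using hloc
  obtain ⟨t, ht⟩ := (hL.2.2.1.prod hL'.2.2.1).elim_finite_subcover
    (fun p : L ×ˢ L' => ball p.1.1 (κ p) ×ˢ ball p.1.2 (r / 2))
    (fun _ => isOpen_ball.prod isOpen_ball)
    fun p hp => mem_iUnion.2 ⟨⟨p, hp⟩, mem_ball_self (hκ _), mem_ball_self (half_pos hr)⟩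
  obtain ⟨ρ, hρ, hρt⟩ : ∃ ρ > 0, ∀ i ∈ t, ρ ≤ κ i := by
    rcases t.eq_empty_or_nonempty with rfl | hne
    · exact ⟨1, one_pos, by simp⟩
    · exact ⟨t.inf' hne κ, (Finset.lt_inf'_iff hne).2 fun i _ => hκ i,
        fun i hi => Finset.inf'_le _ hi⟩
  obtain ⟨N, hN⟩ := (t.image n).exists_le
  obtain ⟨M, hM⟩ := (t.image C).exists_le
  refine ⟨ρ, hρ, N, M, fun x hx a ha => ?_⟩
  obtain ⟨p, hp, hxa⟩ := mem_iUnion₂.1 (ht (show (x, a) ∈ L ×ˢ L' from ⟨hx, ha⟩))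
  have hCM : C p ≤ M := hM _ (Finset.mem_image_of_mem _ hp)
  refine ⟨n p, hN _ (Finset.mem_image_of_mem _ hp), G p,
    (hG p).mono ?_ ?_ (neg_le_neg hCM) hCM⟩
  · refine ball_subset_ball' ?_
    have := mem_ball.1 hxa.1
    have := hρt p hp
    linarith
  · refine ball_subset_ball' ?_
    have := mem_ball'.1 hxa.2
    linarith

end IsHolMap

instance : PerfectSpace RSphere := perfectSpace_iff_forall_not_isolated.2 inferInstance

/-- There are `N` inverse branches of `f^[n]` mapping `B` into itself, with disjoint images and
contraction rates between `exp (-t)` and `exp (-s)`. -/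
def HasSystem (f : RSphere → RSphere) (B : Set RSphere) (n N : ℕ) (s t : ℝ) : Prop :=
  ∃ ψ : Fin N → RSphere → RSphere, (∀ i, IsBranch f n B B s t (ψ i)) ∧
    Pairwise fun i j => Disjoint (ψ i '' B) (ψ j '' B)

namespace HasSystem

variable {f : RSphere → RSphere} {B : Set RSphere} {n n' N N' : ℕ} {s s' t t' : ℝ}

lemma mono (h : HasSystem f B n N s t) (hN : N' ≤ N) (hs : s' ≤ s) (ht : t ≤ t') :
    HasSystem f B n N' s' t' := by
  obtain ⟨ψ, h1, h2⟩ := h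
  exact ⟨fun i => ψ (Fin.castLE hN i), fun i => (h1 _).mono Subset.rfl Subset.rfl hs ht,
    fun i j hij => h2 fun e => hij (Fin.castLE_injective hN e)⟩

lemma comp (h : HasSystem f B n N s t) (h' : HasSystem f B n' N' s' t') :
    HasSystem f B (n + n') (N * N') (s + s') (t + t') := by
  obtain ⟨ψ, h1, h2⟩ := h
  obtain ⟨φ, h3, h4⟩ := h'
  refine ⟨fun i => φ (finProdFinEquiv.symm i).2 ∘ ψ (finProdFinEquiv.symm i).1,
    fun i => (h3 _).comp (h1 _), fun i j hij => ?_⟩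
  have hne := (finProdFinEquiv.symm.injective.ne hij)
  beta_reduce
  generalize finProdFinEquiv.symm i = p at *
  generalize finProdFinEquiv.symm j = q at *
  by_cases hpq : p.2 = q.2
  · simp only [image_comp, hpq]
    exact (h2 fun e => hne (Prod.ext e hpq)).image (h3 q.2).injOn (h1 _).mapsTo.image_subset
      (h1 _).mapsTo.image_subset
  · simp only [image_comp]
    exact (h4 hpq).mono (image_mono (h1 _).mapsTo.image_subset)
      (image_mono (h1 _).mapsTo.image_subset)

lemma zero : HasSystem f B 0 1 0 0 := by
  refine ⟨fun _ => id, fun _ => ⟨fun _ h => h, fun _ _ => rfl, ?_, ?_⟩,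
    fun i j hij => (hij (Subsingleton.elim _ _)).elim⟩
  all_goals intro u _ v _; simp

lemma pow (h : HasSystem f B n N s t) (k : ℕ) : HasSystem f B (k * n) (N ^ k) (k * s) (k * t) := by
  induction k with
  | zero => simpa using zero
  | succ k ih =>
    have := ih.comp h
    rw [← pow_succ] at this
    convert this using 1 <;> push_cast <;> ring

end HasSystem

section LimitSet

variable {f : RSphere → RSphere} {B : Set RSphere} {n N : ℕ} {s t : ℝ}
  {ψ : Fin N → RSphere → RSphere}

/-- The composition `ψ (ω 0) ∘ ⋯ ∘ ψ (ω (k - 1))`. -/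
def word (ψ : Fin N → RSphere → RSphere) (ω : ℕ → Fin N) : ℕ → RSphere → RSphere
  | 0 => id
  | k + 1 => word ψ ω k ∘ ψ (ω k)

lemma isBranch_word (h : ∀ i, IsBranch f n B B s t (ψ i)) (ω : ℕ → Fin N) (k : ℕ) :
    IsBranch f (k * n) B B (k * s) (k * t) (word ψ ω k) := by
  induction k with
  | zero =>
    refine ⟨fun _ h => h, fun _ _ => by simp [word], ?_, ?_⟩
    all_goals intro u _ v _; simp [word]
  | succ k ih =>
    have := ih.comp (h (ω k))
    rw [word, add_one_mul, add_comm (k * n), Nat.cast_add_one, add_one_mul, add_one_mul,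
      add_comm (_ * s), add_comm (_ * t)]
    exact this

lemma word_congr {ω ω' : ℕ → Fin N} {k : ℕ} (h : ∀ i < k, ω i = ω' i) :
    word ψ ω k = word ψ ω' k := by
  induction k with
  | zero => rfl
  | succ k ih =>
    rw [word, word, ih fun i hi => h i (by omega), h k (by omega)]

lemma exists_coding (h : ∀ i, IsBranch f n B B s t (ψ i)) (hB : IsCompact B) (hne : B.Nonempty)
    (ω : ℕ → Fin N) : ∃ x, ∀ k, x ∈ word ψ ω k '' B := by
  have hcont : ∀ k, ContinuousOn (word ψ ω k) B := fun k => by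
    have hb := isBranch_word h ω k
    refine LipschitzOnWith.continuousOn (K := (Real.exp (-(k * s))).toNNReal) ?_
    exact LipschitzOnWith.of_dist_le_mul fun u hu v hv => by
      rw [Real.coe_toNNReal _ (Real.exp_pos _).le]; exact hb.dist_le u hu v hv
  have hc := IsCompact.nonempty_iInter_of_sequence_nonempty_isCompact_isClosed
    (fun k => word ψ ω k '' B) ?_ (fun k => hne.image _) (hB.image_of_continuousOn (hcont 0))
    fun k => (hB.image_of_continuousOn (hcont k)).isClosed
  · obtain ⟨x, hx⟩ := hc
    exact ⟨x, fun k => mem_iInter.1 hx k⟩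
  · intro k
    simp only [word, image_comp]
    exact image_mono (h (ω k)).mapsTo.image_subset

lemma exists_gap (h : ∀ i, IsBranch f n B B s t (ψ i)) (hB : IsCompact B)
    (hd : Pairwise fun i j => Disjoint (ψ i '' B) (ψ j '' B)) :
    ∃ η > 0, ∀ i j, i ≠ j → ∀ u ∈ B, ∀ v ∈ B, η ≤ dist (ψ i u) (ψ j v) := by
  have hcomp : ∀ i, IsCompact (ψ i '' B) := fun i => by
    refine hB.image_of_continuousOn
      (LipschitzOnWith.continuousOn (K := (Real.exp (-s)).toNNReal) ?_)
    exact LipschitzOnWith.of_dist_le_mul fun u hu v hv => by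
      rw [Real.coe_toNNReal _ (Real.exp_pos _).le]; exact (h i).dist_le u hu v hv
  have hij : ∀ p : Fin N × Fin N, ∃ η > 0, p.1 ≠ p.2 → ∀ u ∈ B, ∀ v ∈ B,
      η ≤ dist (ψ p.1 u) (ψ p.2 v) := by
    intro p
    by_cases hp : p.1 = p.2
    · exact ⟨1, one_pos, fun hne => (hne hp).elim⟩
    · obtain ⟨r, hr, H⟩ := Metric.exists_pos_forall_lt_edist (hcomp p.1) (hcomp p.2).isClosed
        (hd hp)
      refine ⟨r, NNReal.coe_pos.2 hr, fun _ u hu v hv => ?_⟩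
      have := (H _ (mem_image_of_mem _ hu) _ (mem_image_of_mem _ hv)).le
      rw [edist_nndist] at this
      exact_mod_cast this
  choose η hη H using hij
  obtain ⟨m, hm, hmle⟩ : ∃ m > 0, ∀ p, m ≤ η p := by
    rcases (Finset.univ : Finset (Fin N × Fin N)).eq_empty_or_nonempty with he | hne
    · exact ⟨1, one_pos, fun p => by simpa [he] using Finset.mem_univ p⟩
    · exact ⟨Finset.univ.inf' hne η, (Finset.lt_inf'_iff hne).2 fun i _ => hη i,
        fun p => Finset.inf'_le _ (Finset.mem_univ p)⟩
  exact ⟨m, hm, fun i j hne u hu v hv => (hmle (i, j)).trans (H (i, j) hne u hu v hv)⟩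

lemma ofReal_le_dimH_range {x : (ℕ → Fin N) → RSphere} (hN : 2 ≤ N) (ht : 0 < t)
    {η : ℝ} (hη : 0 < η) (hx : ∀ ω ω' : ℕ → Fin N, ∀ k, (∀ i < k, ω i = ω' i) → ω k ≠ ω' k →
      η * Real.exp (-(k * t)) ≤ dist (x ω) (x ω')) :
    ENNReal.ofReal (Real.log N / t) ≤ dimH (range x) := by
  have hN1 : (1 : ℝ) < N := by exact_mod_cast hN
  have hlog : 0 < Real.log N := Real.log_pos hN1
  have hfirst : ∀ ω ω' : ℕ → Fin N, ω ≠ ω' → ∃ k, (∀ i < k, ω i = ω' i) ∧ ω k ≠ ω' k := by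
    intro ω ω' hne
    have hk : ∃ k, ω k ≠ ω' k := Function.ne_iff.1 hne
    exact ⟨Nat.find hk, fun i hi => not_not.1 (Nat.find_min hk hi), Nat.find_spec hk⟩
  have hinj : Function.Injective x := by
    intro ω ω' he
    by_contra hne
    obtain ⟨k, h1, h2⟩ := hfirst ω ω' hne
    have := hx ω ω' k h1 h2
    rw [he, dist_self] at this
    exact absurd this (not_le.2 (by positivity))
  have hN0 : Nonempty (Fin N) := ⟨⟨0, by omega⟩⟩
  set g : RSphere → ℝ := fun y => Real.ofDigits (Function.invFun x y) with hg
  have hgx : ∀ ω, g (x ω) = Real.ofDigits ω := fun ω => by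
    rw [hg]; beta_reduce; rw [Function.leftInverse_invFun hinj ω]
  set r : ℝ≥0 := (Real.log N / t).toNNReal with hr
  have hr0 : (r : ℝ) = Real.log N / t := Real.coe_toNNReal _ (by positivity)
  have hH : HolderOnWith (η⁻¹ ^ (r : ℝ)).toNNReal r g (range x) := by
    rintro _ ⟨ω, rfl⟩ _ ⟨ω', rfl⟩
    by_cases hne : ω = ω'
    · subst hne; simp
    obtain ⟨k, h1, h2⟩ := hfirst ω ω' hne
    have h3 := Real.abs_ofDigits_sub_ofDigits_le h1
    have h4 := hx ω ω' k h1 h2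
    rw [hgx, hgx, edist_dist, edist_dist, Real.dist_eq,
      ENNReal.ofReal_rpow_of_nonneg dist_nonneg r.coe_nonneg]
    change _ ≤ ENNReal.ofReal _ * _
    rw [← ENNReal.ofReal_mul (by positivity), ← Real.mul_rpow (by positivity) dist_nonneg]
    refine ENNReal.ofReal_le_ofReal (h3.trans ?_)
    have h5 : Real.exp (-(k * t)) ≤ η⁻¹ * dist (x ω) (x ω') := by
      rw [le_inv_mul_iff₀ hη]; exact h4
    refine le_trans (le_of_eq ?_) (Real.rpow_le_rpow (Real.exp_pos _).le h5 r.coe_nonneg)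
    rw [← Real.exp_mul, hr0, show -(k * t) * (Real.log N / t) = -(k * Real.log N) by field_simp,
      Real.exp_neg, Real.exp_nat_mul, Real.exp_log (by linarith)]
  have hsurj : Icc (0 : ℝ) 1 ⊆ g '' range x := by
    intro y hy
    obtain ⟨ω, -, hω⟩ := Real.ofDigits_SurjOn (b := N) hN hy
    exact ⟨x ω, mem_range_self ω, (hgx ω).trans hω⟩
  have hr1 : 0 < r := by rw [← NNReal.coe_pos, hr0]; positivity
  have h1 := (dimH_mono hsurj).trans (hH.dimH_image_le hr1)
  rw [Real.dimH_of_nonempty_interior (by rw [interior_Icc]; exact ⟨1/2, by norm_num⟩)] at h1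
  have h2 : (1 : ℝ≥0∞) ≤ dimH (range x) / r := by simpa using h1
  rw [ENNReal.le_div_iff_mul_le (Or.inl (by exact_mod_cast hr1.ne')) (Or.inl ENNReal.coe_ne_top),
    one_mul] at h2
  exact h2

lemma IsBranch.sphDeriv_mem (hf : IsHolMap f) {G : RSphere → RSphere} (h : IsBranch f n B B s t G)
    (hB : Preperfect B) {u : RSphere} (hu : u ∈ B) :
    sphDeriv f^[n] (G u) ∈ Icc (Real.exp s) (Real.exp t) := by
  have hacc : (𝓝[≠] u ⊓ 𝓟 B).NeBot := hB u hu
  have hG : Tendsto G (𝓝[≠] u ⊓ 𝓟 B) (𝓝[≠] (G u)) := by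
    refine tendsto_nhdsWithin_iff.2 ⟨?_, ?_⟩
    · have hl : ContinuousOn G B :=
        LipschitzOnWith.continuousOn (K := (Real.exp (-s)).toNNReal)
          (LipschitzOnWith.of_dist_le_mul fun u hu v hv => by
            rw [Real.coe_toNNReal _ (Real.exp_pos _).le]; exact h.dist_le u hu v hv)
      exact (hl u hu).mono_left (inf_le_inf_right _ nhdsWithin_le_nhds)
    · filter_upwards [mem_inf_of_left self_mem_nhdsWithin, mem_inf_of_right (mem_principal_self B)]
        with v hv hvB e
      exact hv (h.injOn hvB hu e)
  have hT := (hf.hasScaling_iterate' n (G u)).tendsto.comp hG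
  have hev : ∀ᶠ v in 𝓝[≠] u ⊓ 𝓟 B, dist (f^[n] (G v)) (f^[n] (G u)) / dist (G v) (G u) ∈
      Icc (Real.exp s) (Real.exp t) := by
    filter_upwards [mem_inf_of_left self_mem_nhdsWithin, mem_inf_of_right (mem_principal_self B)]
      with v hv hvB
    have h0 : 0 < dist (G v) (G u) := dist_pos.2 fun e => hv (h.injOn hvB hu e)
    have h1 := h.le_dist v hvB u hu
    have h2 := h.dist_le v hvB u hu
    rw [h.right_inv v hvB, h.right_inv u hu]
    rw [Real.exp_neg] at h1 h2
    rw [mem_Icc, le_div_iff₀ h0, div_le_iff₀ h0]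
    rw [inv_mul_le_iff₀ (Real.exp_pos _)] at h1
    rw [le_inv_mul_iff₀ (Real.exp_pos _)] at h2
    exact ⟨h2, h1⟩
  exact ⟨ge_of_tendsto hT (hev.mono fun _ h => h.1), le_of_tendsto hT (hev.mono fun _ h => h.2)⟩

lemma mem_juliaSet_of_word (hb : ∀ i, IsBranch f n B B s t (ψ i)) (hs : 0 < s)
    (hB : IsCompact B) (hB' : B.Nontrivial) {ω : ℕ → Fin N} {x : RSphere}
    (hx : ∀ k, x ∈ word ψ ω k '' B) : x ∈ juliaSet f := by
  rintro ⟨U, hU, hxU, heq⟩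
  obtain ⟨v, hv, w, hw, hvw⟩ := hB'
  have hd : 0 < dist v w / 2 := half_pos (dist_pos.2 hvw)
  have h1 := heq x hxU _ (Metric.dist_mem_uniformity hd)
  rw [hU.nhdsWithin_eq hxU] at h1
  obtain ⟨δ, hδ, h1⟩ := Metric.eventually_nhds_iff.1 h1
  have hlim : Tendsto (fun k : ℕ => Real.exp (-(k * s)) * diam B) atTop (𝓝 0) := by
    rw [← zero_mul (diam B)]
    refine Tendsto.mul_const _ (Real.tendsto_exp_neg_atTop_nhds_zero.comp ?_)
    exact tendsto_natCast_atTop_atTop.atTop_mul_const hs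
  obtain ⟨k, hk⟩ := (hlim.eventually (gt_mem_nhds hδ)).exists
  obtain ⟨u, hu, hux⟩ := hx k
  have hw' := isBranch_word hb ω k
  have key : ∀ y ∈ B, dist (f^[k * n] x) y < dist v w / 2 := by
    intro y hy
    have h2 : dist (word ψ ω k y) x < δ := by
      rw [← hux]
      refine ((hw'.dist_le y hy u hu).trans ?_).trans_lt hk
      exact mul_le_mul_of_nonneg_left (dist_le_diam_of_mem hB.isBounded hy hu)
        (Real.exp_pos _).le
    have h3 : dist (f^[k * n] x) (f^[k * n] (word ψ ω k y)) < dist v w / 2 := h1 h2 (k * n)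
    rwa [hw'.right_inv y hy] at h3
  have := dist_triangle_left v w (f^[k * n] x)
  linarith [key v hv, key w hw]

/-- The limit set of a system of inverse branches gives a lower bound for the dimension of
level sets of Lyapunov exponents. -/
lemma HasSystem.ofReal_le_dimH_levelHat (hf : IsHolMap f) (hB : IsCompact B) (hB' : Preperfect B)
    (hne : B.Nonempty) (h : HasSystem f B n N s t) (hn : 1 ≤ n) (hN : 2 ≤ N) (hs : 0 < s)
    (ht : 0 < t) {α β : ℝ} (hα : α * n ≤ s) (hβ : t ≤ β * n) :
    ENNReal.ofReal (Real.log N / t) ≤ dimH (levelHat f α β) := by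
  obtain ⟨ψ, hψ, hdisj⟩ := h
  obtain ⟨η, hη, hgap⟩ := exists_gap hψ hB hdisj
  choose x hx using fun ω => exists_coding hψ hB hne ω
  have hn0 : (0 : ℝ) < n := by exact_mod_cast hn
  refine (ofReal_le_dimH_range (x := x) hN ht hη ?_).trans (dimH_mono ?_)
  · intro ω ω' k hk hkne
    obtain ⟨u, hu, hux⟩ := hx ω (k + 1)
    obtain ⟨v, hv, hvx⟩ := hx ω' (k + 1)
    rw [← hux, ← hvx, word, word, ← word_congr hk, mul_comm]
    refine le_trans ?_ ((isBranch_word hψ ω k).le_dist _ ((hψ _).mapsTo hu) _ ((hψ _).mapsTo hv))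
    exact mul_le_mul_of_nonneg_left (hgap _ _ hkne u hu v hv) (Real.exp_pos _).le
  · rintro _ ⟨ω, rfl⟩
    have hBn : B.Nontrivial := by
      obtain ⟨b, hb⟩ := hne
      obtain ⟨y, hy, hyb⟩ := preperfect_iff_nhds.1 hB' b hb univ univ_mem
      exact ⟨y, hy.2, b, hb, hyb⟩
    have hder : ∀ k : ℕ, 1 ≤ k →
        Real.log (sphDeriv f^[k * n] (x ω)) / ((k * n : ℕ) : ℝ) ∈ Icc (s / n) (t / n) := by
      intro k hk
      obtain ⟨u, hu, hux⟩ := hx ω k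
      have h1 := (isBranch_word hψ ω k).sphDeriv_mem hf hB' hu
      rw [hux] at h1
      have hk0 : (0 : ℝ) < k := by exact_mod_cast hk
      have h0 : 0 < sphDeriv f^[k * n] (x ω) := (Real.exp_pos _).trans_le h1.1
      have h2 := (Real.le_log_iff_exp_le h0).2 h1.1
      have h3 := (Real.log_le_iff_le_exp h0).2 h1.2
      push_cast
      rw [mem_Icc, div_le_div_iff₀ hn0 (by positivity), div_le_div_iff₀ (by positivity) hn0]
      exact ⟨by nlinarith, by nlinarith⟩
    have hup : ((s / n : ℝ) : EReal) ≤ lyapUpper f (x ω) := by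
      refine le_limsup_of_frequently_le' ?_
      rw [frequently_atTop]
      refine fun a => ⟨(a + 1) * n, by nlinarith, ?_⟩
      exact EReal.coe_le_coe_iff.2 (hder (a + 1) (by omega)).1
    have hlow : lyapLower f (x ω) ≤ ((t / n : ℝ) : EReal) := by
      refine liminf_le_of_frequently_le' ?_
      rw [frequently_atTop]
      refine fun a => ⟨(a + 1) * n, by nlinarith, ?_⟩
      exact EReal.coe_le_coe_iff.2 (hder (a + 1) (by omega)).2
    refine ⟨mem_juliaSet_of_word hψ hs hB hBn (hx ω), hlow.trans ?_, le_trans ?_ hup, ?_⟩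
    · exact EReal.coe_le_coe_iff.2 ((div_le_iff₀ hn0).2 hβ)
    · exact EReal.coe_le_coe_iff.2 ((le_div_iff₀ hn0).2 hα)
    · exact lt_of_lt_of_le (EReal.coe_pos.2 (by positivity)) hup

end LimitSet

namespace IsHolMap

variable {f : RSphere → RSphere} {L₀ : Set RSphere}

/-- A fixed neighbourhood of a point of a hyperbolic set can be pulled back near every point of any
other hyperbolic set. -/
lemma exists_entry (hf : IsHolMap f)
    (hexc : ¬ IsExceptional f ∨ maxExceptional f ∩ juliaSet f = ∅) (hL₀ : Hyperbolic f L₀)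
    {a₀ : RSphere} (ha₀ : a₀ ∈ L₀) :
    ∃ ρ > 0, ∀ L, Hyperbolic f L → ∀ r > 0, ∃ N : ℕ, ∃ C : ℝ, ∀ z ∈ L, ∃ n ≤ N, ∃ G,
      IsBranch f n (closure (ball a₀ ρ)) (ball z r) (-C) C G := by
  obtain ⟨c, hc, l, hl, hexp⟩ := hL₀.2.2.2.2
  have hlog : 0 < Real.log l := Real.log_pos hl
  obtain ⟨r₀, hr₀, hsh⟩ := hf.exists_shadow_branch hL₀ (half_pos hlog) one_pos
  have hsub : closure (ball a₀ (r₀ / 2)) ⊆ ball a₀ r₀ :=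
    closure_ball_subset_closedBall.trans (closedBall_subset_ball (half_lt_self hr₀))
  refine ⟨r₀ / 2, half_pos hr₀, fun L hL r hr => ?_⟩
  obtain ⟨κ, hκ, N, C, hbr⟩ := hf.exists_bridge hexc hL₀ hL hr
  have hlim : Tendsto (fun k : ℕ => Real.exp (-(Real.log c + k * (Real.log l / 2))) * r₀) atTop
      (𝓝 0) := by
    rw [← zero_mul r₀]
    refine Tendsto.mul_const _ (Real.tendsto_exp_neg_atTop_nhds_zero.comp ?_)
    exact tendsto_atTop_add_const_left _ _
      (tendsto_natCast_atTop_atTop.atTop_mul_const (half_pos hlog))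
  obtain ⟨k, hk, hk1⟩ := ((hlim.eventually (gt_mem_nhds hκ)).and (eventually_ge_atTop 1)).exists
  obtain ⟨b, hb, hba⟩ := hL₀.exists_iterate_eq k ha₀
  obtain ⟨G, hG, -, hG0⟩ := hsh k hk1 b hb
  rw [hba] at hG hG0
  set s := Real.log (sphDeriv f^[k] b) - Real.log l / 2 * k
  set t := Real.log (sphDeriv f^[k] b) + Real.log l / 2 * k
  have hs : Real.log c + k * (Real.log l / 2) ≤ s := by
    have h1 := Real.log_le_log (by positivity) (hexp b hb k hk1)
    rw [Real.log_mul hc.ne' (by positivity), Real.log_pow] at h1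
    change _ ≤ Real.log (sphDeriv f^[k] b) - Real.log l / 2 * k
    linarith
  have hG' : IsBranch f k (closure (ball a₀ (r₀ / 2))) (ball b κ) s t G := by
    refine ⟨fun u hu => ?_, fun u hu => hG.right_inv u (hsub hu),
      fun u hu v hv => hG.le_dist u (hsub hu) v (hsub hv),
      fun u hu v hv => hG.dist_le u (hsub hu) v (hsub hv)⟩
    have h1 := hG.dist_le u (hsub hu) a₀ (mem_ball_self hr₀)
    rw [hG0] at h1
    refine mem_ball.2 ((h1.trans ?_).trans_lt hk)
    exact mul_le_mul (Real.exp_le_exp.2 (by linarith)) (mem_ball.1 (hsub hu)).le dist_nonneg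
      (Real.exp_pos _).le
  refine ⟨k + N, |s| + |t| + C, fun z hz => ?_⟩
  obtain ⟨n, hn, H, hH⟩ := hbr b hb z hz
  refine ⟨k + n, by omega, _, (hH.comp hG').mono Subset.rfl Subset.rfl ?_ ?_⟩
  · linarith [neg_abs_le s, abs_nonneg t]
  · linarith [le_abs_self t, abs_nonneg s]

/-- Separated sets of orbits in hyperbolic sets give rise to systems of inverse branches on a
common domain. -/
lemma exists_hasSystem (hf : IsHolMap f)
    (hexc : ¬ IsExceptional f ∨ maxExceptional f ∩ juliaSet f = ∅) (hL₀ : Hyperbolic f L₀)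
    {a₀ : RSphere} (ha₀ : a₀ ∈ L₀) :
    ∃ ρ > 0, ∀ L, Hyperbolic f L → ∀ ε > 0, ∀ ε₀ > 0, ∃ K : ℕ, ∃ C : ℝ, ∀ m ≥ 1, ∀ E s t,
      IsSepSet f L m ε₀ E → (∀ x ∈ E, Real.log (sphDeriv f^[m] x) ∈ Icc s t) →
      ∃ n, m ≤ n ∧ n ≤ m + K ∧ ∃ N, E.card ≤ N * K ∧
        HasSystem f (closure (ball a₀ ρ)) n N (s - ε * m - C) (t + ε * m + C) := by
  obtain ⟨ρ, hρ, hentry⟩ := hf.exists_entry hexc hL₀ ha₀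
  refine ⟨ρ, hρ, fun L hL ε hε ε₀ hε₀ => ?_⟩
  obtain ⟨κ, hκ, N₂, C₂, hexit⟩ := hf.exists_bridge hexc hL hL₀ hρ
  obtain ⟨r, hr, hsh⟩ := hf.exists_shadow_branch hL hε (lt_min hκ (half_pos hε₀))
  obtain ⟨N₁, C₁, hent⟩ := hentry L hL r hr
  refine ⟨(N₁ + 1) * (N₂ + 1), C₁ + C₂, fun m hm E s t hE hst => ?_⟩
  have hchain : ∀ x ∈ L, ∃ p ∈ Finset.range (N₁ + 1) ×ˢ Finset.range (N₂ + 1), ∃ ψ,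
      IsBranch f (p.1 + m + p.2) (closure (ball a₀ ρ)) (closure (ball a₀ ρ))
        (Real.log (sphDeriv f^[m] x) - ε * m - (C₁ + C₂))
        (Real.log (sphDeriv f^[m] x) + ε * m + (C₁ + C₂)) ψ ∧
      ∀ u ∈ closure (ball a₀ ρ), ∀ i < m, dist (f^[i] (f^[p.2] (ψ u))) (f^[i] x) < ε₀ / 2 := by
    intro x hx
    obtain ⟨n₁, hn₁, G₁, hG₁⟩ := hent _ (hL.iterate_mem hx m)
    obtain ⟨G, hG, hGs, -⟩ := hsh m hm x hx
    obtain ⟨n₂, hn₂, G₂, hG₂⟩ := hexit x hx a₀ ha₀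
    have hG₂' := hG₂.mono (ball_subset_ball (min_le_left κ (ε₀ / 2)))
      (subset_closure (s := ball a₀ ρ)) le_rfl le_rfl
    refine ⟨(n₁, n₂), ?_, _, (hG₂'.comp (hG.comp hG₁)).mono Subset.rfl Subset.rfl ?_ ?_, ?_⟩
    · simp only [Finset.mem_product, Finset.mem_range]; omega
    · linarith
    · linarith
    · intro u hu i hi
      have h1 := hGs _ (hG₁.mapsTo hu) i hi
      have h2 := hG₂'.right_inv _ (hG.mapsTo (hG₁.mapsTo hu))
      simp only [Function.comp_apply] at h2 ⊢
      rw [h2]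
      exact (mem_ball.1 h1).trans_le (min_le_right _ _)
  choose! p hp ψ hψ hψs using hchain
  obtain ⟨q, hq, hmax⟩ := Finset.exists_max_image
    (Finset.range (N₁ + 1) ×ˢ Finset.range (N₂ + 1)) (fun b => (E.filter fun x => p x = b).card)
    ⟨(0, 0), by simp⟩
  have hcard := Finset.card_le_mul_card_image_of_maps_to (fun x hx => hp x (hE.1 hx)) _ hmax
  rw [Finset.card_product, Finset.card_range, Finset.card_range] at hcard
  set E' := E.filter fun x => p x = q with hE'
  have hmem : ∀ x ∈ E', x ∈ E ∧ p x = q := fun x hx => Finset.mem_filter.1 hx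
  simp only [Finset.mem_product, Finset.mem_range] at hq
  refine ⟨q.1 + m + q.2, by omega, by nlinarith, E'.card, hcard,
    fun i => ψ (E'.equivFin.symm i), fun i => ?_, fun i j hij => ?_⟩
  · obtain ⟨h1, h2⟩ := hmem _ (E'.equivFin.symm i).2
    have h3 := hψ _ (hE.1 h1)
    rw [h2] at h3
    have h4 := hst _ h1
    exact h3.mono Subset.rfl Subset.rfl (by linarith [h4.1]) (by linarith [h4.2])
  · obtain ⟨h1, h2⟩ := hmem _ (E'.equivFin.symm i).2
    obtain ⟨h3, h4⟩ := hmem _ (E'.equivFin.symm j).2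
    have hne : (E'.equivFin.symm i : RSphere) ≠ E'.equivFin.symm j := fun e =>
      hij (E'.equivFin.symm.injective (Subtype.ext e))
    obtain ⟨k, hk, hkd⟩ := hE.2 _ h1 _ h3 hne
    refine Set.disjoint_left.2 ?_
    rintro _ ⟨u, hu, rfl⟩ ⟨v, hv, hvu⟩
    have h5 := hψs _ (hE.1 h1) u hu k hk
    have h6 := hψs _ (hE.1 h3) v hv k hk
    beta_reduce at hvu
    rw [h2] at h5
    rw [h4, hvu] at h6
    linarith [dist_triangle_left (f^[k] (E'.equivFin.symm i)) (f^[k] (E'.equivFin.symm j))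
      (f^[k] (f^[q.2] (ψ (E'.equivFin.symm i) u)))]

end IsHolMap

/-- Every separated set of orbits in a hyperbolic set gives rise to a system of inverse branches
on `B` of comparable size. -/
def IsHub (f : RSphere → RSphere) (B : Set RSphere) : Prop :=
  ∀ L, Hyperbolic f L → ∀ ε > 0, ∀ ε₀ > 0, ∃ K : ℕ, ∃ C : ℝ, ∀ m ≥ 1, ∀ E s t,
    IsSepSet f L m ε₀ E → (∀ x ∈ E, Real.log (sphDeriv f^[m] x) ∈ Icc s t) →
    ∃ n, m ≤ n ∧ n ≤ m + K ∧ ∃ N, E.card ≤ N * K ∧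
      HasSystem f B n N (s - ε * m - C) (t + ε * m + C)

/-- Pairs of an entropy and a Lyapunov exponent approximated by systems of inverse branches. -/
def rates (f : RSphere → RSphere) (B : Set RSphere) : Set (ℝ × ℝ) :=
  {p | ∀ ε > 0, ∃ n ≥ 1, ∃ N ≥ 1, ∃ s t, HasSystem f B n N s t ∧ n * (p.1 - ε) ≤ Real.log N ∧
    n * (p.2 - ε) ≤ s ∧ t ≤ n * (p.2 + ε)}

section Rates

variable {f : RSphere → RSphere} {B : Set RSphere}

lemma isClosed_rates : IsClosed (rates f B) := by
  refine isClosed_of_closure_subset fun p hp ε hε => ?_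
  obtain ⟨q, hq, hpq⟩ := Metric.mem_closure_iff.1 hp (ε / 2) (half_pos hε)
  rw [Prod.dist_eq, max_lt_iff, Real.dist_eq, Real.dist_eq, abs_lt, abs_lt] at hpq
  obtain ⟨n, hn, N, hN, s, t, h, h1, h2, h3⟩ := hq (ε / 2) (half_pos hε)
  have hn0 : (0 : ℝ) < n := by exact_mod_cast hn
  refine ⟨n, hn, N, hN, s, t, h, le_trans ?_ h1, le_trans ?_ h2, h3.trans ?_⟩ <;>
    exact mul_le_mul_of_nonneg_left (by linarith [hpq.1.1, hpq.1.2, hpq.2.1, hpq.2.2]) hn0.le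

lemma rates_mono {h h' χ : ℝ} (hp : (h, χ) ∈ rates f B) (hh : h' ≤ h) : (h', χ) ∈ rates f B := by
  intro ε hε
  obtain ⟨n, hn, N, hN, s, t, h, h1, h2, h3⟩ := hp ε hε
  refine ⟨n, hn, N, hN, s, t, h, le_trans ?_ h1, h2, h3⟩
  exact mul_le_mul_of_nonneg_left (by simpa using hh) (by positivity)

lemma convex_rates : Convex ℝ (rates f B) := by
  rintro ⟨h₁, χ₁⟩ hp₁ ⟨h₂, χ₂⟩ hp₂ a b ha hb hab ε hε
  obtain ⟨n₁, hn₁, N₁, hN₁, s₁, t₁, S₁, hN1, hs1, ht1⟩ := hp₁ (ε / 2) (half_pos hε)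
  obtain ⟨n₂, hn₂, N₂, hN₂, s₂, t₂, S₂, hN2, hs2, ht2⟩ := hp₂ (ε / 2) (half_pos hε)
  obtain ⟨K, hK⟩ := exists_nat_gt ((|h₁ - h₂| + |χ₁ - χ₂|) / (ε / 2))
  rw [div_lt_iff₀ (half_pos hε)] at hK
  have hK0 : (0 : ℝ) < K := by
    have : 0 < (K : ℝ) * (ε / 2) := lt_of_le_of_lt (by positivity) hK
    exact pos_of_mul_pos_left this (half_pos hε).le
  have hfl : (⌊a * K⌋₊ : ℝ) ≤ a * K := Nat.floor_le (by positivity)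
  have hfl' : a * K < ⌊a * K⌋₊ + 1 := Nat.lt_floor_add_one _
  have hle : ⌊a * K⌋₊ ≤ K := by
    have : a * K ≤ K := by nlinarith
    exact_mod_cast hfl.trans this
  obtain ⟨k', hk'⟩ := Nat.exists_eq_add_of_le hle
  set k := ⌊a * K⌋₊
  have hkr : (K : ℝ) = k + k' := by exact_mod_cast hk'
  have hn₁0 : (0 : ℝ) < n₁ := by exact_mod_cast hn₁
  have hn₂0 : (0 : ℝ) < n₂ := by exact_mod_cast hn₂
  have S := (S₁.pow (k * n₂)).comp (S₂.pow (k' * n₁))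
  have hb' : b = 1 - a := by linarith
  have key : ∀ u v : ℝ, |u - v| ≤ |h₁ - h₂| + |χ₁ - χ₂| →
      K * (a * u + b * v - ε) ≤ k * (u - ε / 2) + k' * (v - ε / 2) ∧
      k * (u + ε / 2) + k' * (v + ε / 2) ≤ K * (a * u + b * v + ε) := by
    intro u v huv
    have e : k * u + k' * v = K * (a * u + b * v) + (k - a * K) * (u - v) := by
      rw [hb']; linear_combination (-v) * hkr
    have hb1 : |(k - a * K) * (u - v)| ≤ |u - v| := by
      rw [abs_mul]
      refine mul_le_of_le_one_left (abs_nonneg _) (abs_le.2 ⟨by linarith, by linarith⟩)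
    have := abs_le.1 hb1
    constructor <;> nlinarith
  have kh := key h₁ h₂ (by linarith [abs_nonneg (χ₁ - χ₂)])
  have kχ := key χ₁ χ₂ (by linarith [abs_nonneg (h₁ - h₂)])
  have hk0 : (0 : ℝ) ≤ k := Nat.cast_nonneg _
  have hk0' : (0 : ℝ) ≤ k' := Nat.cast_nonneg _
  have hmul : ∀ x y : ℝ, x ≤ y → (n₁ * n₂ : ℝ) * x ≤ n₁ * n₂ * y := fun x y hxy =>
    mul_le_mul_of_nonneg_left hxy (by positivity)
  have hc : ((k * n₂ * n₁ + k' * n₁ * n₂ : ℕ) : ℝ) = n₁ * n₂ * K := by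
    rw [hkr]; push_cast; ring
  refine ⟨_, ?_, _, ?_, _, _, S, ?_, ?_, ?_⟩
  · have : 0 < (k * n₂ * n₁ + k' * n₁ * n₂ : ℕ) := by
      rw [← Nat.cast_pos (α := ℝ), hc]; positivity
    exact this
  · exact Nat.mul_pos (Nat.pow_pos hN₁) (Nat.pow_pos hN₂)
  · have hN₁0 : (N₁ : ℝ) ≠ 0 := by positivity
    have hN₂0 : (N₂ : ℝ) ≠ 0 := by positivity
    rw [hc]
    push_cast
    rw [Real.log_mul (by positivity) (by positivity), Real.log_pow, Real.log_pow]
    have e1 := mul_le_mul_of_nonneg_left hN1 (mul_nonneg hk0 hn₂0.le)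
    have e2 := mul_le_mul_of_nonneg_left hN2 (mul_nonneg hk0' hn₁0.le)
    have e3 := hmul _ _ kh.1
    push_cast
    simp only [Prod.fst_add, Prod.smul_fst, smul_eq_mul]
    linarith
  · rw [hc]
    have e1 := mul_le_mul_of_nonneg_left hs1 (mul_nonneg hk0 hn₂0.le)
    have e2 := mul_le_mul_of_nonneg_left hs2 (mul_nonneg hk0' hn₁0.le)
    have e3 := hmul _ _ kχ.1
    push_cast
    simp only [Prod.snd_add, Prod.smul_snd, smul_eq_mul]
    linarith
  · rw [hc]
    have e1 := mul_le_mul_of_nonneg_left ht1 (mul_nonneg hk0 hn₂0.le)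
    have e2 := mul_le_mul_of_nonneg_left ht2 (mul_nonneg hk0' hn₁0.le)
    have e3 := hmul _ _ kχ.2
    push_cast
    simp only [Prod.snd_add, Prod.smul_snd, smul_eq_mul]
    linarith

lemma mem_rates_of_frequently (hB : IsHub f B) {L : Set RSphere} (hL : Hyperbolic f L)
    {ε₀ : ℝ} (hε₀ : 0 < ε₀) {h χ : ℝ}
    (H : ∀ ε > 0, ∃ᶠ m : ℕ in atTop, ∃ E, IsSepSet f L m ε₀ E ∧ E.Nonempty ∧
      m * (h - ε) ≤ Real.log E.card ∧
      ∀ x ∈ E, Real.log (sphDeriv f^[m] x) ∈ Icc (m * (χ - ε)) (m * (χ + ε))) :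
    (h, χ) ∈ rates f B := by
  intro ε hε
  obtain ⟨K, C, hKC⟩ := hB L hL (ε / 4) (by positivity) ε₀ hε₀
  obtain ⟨M, hM⟩ := exists_nat_ge
    ((Real.log K + |C| + K * (|h - ε| + |χ - ε| + |χ + ε|)) / (ε / 2))
  rw [div_le_iff₀ (half_pos hε)] at hM
  obtain ⟨m, ⟨E, hE, hne, hcard, hder⟩, hm⟩ :=
    ((H (ε / 4) (by positivity)).and_eventually (eventually_ge_atTop (max M 1))).exists
  have hm1 : 1 ≤ m := (le_max_right _ _).trans hm
  have hmM : (M : ℝ) ≤ m := by exact_mod_cast (le_max_left _ _).trans hm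
  obtain ⟨n, hmn, hnm, N, hN, hS⟩ := hKC m hm1 E _ _ hE hder
  have hNK : 0 < N * K := (Finset.card_pos.2 hne).trans_le hN
  have hN1 : 0 < N := pos_of_mul_pos_left hNK (Nat.zero_le _)
  have hK1 : 0 < K := pos_of_mul_pos_right hNK (Nat.zero_le _)
  have hn1 : (n : ℝ) - m ≤ K := by
    have : (n : ℝ) ≤ m + K := by exact_mod_cast hnm
    linarith
  have hn0 : (0 : ℝ) ≤ n - m := by
    have : (m : ℝ) ≤ n := by exact_mod_cast hmn
    linarith
  have hlogK : 0 ≤ Real.log K := Real.log_natCast_nonneg K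
  have hb : ∀ z : ℝ, (n - m) * z ≤ K * |z| := fun z =>
    (mul_le_mul_of_nonneg_left (le_abs_self z) hn0).trans
      (mul_le_mul_of_nonneg_right hn1 (abs_nonneg _))
  have hKn : (0 : ℝ) ≤ K := Nat.cast_nonneg _
  have hMm := mul_le_mul_of_nonneg_right hmM (half_pos hε).le
  have p1 := mul_nonneg hKn (abs_nonneg (h - ε))
  have p2 := mul_nonneg hKn (abs_nonneg (χ - ε))
  have p3 := mul_nonneg hKn (abs_nonneg (χ + ε))
  have p4 := le_abs_self C
  have p5 := abs_nonneg C
  have p6 : 0 ≤ (m : ℝ) * ε := by positivity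
  refine ⟨n, hm1.trans hmn, N, hN1, _, _, hS, ?_, ?_, ?_⟩
  · have h1 : Real.log E.card ≤ Real.log N + Real.log K := by
      rw [← Real.log_mul (by positivity) (by positivity)]
      exact Real.log_le_log (by exact_mod_cast Finset.card_pos.2 hne) (by exact_mod_cast hN)
    have h2 := hb (h - ε)
    simp only
    linarith
  · have h2 := hb (χ - ε)
    simp only
    linarith
  · have h2 := hb (-(χ + ε))
    rw [abs_neg] at h2
    simp only
    linarith

end Rates

lemma dimH_univ_lt_top : dimH (univ : Set RSphere) < ⊤ := by
  have hi : Isometry embed := fun x y => rfl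
  rw [← hi.dimH_image]
  refine lt_of_le_of_lt (dimH_mono (subset_univ _)) ?_
  rw [Real.dimH_univ_eq_finrank]
  exact ENNReal.natCast_lt_top _

section Bounds

variable {f : RSphere → RSphere} {B : Set RSphere} {n N : ℕ} {s t h χ X : ℝ}

lemma IsHolMap.exists_exp_lipschitz (hf : IsHolMap f) :
    ∃ X > 0, ∀ x y, dist (f x) (f y) ≤ Real.exp X * dist x y := by
  obtain ⟨K, hK, h⟩ := hf.exists_lipschitz
  refine ⟨Real.log (K + 1), Real.log_pos (by linarith), fun x y => (h x y).trans ?_⟩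
  rw [Real.exp_log (by linarith)]
  exact mul_le_mul_of_nonneg_right (by linarith) dist_nonneg

lemma dist_iterate_le (hX : ∀ x y, dist (f x) (f y) ≤ Real.exp X * dist x y) (n : ℕ)
    (x y : RSphere) : dist (f^[n] x) (f^[n] y) ≤ Real.exp (n * X) * dist x y := by
  induction n with
  | zero => simp
  | succ n ih =>
    rw [Function.iterate_succ_apply', Function.iterate_succ_apply']
    refine (hX _ _).trans ((mul_le_mul_of_nonneg_left ih (Real.exp_pos _).le).trans_eq ?_)
    rw [← mul_assoc, ← Real.exp_add]
    push_cast
    ring_nf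

lemma sphDeriv_iterate_le (hX : ∀ x y, dist (f x) (f y) ≤ Real.exp X * dist x y) (n : ℕ)
    (x : RSphere) : sphDeriv f^[n] x ≤ Real.exp (n * X) := by
  refine limsup_le_of_le ?_ (Eventually.of_forall fun y => ?_)
  · exact IsBoundedUnder.isCoboundedUnder_le
      (isBoundedUnder_of ⟨0, fun y => by positivity⟩)
  · exact div_le_of_le_mul₀ dist_nonneg (Real.exp_pos _).le (dist_iterate_le hX n y x)

lemma IsBranch.exp_mul_dist_le (hX : ∀ x y, dist (f x) (f y) ≤ Real.exp X * dist x y)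
    {G : RSphere → RSphere} (hG : IsBranch f n B B s t G) {u v : RSphere} (hu : u ∈ B)
    (hv : v ∈ B) : Real.exp (-(n * X)) * dist u v ≤ dist (G u) (G v) := by
  have := dist_iterate_le hX n (G u) (G v)
  rw [hG.right_inv u hu, hG.right_inv v hv] at this
  rw [Real.exp_neg, inv_mul_le_iff₀ (Real.exp_pos _)]
  exact this

lemma HasSystem.le_of_nontrivial (hX : ∀ x y, dist (f x) (f y) ≤ Real.exp X * dist x y)
    (hB : B.Nontrivial) (hS : HasSystem f B n N s t) (hN : 1 ≤ N) : s ≤ n * X := by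
  obtain ⟨ψ, hψ, -⟩ := hS
  obtain ⟨u, hu, v, hv, huv⟩ := hB
  have h1 := ((hψ ⟨0, hN⟩).exp_mul_dist_le hX hu hv).trans ((hψ ⟨0, hN⟩).dist_le u hu v hv)
  have := Real.exp_le_exp.1 (le_of_mul_le_mul_right h1 (dist_pos.2 huv))
  linarith

lemma HasSystem.nonneg_of_nontrivial (hB : B.Nontrivial) (hS : HasSystem f B n N s t)
    (hN : 1 ≤ N) : 0 ≤ t := by
  by_contra! ht
  obtain ⟨u, hu, v, hv, huv⟩ := hB
  have hd := dist_pos.2 huv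
  obtain ⟨k, hk⟩ := exists_nat_gt (diam (univ : Set RSphere) / dist u v / -t)
  rw [div_lt_iff₀ (by linarith), div_lt_iff₀ hd] at hk
  obtain ⟨ψ, hψ, -⟩ := hS.pow k
  have hNk : 0 < N ^ k := Nat.pow_pos hN
  have h1 := (hψ ⟨0, hNk⟩).le_dist u hu v hv
  have h2 := h1.trans (dist_le_diam_of_mem isCompact_univ.isBounded (mem_univ _) (mem_univ _))
  have h3 := mul_le_mul_of_nonneg_right (Real.add_one_le_exp (-(k * t))) hd.le
  linarith

lemma HasSystem.log_le (hX0 : 0 < X) (hX : ∀ x y, dist (f x) (f y) ≤ Real.exp X * dist x y)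
    (hB : IsCompact B) (hne : B.Nonempty) (hS : HasSystem f B n N s t) (hn : 1 ≤ n) :
    Real.log N ≤ n * X * (dimH (univ : Set RSphere)).toReal := by
  rcases lt_or_ge N 2 with hN | hN
  · have : Real.log N = 0 := by interval_cases N <;> simp
    rw [this]
    positivity
  have hn0 : (0 : ℝ) < n := by exact_mod_cast hn
  obtain ⟨ψ, hψ, hdisj⟩ := hS
  replace hψ : ∀ i, IsBranch f n B B s (n * X) (ψ i) := fun i =>
    ⟨(hψ i).mapsTo, (hψ i).right_inv, fun u hu v hv => (hψ i).exp_mul_dist_le hX hu hv,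
      (hψ i).dist_le⟩
  obtain ⟨η, hη, hgap⟩ := exists_gap hψ hB hdisj
  choose x hx using fun ω => exists_coding hψ hB hne ω
  have h1 : ENNReal.ofReal (Real.log N / (n * X)) ≤ dimH (univ : Set RSphere) := by
    refine (ofReal_le_dimH_range (x := x) (η := η) hN (by positivity) hη ?_).trans
      (dimH_mono (subset_univ _))
    intro ω ω' k hk hkne
    obtain ⟨u, hu, hux⟩ := hx ω (k + 1)
    obtain ⟨v, hv, hvx⟩ := hx ω' (k + 1)
    have hw := isBranch_word hψ ω k
    rw [← hux, ← hvx, word, word, ← word_congr hk, Function.comp, Function.comp, mul_comm]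
    exact (mul_le_mul_of_nonneg_left (hgap _ _ hkne u hu v hv) (Real.exp_pos _).le).trans
      (hw.le_dist _ ((hψ _).mapsTo hu) _ ((hψ _).mapsTo hv))
  have h2 := ENNReal.toReal_mono dimH_univ_lt_top.ne h1
  rw [ENNReal.toReal_ofReal (div_nonneg (Real.log_natCast_nonneg N) (by positivity)),
    div_le_iff₀ (by positivity)] at h2
  linarith

lemma snd_nonneg_of_mem_rates (hB : B.Nontrivial) (hp : (h, χ) ∈ rates f B) : 0 ≤ χ := by
  refine le_of_forall_pos_le_add fun ε hε => ?_
  obtain ⟨n, hn, N, hN, s, t, hS, h1, h2, h3⟩ := hp ε hε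
  have hn0 : (0 : ℝ) < n := by exact_mod_cast hn
  exact nonneg_of_mul_nonneg_right ((hS.nonneg_of_nontrivial hB hN).trans h3) hn0

lemma snd_le_of_mem_rates (hX : ∀ x y, dist (f x) (f y) ≤ Real.exp X * dist x y)
    (hB : B.Nontrivial) (hp : (h, χ) ∈ rates f B) : χ ≤ X := by
  refine le_of_forall_pos_le_add fun ε hε => ?_
  obtain ⟨n, hn, N, hN, s, t, hS, h1, h2, h3⟩ := hp ε hε
  have hn0 : (0 : ℝ) < n := by exact_mod_cast hn
  have := le_of_mul_le_mul_left (h2.trans (hS.le_of_nontrivial hX hB hN)) hn0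
  simp only at this
  linarith

lemma fst_le_of_mem_rates (hX0 : 0 < X)
    (hX : ∀ x y, dist (f x) (f y) ≤ Real.exp X * dist x y) (hB : IsCompact B)
    (hne : B.Nonempty) (hp : (h, χ) ∈ rates f B) :
    h ≤ X * (dimH (univ : Set RSphere)).toReal := by
  refine le_of_forall_pos_le_add fun ε hε => ?_
  obtain ⟨n, hn, N, hN, s, t, hS, h1, h2, h3⟩ := hp ε hε
  have hn0 : (0 : ℝ) < n := by exact_mod_cast hn
  have := h1.trans (hS.log_le hX0 hX hB hne hn)
  rw [mul_assoc] at this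
  have := le_of_mul_le_mul_left this hn0
  simp only at this
  linarith

end Bounds

section Pressure

variable {f : RSphere → RSphere} {B L : Set RSphere} {φ : RSphere → ℝ} {X M b d : ℝ}

lemma limsup_eq_zero_of_not_isBoundedUnder {u : ℕ → ℝ}
    (hu : ¬ IsBoundedUnder (· ≤ ·) atTop u) : limsup u atTop = 0 := by
  have : {a | ∀ᶠ n in atTop, u n ≤ a} = ∅ := eq_empty_of_forall_notMem fun a ha => hu ⟨a, ha⟩
  rw [limsup_eq, this, Real.sInf_empty]

lemma isSepSet_singleton {x : RSphere} (hx : x ∈ L) (m : ℕ) (ε : ℝ) : IsSepSet f L m ε {x} := by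
  refine ⟨by simpa using hx, fun y hy z hz hne => (hne ?_).elim⟩
  rw [Finset.mem_singleton.1 hy, Finset.mem_singleton.1 hz]

lemma neg_le_log_sum_div (hL : L.Nonempty) (hM : 0 ≤ M)
    (hφ : ∀ x ∈ L, ∀ m : ℕ, -(m * M) ≤ birkhoff f φ m x) (ε : ℝ) (m : ℕ) :
    -M ≤ Real.log (⨆ E : {E : Finset RSphere // IsSepSet f L m ε E},
      ∑ x ∈ E.1, Real.exp (birkhoff f φ m x)) / m := by
  obtain ⟨x, hx⟩ := hL
  rcases m.eq_zero_or_pos with rfl | hm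
  · simpa using hM
  have hm0 : (0 : ℝ) < m := by exact_mod_cast hm
  rw [le_div_iff₀ hm0]
  by_cases hb : BddAbove (range fun E : {E : Finset RSphere // IsSepSet f L m ε E} =>
      ∑ x ∈ E.1, Real.exp (birkhoff f φ m x))
  · have := le_ciSup hb ⟨{x}, isSepSet_singleton hx m ε⟩
    simp only [Finset.sum_singleton] at this
    have := Real.log_le_log (Real.exp_pos _) this
    rw [Real.log_exp] at this
    linarith [hφ x hx m]
  · rw [Real.iSup_of_not_bddAbove hb, Real.log_zero]
    nlinarith

lemma neg_le_pressureOn (hL : L.Nonempty) (hM : 0 ≤ M)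
    (hφ : ∀ x ∈ L, ∀ m : ℕ, -(m * M) ≤ birkhoff f φ m x) : -M ≤ pressureOn f L φ := by
  have hlim : ∀ ε : {ε : ℝ // 0 < ε}, -M ≤ limsup (fun m : ℕ =>
      Real.log (⨆ E : {E : Finset RSphere // IsSepSet f L m ε.1 E},
        ∑ x ∈ E.1, Real.exp (birkhoff f φ m x)) / m) atTop := by
    intro ε
    by_cases hb : IsBoundedUnder (· ≤ ·) atTop (fun m : ℕ =>
      Real.log (⨆ E : {E : Finset RSphere // IsSepSet f L m ε.1 E},
        ∑ x ∈ E.1, Real.exp (birkhoff f φ m x)) / m)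
    · exact le_limsup_of_frequently_le
        (Frequently.of_forall fun m => neg_le_log_sum_div hL hM hφ ε.1 m) hb
    · rw [limsup_eq_zero_of_not_isBoundedUnder hb]
      linarith
  unfold pressureOn
  by_cases hb : BddAbove (range fun ε : {ε : ℝ // 0 < ε} => limsup (fun m : ℕ =>
      Real.log (⨆ E : {E : Finset RSphere // IsSepSet f L m ε.1 E},
        ∑ x ∈ E.1, Real.exp (birkhoff f φ m x)) / m) atTop)
  · exact (hlim ⟨1, one_pos⟩).trans (le_ciSup hb ⟨1, one_pos⟩)
  · rw [Real.iSup_of_not_bddAbove hb]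
    linarith

lemma exists_frequently_of_lt_pressureOn (hL : L.Nonempty) (hM : 0 ≤ M)
    (hφ : ∀ x ∈ L, ∀ m : ℕ, -(m * M) ≤ birkhoff f φ m x) (hb : b < pressureOn f L φ) :
    ∃ ε > 0, ∃ᶠ m : ℕ in atTop, ∃ E, IsSepSet f L m ε E ∧
      Real.exp (m * b) < ∑ x ∈ E, Real.exp (birkhoff f φ m x) := by
  have : Nonempty {ε : ℝ // 0 < ε} := ⟨⟨1, one_pos⟩⟩
  obtain ⟨⟨ε, hε⟩, hlt⟩ := exists_lt_of_lt_ciSup hb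
  refine ⟨ε, hε, ?_⟩
  have hfr := frequently_lt_of_lt_limsup (IsBoundedUnder.isCoboundedUnder_le
    (isBoundedUnder_of ⟨-M, fun m => neg_le_log_sum_div hL hM hφ ε m⟩)) hlt
  refine (hfr.and_eventually (eventually_ge_atTop 1)).mono ?_
  rintro m ⟨hm, hm1⟩
  have hm0 : (0 : ℝ) < m := by exact_mod_cast hm1
  by_contra! H
  obtain ⟨x, hx⟩ := hL
  have hle : ∀ E : {E : Finset RSphere // IsSepSet f L m ε E},
      ∑ x ∈ E.1, Real.exp (birkhoff f φ m x) ≤ Real.exp (m * b) := fun E => H E.1 E.2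
  have hpos := le_ciSup (f := fun E : {E : Finset RSphere // IsSepSet f L m ε E} =>
      ∑ x ∈ E.1, Real.exp (birkhoff f φ m x)) ⟨_, by rintro _ ⟨E, rfl⟩; exact hle E⟩
    ⟨{x}, isSepSet_singleton hx m ε⟩
  have hlog := Real.log_le_log
    (lt_of_lt_of_le (by simp only [Finset.sum_singleton]; exact Real.exp_pos _) hpos)
    (Real.iSup_le hle (Real.exp_pos _).le)
  rw [Real.log_exp] at hlog
  rw [lt_div_iff₀ hm0] at hm
  linarith

lemma Hyperbolic.birkhoff_eq (hf : IsHolMap f) (hL : Hyperbolic f L) (d : ℝ) {x : RSphere}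
    (hx : x ∈ L) (m : ℕ) : birkhoff f (fun x => -d * Real.log (sphDeriv f x)) m x =
      -d * Real.log (sphDeriv f^[m] x) := by
  rw [birkhoff, hf.sphDeriv_iterate, Real.log_prod, Finset.mul_sum]
  exact fun k _ => (hL.sphDeriv_pos (hL.iterate_mem hx k)).ne'

lemma Hyperbolic.exists_abs_log_le (hX : ∀ x y, dist (f x) (f y) ≤ Real.exp X * dist x y)
    (hL : Hyperbolic f L) : ∃ M ≥ 0, ∀ x ∈ L, |Real.log (sphDeriv f x)| ≤ M := by
  obtain ⟨c, hc, l, hl, h⟩ := hL.2.2.2.2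
  refine ⟨|Real.log (c * l)| + |X|, by positivity, fun x hx => abs_le.2 ⟨?_, ?_⟩⟩
  · have h1 := h x hx 1 le_rfl
    rw [pow_one, Function.iterate_one] at h1
    have := Real.log_le_log (by positivity) h1
    linarith [neg_abs_le (Real.log (c * l)), abs_nonneg X]
  · have h1 := sphDeriv_iterate_le hX 1 x
    rw [Function.iterate_one] at h1
    have := Real.log_le_log (hL.sphDeriv_pos hx) h1
    rw [Real.log_exp] at this
    push_cast at this
    linarith [le_abs_self X, abs_nonneg (Real.log (c * l))]

lemma Hyperbolic.neg_le_birkhoff (hL : Hyperbolic f L)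
    (hM : ∀ x ∈ L, |Real.log (sphDeriv f x)| ≤ M) (d : ℝ) {x : RSphere} (hx : x ∈ L) (m : ℕ) :
    -(m * (|d| * M)) ≤ birkhoff f (fun x => -d * Real.log (sphDeriv f x)) m x := by
  have h0 : -(m * (|d| * M)) = (Finset.range m).card • -(|d| * M) := by simp
  rw [h0]
  refine Finset.card_nsmul_le_sum (Finset.range m) _ _ fun k _ => ?_
  refine neg_le_of_abs_le ?_
  rw [abs_mul, abs_neg]
  exact mul_le_mul_of_nonneg_left (hM _ (hL.iterate_mem hx k)) (abs_nonneg _)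

lemma Hyperbolic.eventually_log_mem (hX : ∀ x y, dist (f x) (f y) ≤ Real.exp X * dist x y)
    (hL : Hyperbolic f L) : ∀ᶠ m : ℕ in atTop, ∀ x ∈ L,
      Real.log (sphDeriv f^[m] x) / m ∈ Icc (-1) X := by
  obtain ⟨c, hc, l, hl, h⟩ := hL.2.2.2.2
  obtain ⟨m₀, hm₀⟩ := exists_nat_ge (-Real.log c)
  filter_upwards [eventually_ge_atTop m₀, eventually_ge_atTop 1] with m hm hm1 x hx
  have hm0 : (0 : ℝ) < m := by exact_mod_cast hm1
  have hmm : (m₀ : ℝ) ≤ m := by exact_mod_cast hm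
  have hp := hL.sphDeriv_iterate_pos hx hm1
  constructor
  · rw [le_div_iff₀ hm0]
    have := Real.log_le_log (by positivity) (h x hx m hm1)
    rw [Real.log_mul hc.ne' (by positivity), Real.log_pow] at this
    have h3 : 0 ≤ (m : ℝ) * Real.log l := mul_nonneg hm0.le (Real.log_pos hl).le
    linarith
  · rw [div_le_iff₀ hm0]
    have := Real.log_le_log hp (sphDeriv_iterate_le hX m x)
    rw [Real.log_exp] at this
    linarith

open scoped Classical in
lemma exists_mem_rates_of_lt_pressureOn (hf : IsHolMap f)
    (hX : ∀ x y, dist (f x) (f y) ≤ Real.exp X * dist x y) (hB : IsHub f B)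
    (hL : Hyperbolic f L)
    (hb : b < pressureOn f L fun x => -d * Real.log (sphDeriv f x)) :
    ∃ χ ∈ Icc (-1) X, (b + d * χ, χ) ∈ rates f B := by
  obtain ⟨M, hM0, hM⟩ := hL.exists_abs_log_le hX
  obtain ⟨ε₀, hε₀, hfr⟩ := exists_frequently_of_lt_pressureOn hL.1
    (mul_nonneg (abs_nonneg d) hM0) (fun x hx m => hL.neg_le_birkhoff hM d hx m) hb
  by_contra! H
  have hno : ∀ χ, ∃ ε > 0, χ ∈ Icc (-1) X → ∀ᶠ m : ℕ in atTop, ∀ E, IsSepSet f L m ε₀ E →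
      E.Nonempty → m * (b + d * χ - ε) ≤ Real.log E.card →
      ∃ x ∈ E, Real.log (sphDeriv f^[m] x) ∉ Icc (m * (χ - ε)) (m * (χ + ε)) := by
    intro χ
    by_cases hχ : χ ∈ Icc (-1) X
    · have := mt (mem_rates_of_frequently hB hL hε₀) (H χ hχ)
      push Not at this
      obtain ⟨ε, hε, h⟩ := this
      exact ⟨ε, hε, fun _ => h⟩
    · exact ⟨1, one_pos, fun h => (hχ h).elim⟩
  choose ε hε hno using hno
  have hd1 : 0 < 1 + |d| := by positivity
  set δ : ℝ → ℝ := fun χ => ε χ / (2 * (1 + |d|)) with hδ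
  have hδ0 : ∀ χ, 0 < δ χ := fun χ => div_pos (hε χ) (by positivity)
  have hδe : ∀ χ, δ χ + |d| * δ χ = ε χ / 2 := fun χ => by
    simp only [hδ]; field_simp
  obtain ⟨T, hT, hcov⟩ := isCompact_Icc.elim_nhds_subcover (fun χ => closedBall χ (δ χ))
    (fun χ (_ : χ ∈ Icc (-1) X) => closedBall_mem_nhds χ (hδ0 χ))
  have htend : Tendsto (fun m : ℕ => ∑ χ ∈ T, Real.exp (m * (-(ε χ / 2)))) atTop (𝓝 0) := by
    have h0 : (0 : ℝ) = ∑ χ ∈ T, 0 := by simp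
    rw [h0]
    refine tendsto_finsetSum _ fun χ _ => Real.tendsto_exp_atBot.comp ?_
    exact tendsto_natCast_atTop_atTop.atTop_mul_const_of_neg (by linarith [hε χ])
  have hev : ∀ᶠ m : ℕ in atTop, ∀ χ ∈ T, ∀ E, IsSepSet f L m ε₀ E →
      E.Nonempty → m * (b + d * χ - ε χ) ≤ Real.log E.card →
      ∃ x ∈ E, Real.log (sphDeriv f^[m] x) ∉ Icc (m * (χ - ε χ)) (m * (χ + ε χ)) :=
    (Finset.eventually_all T).2 fun χ hχ => hno χ (hT χ hχ)
  obtain ⟨m, ⟨E, hE, hsum⟩, hm, hm1, hlog, hmT⟩ := (hfr.and_eventually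
    (hev.and ((eventually_ge_atTop 1).and ((hL.eventually_log_mem hX).and
      (htend.eventually_lt_const one_pos))))).exists
  have hm0 : (0 : ℝ) < m := by exact_mod_cast hm1
  set g : RSphere → ℝ := fun x => Real.log (sphDeriv f^[m] x) / m with hg
  have hgm : ∀ x, Real.log (sphDeriv f^[m] x) = m * g x := fun x => by
    simp only [hg]; field_simp
  have hpiece : ∀ χ ∈ T, ∑ x ∈ E with g x ∈ closedBall χ (δ χ), Real.exp (m * (-d * g x)) ≤
      Real.exp (m * b) * Real.exp (m * (-(ε χ / 2))) := by
    intro χ hχ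
    set F := E.filter fun x => g x ∈ closedBall χ (δ χ) with hF
    rcases F.eq_empty_or_nonempty with h0 | h0
    · rw [h0, Finset.sum_empty]
      positivity
    have hFsep : IsSepSet f L m ε₀ F :=
      ⟨(Finset.coe_subset.2 (Finset.filter_subset _ _)).trans hE.1, fun x hx y hy =>
        hE.2 x (Finset.mem_of_mem_filter x hx) y (Finset.mem_of_mem_filter y hy)⟩
    have hgF : ∀ x ∈ F, |g x - χ| ≤ δ χ := fun x hx => by
      have := (Finset.mem_filter.1 hx).2
      rwa [mem_closedBall, Real.dist_eq] at this
    have hcard : Real.log F.card < m * (b + d * χ - ε χ) := by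
      by_contra! hc
      obtain ⟨x, hx, hx'⟩ := hm χ hχ F hFsep h0 hc
      refine hx' ?_
      rw [hgm]
      have := abs_le.1 (hgF x hx)
      have h2 := hδe χ
      have h3 : 0 ≤ |d| * δ χ := mul_nonneg (abs_nonneg d) (hδ0 χ).le
      have h4 := hε χ
      exact ⟨mul_le_mul_of_nonneg_left (by linarith) hm0.le,
        mul_le_mul_of_nonneg_left (by linarith) hm0.le⟩
    have hcard' : (F.card : ℝ) ≤ Real.exp (m * (b + d * χ - ε χ)) := by
      rw [← Real.log_le_iff_le_exp (by exact_mod_cast Finset.card_pos.2 h0)]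
      exact hcard.le
    calc ∑ x ∈ F, Real.exp (m * (-d * g x))
        ≤ F.card • Real.exp (m * (-d * χ + |d| * δ χ)) := by
          refine Finset.sum_le_card_nsmul _ _ _ fun x hx => ?_
          refine Real.exp_le_exp.2 (mul_le_mul_of_nonneg_left ?_ hm0.le)
          have h1 : -d * (g x - χ) ≤ |d| * δ χ := (le_abs_self _).trans (by
            rw [abs_mul, abs_neg]
            exact mul_le_mul_of_nonneg_left (hgF x hx) (abs_nonneg d))
          linarith
      _ ≤ Real.exp (m * (b + d * χ - ε χ)) * Real.exp (m * (-d * χ + |d| * δ χ)) := by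
          rw [nsmul_eq_mul]
          exact mul_le_mul_of_nonneg_right hcard' (Real.exp_pos _).le
      _ ≤ _ := by
          rw [← Real.exp_add, ← Real.exp_add, ← mul_add, ← mul_add]
          refine Real.exp_le_exp.2 (mul_le_mul_of_nonneg_left ?_ hm0.le)
          linarith [hδe χ, hδ0 χ]
  refine absurd hsum (not_lt.2 ?_)
  calc ∑ x ∈ E, Real.exp (birkhoff f (fun x => -d * Real.log (sphDeriv f x)) m x)
      = ∑ x ∈ E, Real.exp (m * (-d * g x)) := by
        refine Finset.sum_congr rfl fun x hx => ?_
        rw [hL.birkhoff_eq hf d (hE.1 hx), hgm]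
        ring_nf
    _ ≤ ∑ x ∈ E, ∑ χ ∈ T, if g x ∈ closedBall χ (δ χ) then Real.exp (m * (-d * g x)) else 0 := by
        refine Finset.sum_le_sum fun x hx => ?_
        obtain ⟨χ, hχ, hχx⟩ := mem_iUnion₂.1 (hcov (hlog x (hE.1 hx)))
        refine le_trans ?_ (Finset.single_le_sum (fun χ _ => ?_) hχ)
        · rw [if_pos hχx]
        · split_ifs <;> positivity
    _ = ∑ χ ∈ T, ∑ x ∈ E with g x ∈ closedBall χ (δ χ), Real.exp (m * (-d * g x)) := by
        rw [Finset.sum_comm]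
        simp only [Finset.sum_filter]
    _ ≤ ∑ χ ∈ T, Real.exp (m * b) * Real.exp (m * (-(ε χ / 2))) := Finset.sum_le_sum hpiece
    _ = Real.exp (m * b) * ∑ χ ∈ T, Real.exp (m * (-(ε χ / 2))) := by rw [Finset.mul_sum]
    _ ≤ Real.exp (m * b) := mul_le_of_le_one_right (Real.exp_pos _).le hmT.le

end Pressure

section Spectrum

variable {f : RSphere → RSphere} {B L₀ : Set RSphere} {X c d h v χ q α β : ℝ}

lemma ofReal_div_le_dimH_levelHat (hf : IsHolMap f) (hB : IsCompact B) (hB' : Preperfect B)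
    (hne : B.Nonempty) (hp : (h, χ) ∈ rates f B) (hh : 0 < h) (hχ : 0 < χ) (hα : α < χ)
    (hβ : χ < β) : ENNReal.ofReal (h / χ) ≤ dimH (levelHat f α β) := by
  have ht : Tendsto (fun ε : ℝ => ENNReal.ofReal ((h - ε) / (χ + ε))) (𝓝[>] 0)
      (𝓝 (ENNReal.ofReal ((h - 0) / (χ + 0)))) := by
    refine tendsto_nhdsWithin_of_tendsto_nhds (ENNReal.tendsto_ofReal ?_)
    exact (tendsto_const_nhds.sub tendsto_id).div (tendsto_const_nhds.add tendsto_id)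
      (by simpa using hχ.ne')
  rw [sub_zero, add_zero] at ht
  refine le_of_tendsto ht ?_
  have hm : 0 < min (min h χ) (min (χ - α) (β - χ)) :=
    lt_min (lt_min hh hχ) (lt_min (by linarith) (by linarith))
  filter_upwards [Ioo_mem_nhdsGT hm] with ε hε
  have hε0 : 0 < ε := hε.1
  obtain ⟨h12, h34⟩ := lt_min_iff.1 hε.2
  obtain ⟨h1, h2⟩ := lt_min_iff.1 h12
  obtain ⟨h3, h4⟩ := lt_min_iff.1 h34
  obtain ⟨n, hn, N, hN, s, t, hS, hlog, hs, ht⟩ := hp ε hε0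
  simp only at hlog hs ht
  have hn0 : (0 : ℝ) < n := by exact_mod_cast hn
  have hN2 : 2 ≤ N := by
    by_contra! hlt
    have : N = 1 := by omega
    rw [this, Nat.cast_one, Real.log_one] at hlog
    have : 0 < n * (h - ε) := mul_pos hn0 (by linarith)
    linarith
  have key := (hS.mono le_rfl le_rfl ht).ofReal_le_dimH_levelHat hf hB hB' hne hn hN2
    (lt_of_lt_of_le (mul_pos hn0 (by linarith)) hs) (mul_pos hn0 (by linarith))
    (α := α) (β := β) (le_trans (by rw [mul_comm]; gcongr; linarith) hs)
    (by rw [mul_comm]; gcongr; linarith)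
  refine le_trans (ENNReal.ofReal_le_ofReal ?_) key
  rw [div_le_div_iff₀ (by linarith) (mul_pos hn0 (by linarith))]
  have := mul_le_mul_of_nonneg_right hlog (by linarith : 0 ≤ χ + ε)
  linarith

lemma pressureOn_le (hf : IsHolMap f) (hX0 : 0 < X)
    (hX : ∀ x y, dist (f x) (f y) ≤ Real.exp X * dist x y) (hB : IsHub f B)
    (hBc : IsCompact B) (hBn : B.Nontrivial) {L : Set RSphere} (hL : Hyperbolic f L) (d : ℝ) :
    pressureOn f L (fun x => -d * Real.log (sphDeriv f x)) ≤
      X * (dimH (univ : Set RSphere)).toReal + |d| * X := by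
  refine le_of_forall_lt_imp_le_of_dense fun b hb => ?_
  obtain ⟨χ, -, hχ⟩ := exists_mem_rates_of_lt_pressureOn hf hX hB hL hb
  have h1 := fst_le_of_mem_rates hX0 hX hBc hBn.nonempty hχ
  have h2 := snd_le_of_mem_rates hX hBn hχ
  have h3 := snd_nonneg_of_mem_rates hBn hχ
  have h4 : |d * χ| ≤ |d| * X := by
    rw [abs_mul, abs_of_nonneg h3]
    exact mul_le_mul_of_nonneg_left h2 (abs_nonneg d)
  linarith [neg_abs_le (d * χ)]

lemma exists_neg_le_pressFamily (hf : IsHolMap f) (hX0 : 0 < X)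
    (hX : ∀ x y, dist (f x) (f y) ≤ Real.exp X * dist x y) (hB : IsHub f B)
    (hBc : IsCompact B) (hBn : B.Nontrivial) (hL₀ : Hyperbolic f L₀) :
    ∃ M ≥ 0, ∀ d, -(|d| * M) ≤ pressFamily f d := by
  obtain ⟨M, hM0, hM⟩ := hL₀.exists_abs_log_le hX
  refine ⟨M, hM0, fun d => (neg_le_pressureOn hL₀.1 (by positivity)
    fun x hx m => hL₀.neg_le_birkhoff hM d hx m).trans ?_⟩
  exact le_ciSup (f := fun L : {L : Set RSphere // Hyperbolic f L} =>
    pressureOn f L.1 fun x => -d * Real.log (sphDeriv f x))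
    ⟨_, by rintro _ ⟨L, rfl⟩; exact pressureOn_le hf hX0 hX hB hBc hBn L.2 d⟩ ⟨L₀, hL₀⟩

lemma exists_pressFamily_mem_rates (hf : IsHolMap f)
    (hX : ∀ x y, dist (f x) (f y) ≤ Real.exp X * dist x y) (hB : IsHub f B)
    (hL₀ : Hyperbolic f L₀) (d : ℝ) : ∃ χ, (pressFamily f d + d * χ, χ) ∈ rates f B := by
  have : Nonempty {L : Set RSphere // Hyperbolic f L} := ⟨⟨L₀, hL₀⟩⟩
  have hlt : ∀ k : ℕ, ∃ χ ∈ Icc (-1) X,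
      (pressFamily f d - 1 / ((k : ℝ) + 1) + d * χ, χ) ∈ rates f B := fun k => by
    have hk : pressFamily f d - 1 / ((k : ℝ) + 1) < pressFamily f d :=
      sub_lt_self _ (by positivity)
    obtain ⟨L, hL⟩ := exists_lt_of_lt_ciSup (f := fun L : {L : Set RSphere // Hyperbolic f L} =>
      pressureOn f L.1 fun x => -d * Real.log (sphDeriv f x)) hk
    exact exists_mem_rates_of_lt_pressureOn hf hX hB L.2 hL
  choose χ hχ hr using hlt
  obtain ⟨χ₀, -, φ, hφ, hlim⟩ := isCompact_Icc.tendsto_subseq hχ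
  refine ⟨χ₀, isClosed_rates.mem_of_tendsto (b := atTop) ?_
    (Eventually.of_forall fun k => hr (φ k))⟩
  refine Tendsto.prodMk_nhds (Tendsto.add ?_ (hlim.const_mul d)) hlim
  simpa using tendsto_const_nhds.sub
    ((tendsto_one_div_add_atTop_nhds_zero_nat (𝕜 := ℝ)).comp hφ.tendsto_atTop)

lemma le_alphaMinus (hf : IsHolMap f) (hX0 : 0 < X)
    (hX : ∀ x y, dist (f x) (f y) ≤ Real.exp X * dist x y) (hB : IsHub f B)
    (hBc : IsCompact B) (hBn : B.Nontrivial) (hL₀ : Hyperbolic f L₀)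
    (hc : ∀ p ∈ rates f B, c ≤ p.2) : c ≤ alphaMinus f := by
  obtain ⟨M, hM0, hM⟩ := exists_neg_le_pressFamily hf hX0 hX hB hBc hBn hL₀
  set H := X * (dimH (univ : Set RSphere)).toReal
  have hlow : ∀ᶠ d in atTop, -H / d + c ≤ -pressFamily f d / d := by
    filter_upwards [eventually_gt_atTop 0] with d hd
    obtain ⟨χ, hχ⟩ := exists_pressFamily_mem_rates hf hX hB hL₀ d
    have h1 := fst_le_of_mem_rates hX0 hX hBc hBn.nonempty hχ
    have h2 := mul_le_mul_of_nonneg_left (hc _ hχ) hd.le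
    rw [div_add' _ _ _ hd.ne', div_le_div_iff_of_pos_right hd]
    simp only at h2
    linarith
  have hup : ∀ᶠ d in atTop, -pressFamily f d / d ≤ M := by
    filter_upwards [eventually_gt_atTop 0] with d hd
    have := hM d
    rw [abs_of_pos hd] at this
    rw [div_le_iff₀ hd]
    linarith
  have hlim : Tendsto (fun d => -H / d + c) atTop (𝓝 (0 + c)) :=
    (tendsto_const_nhds.div_atTop tendsto_id).add_const c
  rw [zero_add] at hlim
  rw [← hlim.limsup_eq]
  exact limsup_le_limsup hlow hlim.isBoundedUnder_ge.isCoboundedUnder_le ⟨M, hup⟩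

lemma alphaPlus_le (hf : IsHolMap f) (hX0 : 0 < X)
    (hX : ∀ x y, dist (f x) (f y) ≤ Real.exp X * dist x y) (hB : IsHub f B)
    (hBc : IsCompact B) (hBn : B.Nontrivial) (hL₀ : Hyperbolic f L₀)
    (hc : ∀ p ∈ rates f B, p.2 ≤ c) : alphaPlus f ≤ c := by
  obtain ⟨M, hM0, hM⟩ := exists_neg_le_pressFamily hf hX0 hX hB hBc hBn hL₀
  set H := X * (dimH (univ : Set RSphere)).toReal
  have hup : ∀ᶠ d in atBot, -pressFamily f d / d ≤ -H / d + c := by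
    filter_upwards [eventually_lt_atBot 0] with d hd
    obtain ⟨χ, hχ⟩ := exists_pressFamily_mem_rates hf hX hB hL₀ d
    have h1 := fst_le_of_mem_rates hX0 hX hBc hBn.nonempty hχ
    have h2 := mul_le_mul_of_nonpos_left (hc _ hχ) hd.le
    rw [div_add' _ _ _ hd.ne, div_le_div_right_of_neg hd]
    simp only at h2
    linarith
  have hlow : ∀ᶠ d in atBot, -M ≤ -pressFamily f d / d := by
    filter_upwards [eventually_lt_atBot 0] with d hd
    have := hM d
    rw [abs_of_neg hd] at this
    rw [le_div_iff_of_neg hd]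
    linarith
  have hlim : Tendsto (fun d => -H / d + c) atBot (𝓝 (0 + c)) :=
    (tendsto_const_nhds.div_atBot tendsto_id).add_const c
  rw [zero_add] at hlim
  rw [← hlim.limsup_eq]
  exact limsup_le_limsup hup (IsBoundedUnder.isCoboundedUnder_le ⟨-M, hlow⟩)
    hlim.isBoundedUnder_le

lemma mem_rates_of_le_pressFamily (hf : IsHolMap f) (hX0 : 0 < X)
    (hX : ∀ x y, dist (f x) (f y) ≤ Real.exp X * dist x y) (hB : IsHub f B)
    (hBc : IsCompact B) (hBn : B.Nontrivial) (hL₀ : Hyperbolic f L₀)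
    (hv : ∀ d, v ≤ pressFamily f d + d * q) (hq : alphaMinus f ≤ q) (hq' : q ≤ alphaPlus f) :
    (v, q) ∈ rates f B := by
  by_contra hvq
  obtain ⟨Φ, u, hu, hvu⟩ := geometric_hahn_banach_closed_point convex_rates isClosed_rates hvq
  set a := Φ (1, 0) with ha
  set b := Φ (0, 1) with hb
  have hΦ : ∀ x y : ℝ, Φ (x, y) = a * x + b * y := fun x y => by
    have : ((x, y) : ℝ × ℝ) = x • (1, 0) + y • (0, 1) := by simp
    rw [this, map_add, map_smul, map_smul, smul_eq_mul, smul_eq_mul, mul_comm x, mul_comm y]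
  replace hu : ∀ x y, (x, y) ∈ rates f B → a * x + b * y < u := fun x y hxy => by
    rw [← hΦ]; exact hu _ hxy
  rw [hΦ] at hvu
  rcases lt_trichotomy a 0 with ha0 | ha0 | ha0
  · obtain ⟨χ, hχ⟩ := exists_pressFamily_mem_rates hf hX hB hL₀ 0
    have := hu _ _ (rates_mono hχ (min_le_left _ ((u - b * χ) / a)))
    have h2 := mul_le_mul_of_nonpos_left
      (min_le_right (pressFamily f 0 + 0 * χ) ((u - b * χ) / a)) ha0.le
    rw [mul_div_cancel₀ _ ha0.ne] at h2
    linarith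
  · rw [ha0] at hu hvu
    rcases lt_trichotomy b 0 with hb0 | hb0 | hb0
    · have : u / b ≤ alphaMinus f := by
        refine le_alphaMinus hf hX0 hX hB hBc hBn hL₀ fun p hp => ?_
        rw [div_le_iff_of_neg hb0]
        linarith [hu p.1 p.2 hp]
      rw [div_le_iff_of_neg hb0] at this
      have := mul_le_mul_of_nonpos_left hq hb0.le
      linarith
    · obtain ⟨χ, hχ⟩ := exists_pressFamily_mem_rates hf hX hB hL₀ 0
      have := hu _ _ hχ
      rw [hb0] at this hvu
      linarith
    · have : alphaPlus f ≤ u / b := by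
        refine alphaPlus_le hf hX0 hX hB hBc hBn hL₀ fun p hp => ?_
        rw [le_div_iff₀ hb0]
        linarith [hu p.1 p.2 hp]
      rw [le_div_iff₀ hb0] at this
      have := mul_le_mul_of_nonneg_left hq' hb0.le
      linarith
  · obtain ⟨χ, hχ⟩ := exists_pressFamily_mem_rates hf hX hB hL₀ (-b / a)
    have h1 := hu _ _ hχ
    have h2 := mul_le_mul_of_nonneg_left (hv (-b / a)) ha0.le
    have e : ∀ z w : ℝ, a * (z + -b / a * w) = a * z - b * w := fun z w => by
      field_simp; ring
    rw [e] at h1 h2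
    linarith

lemma exists_mem_rates_snd_eq (hf : IsHolMap f) (hX0 : 0 < X)
    (hX : ∀ x y, dist (f x) (f y) ≤ Real.exp X * dist x y) (hB : IsHub f B)
    (hBc : IsCompact B) (hBn : B.Nontrivial) (hL₀ : Hyperbolic f L₀)
    (hq : alphaMinus f < q) (hq' : q < alphaPlus f) : ∃ h, (h, q) ∈ rates f B := by
  obtain ⟨p₁, hp₁, h1⟩ : ∃ p ∈ rates f B, p.2 < q := by
    by_contra! H
    exact absurd hq (not_lt.2 (le_alphaMinus hf hX0 hX hB hBc hBn hL₀ H))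
  obtain ⟨p₂, hp₂, h2⟩ : ∃ p ∈ rates f B, q < p.2 := by
    by_contra! H
    exact absurd hq' (not_lt.2 (alphaPlus_le hf hX0 hX hB hBc hBn hL₀ H))
  have hconv : OrdConnected (Prod.snd '' rates f B) :=
    (convex_rates.linear_image (LinearMap.snd ℝ ℝ ℝ)).ordConnected
  obtain ⟨p, hp, rfl⟩ := hconv.out (mem_image_of_mem _ hp₁) (mem_image_of_mem _ hp₂)
    ⟨h1.le, h2.le⟩
  exact ⟨p.1, hp⟩

lemma specF_le_dimH_levelHat (hf : IsHolMap f) (hX0 : 0 < X)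
    (hX : ∀ x y, dist (f x) (f y) ≤ Real.exp X * dist x y) (hB : IsHub f B)
    (hBc : IsCompact B) (hB' : Preperfect B) (hBn : B.Nontrivial) (hL₀ : Hyperbolic f L₀)
    (hα : alphaMinus f ≤ α) (hαβ : α < β) (hβ : β ≤ alphaPlus f) (hq : q ∈ Icc α β)
    (hq0 : 0 < q) : specF (pressFamily f) q ≤ (dimH (levelHat f α β) : EReal) := by
  have hα0 : 0 ≤ α := (le_alphaMinus hf hX0 hX hB hBc hBn hL₀
    fun p hp => snd_nonneg_of_mem_rates hBn hp).trans hα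
  unfold specF
  set I : EReal := ⨅ d : ℝ, ((pressFamily f d + d * q : ℝ) : EReal) with hI
  have hId : ∀ d : ℝ, I ≤ ((pressFamily f d + d * q : ℝ) : EReal) := fun d => iInf_le _ d
  induction hII : I using EReal.rec with
  | bot => rw [EReal.coe_mul_bot_of_pos (inv_pos.2 hq0)]; exact bot_le
  | top =>
    have := hId 0
    rw [hII] at this
    exact absurd this (not_le.2 (EReal.coe_lt_top _))
  | coe v =>
    have hv : ∀ d, v ≤ pressFamily f d + d * q := fun d => by
      have := hId d
      rw [hII] at this
      exact_mod_cast this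
    rw [← EReal.coe_mul]
    rcases le_or_gt v 0 with hv0 | hv0
    · refine le_trans ?_ (EReal.coe_ennreal_nonneg _)
      exact_mod_cast mul_nonpos_of_nonneg_of_nonpos (inv_pos.2 hq0).le hv0
    have hvq := mem_rates_of_le_pressFamily hf hX0 hX hB hBc hBn hL₀ hv (hα.trans hq.1)
      (hq.2.trans hβ)
    obtain ⟨h, hh⟩ := exists_mem_rates_snd_eq hf hX0 hX hB hBc hBn hL₀ (q := (α + β) / 2)
      (by linarith) (by linarith)
    have hlim : ∀ x y : ℝ, Tendsto (fun τ : ℝ => (1 - τ) * x + τ * y) (𝓝[>] 0) (𝓝 x) :=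
      fun x y => by
        refine tendsto_nhdsWithin_of_tendsto_nhds (Continuous.tendsto' (by fun_prop) _ _ ?_)
        simp
    have key : ENNReal.ofReal (v / q) ≤ dimH (levelHat f α β) := by
      refine le_of_tendsto (ENNReal.tendsto_ofReal
        ((hlim v h).div (hlim q ((α + β) / 2)) hq0.ne')) ?_
      filter_upwards [Ioo_mem_nhdsGT one_pos, (hlim v h).eventually_const_lt hv0] with τ hτ hpos
      have hmem := convex_rates hvq hh (sub_nonneg.2 hτ.2.le) hτ.1.le (sub_add_cancel 1 τ)
      have hτ1 : 0 < 1 - τ := sub_pos.2 hτ.2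
      have h1 : α < (1 - τ) * q + τ * ((α + β) / 2) := by nlinarith [hq.1, hτ.1]
      have h2 : (1 - τ) * q + τ * ((α + β) / 2) < β := by nlinarith [hq.2, hτ.1]
      exact ofReal_div_le_dimH_levelHat hf hBc hB' hBn.nonempty hmem hpos (hα0.trans_lt h1) h1 h2
    have := EReal.coe_ennreal_le_coe_ennreal_iff.2 key
    rw [EReal.coe_ennreal_ofReal] at this
    refine le_trans (EReal.coe_le_coe_iff.2 (le_trans ?_ (le_max_left _ _))) this
    rw [div_eq_inv_mul]

end Spectrum

lemma exists_hyperbolic {f : RSphere → RSphere} (hlt : alphaMinus f < alphaPlus f) :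
    ∃ L, Hyperbolic f L := by
  by_contra! H
  have : IsEmpty {L : Set RSphere // Hyperbolic f L} := ⟨fun L => H L.1 L.2⟩
  have hP : ∀ d, pressFamily f d = 0 := fun d =>
    Real.iSup_of_isEmpty fun L : {L : Set RSphere // Hyperbolic f L} =>
      pressureOn f L.1 fun x => -d * Real.log (sphDeriv f x)
  simp [alphaMinus, alphaPlus, alphaMinusOf, alphaPlusOf, hP] at hlt

end LyapunovSpectrum

open LyapunovSpectrum in
/-- **Proposition (lower bound for `𝓛̂` including the boundary of the spectrum).**
Assume `f` is non-exceptional, or exceptional with `Σ ∩ J = ∅`, and `α⁻ < α⁺`.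
For `α⁻ ≤ α < β ≤ α⁺` we have `dim_H 𝓛̂(α,β) ≥ max_{α ≤ q ≤ β} F(q)`. -/
theorem lower_bound_levelHat (f : RSphere → RSphere) (p q : Polynomial ℂ)
    (hf : IsRationalMap f p q) (hdeg : 2 ≤ ratDeg p q)
    (hexc : ¬ IsExceptional f ∨ maxExceptional f ∩ juliaSet f = ∅)
    (hlt : alphaMinus f < alphaPlus f) :
    ∀ α β : ℝ, alphaMinus f ≤ α → α < β → β ≤ alphaPlus f →
      (⨆ s ∈ Set.Icc α β, Ffun f s) ≤ (dimH (levelHat f α β) : EReal) := by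
  intro α β hα hαβ hβ
  have hhol := hf.isHolMap hdeg
  obtain ⟨X, hX0, hX⟩ := hhol.exists_exp_lipschitz
  obtain ⟨L₀, hL₀⟩ := exists_hyperbolic hlt
  obtain ⟨a₀, ha₀⟩ := hL₀.1
  obtain ⟨ρ, hρ, hB⟩ := hhol.exists_hasSystem hexc hL₀ ha₀
  have hBc : IsCompact (closure (ball a₀ ρ)) := isClosed_closure.isCompact
  have hB' : Preperfect (closure (ball a₀ ρ)) := isOpen_ball.preperfect.perfect_closure.acc
  have hmem : a₀ ∈ closure (ball a₀ ρ) := subset_closure (mem_ball_self hρ)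
  have hBn : (closure (ball a₀ ρ)).Nontrivial := by
    obtain ⟨y, hy, hne⟩ := accPt_iff_nhds.1 (hB' a₀ hmem) univ univ_mem
    exact ⟨y, hy.2, a₀, hmem, hne⟩
  have hα0 : 0 ≤ α := (le_alphaMinus hhol hX0 hX hB hBc hBn hL₀
    fun p hp => snd_nonneg_of_mem_rates hBn hp).trans hα
  refine iSup₂_le fun s hs => ?_
  unfold Ffun specFext
  split_ifs with hs0
  · refine limsup_le_of_le (by isBoundedDefault) ?_
    filter_upwards [Ioo_mem_nhdsGT (hα0.trans_lt hαβ)] with q hq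
    exact specF_le_dimH_levelHat hhol hX0 hX hB hBc hB' hBn hL₀ hα hαβ hβ
      ⟨hs.1.trans (hs0.trans_le hq.1.le), hq.2.le⟩ hq.1
  · exact specF_le_dimH_levelHat hhol hX0 hX hB hBc hB' hBn hL₀ hα hαβ hβ hs
      (lt_of_le_of_ne (hα0.trans hs.1) (Ne.symm hs0))
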